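/- Let d > 2 be an integer, c₀ ∈ (0,1], and ε > 0. There exist constants c⋆, C⋆ > 0 depending only on (d, c₀) such that for all constants c ∈ (0, c⋆] and C ≥ C⋆ there exist η ∈ (0,1) and δ₂ ∈ (0,1/2] with the following property. For every admissible kernel J on ℤ^d with constant c₀ and every G ∈ 𝒢 with (J,G) satisfying Assumption G, for every β < β(δ₂): if for every β' ≤ β and every x ∈ ℤ^d one has F_{β'}(x) ≤ (C/σ_J^d)·(σ_J/(σ_J∨|x|))^{d−2−ε}·exp(−c·|x|/ξ(β')), then for every x ∈ ℤ^d with 2σ_J ≤ |x| ≤ η·ξ(β): F_β(x) ≤ (1/6)·(C/σ_J^d)·(σ_J/(σ_J∨|x|))^{d−2−ε}. -/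

import Mathlib

open scoped ENNReal

noncomputable section

namespace Blackbox

/-- Supremum norm of a lattice point. -/
def supNorm {d : ℕ} (x : Fin d → ℤ) : ℝ :=
  ((Finset.univ.sup fun i => (x i).natAbs : ℕ) : ℝ)

/-- Squared Euclidean norm of a lattice point. -/
def sqNorm {d : ℕ} (x : Fin d → ℤ) : ℝ :=
  ∑ i, ((x i : ℝ)) ^ 2

/-- Invariance under coordinate permutations and sign flips of individual coordinates. -/
def IsSymmFun {d : ℕ} {α : Type*} (f : (Fin d → ℤ) → α) : Prop :=
  ∀ (π : Equiv.Perm (Fin d)) (e : Fin d → Bool) (x : Fin d → ℤ),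
    f (fun i => (if e i then -1 else 1) * x (π i)) = f x

/-- First coordinate (dot product with `e₁`). -/
def e1 {d : ℕ} {α : Type*} [Zero α] (y : Fin d → α) : α :=
  if h : 0 < d then y ⟨0, h⟩ else 0

/-- An admissible kernel on `ℤ^d` with constant `c₀`. -/
structure AdmissibleKernel (d : ℕ) (c₀ : ℝ) where
  J : (Fin d → ℤ) → ℝ
  nonneg : ∀ x, 0 ≤ J x
  zero_at_zero : J 0 = 0
  summable : Summable J
  norm_one : ∑' x, J x = 1
  symm : IsSymmFun J
  R : ℝ
  R_ge_one : 1 ≤ R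
  range_le : ∀ x, 0 < J x → supNorm x ≤ R
  range_attained : ∃ x, 0 < J x ∧ supNorm x = R
  summable_sq : Summable fun x => sqNorm x * J x
  sigma_lower : c₀ * R ≤ Real.sqrt (∑' x, sqNorm x * J x)
  J_upper : ∀ x, J x ≤ c₀⁻¹ / R ^ d

/-- `σ_J`, the square root of the variance of the kernel. -/
def AdmissibleKernel.sigma {d : ℕ} {c₀ : ℝ} (K : AdmissibleKernel d c₀) : ℝ :=
  Real.sqrt (∑' x, sqNorm x * K.J x)

/-- A family `G ∈ 𝒢` together with an admissible kernel `J` such that `(J,G)` satisfies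
Assumption G (with error-term family `H`). -/
structure Model (d : ℕ) (c₀ : ℝ) where
  K : AdmissibleKernel d c₀
  G : ℝ → (Fin d → ℤ) → ℝ≥0∞
  βc : ℝ≥0∞
  βc_pos : 0 < βc
  init : ∀ x, G 0 x = if x = 0 then 1 else 0
  G' : ℝ → (Fin d → ℤ) → ℝ
  mono : ∀ (x : Fin d → ℤ) ⦃β₁ β₂ : ℝ⦄, 0 ≤ β₁ → β₁ ≤ β₂ →
    ENNReal.ofReal β₂ ≤ βc → G β₁ x ≤ G β₂ x
  deriv : ∀ (x : Fin d → ℤ) ⦃β : ℝ⦄, 0 ≤ β → ENNReal.ofReal β < βc →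
    HasDerivWithinAt (fun t => (G t x).toReal) (G' β x) (Set.Ici 0) β
  symm : ∀ β, IsSymmFun (G β)
  expDecay : ∀ ⦃β : ℝ⦄, 0 ≤ β → ENNReal.ofReal β < βc →
    ∃ C > (0:ℝ), ∃ c > (0:ℝ), ∀ x, G β x ≤ ENNReal.ofReal (C * Real.exp (-c * supNorm x))
  limit : βc ≠ ⊤ → ∀ x, G βc.toReal x = ⨆ β ∈ Set.Ico (0 : ℝ) βc.toReal, G β x
  I1 : ∀ ⦃β' β : ℝ⦄, 0 ≤ β' → β' ≤ β → ENNReal.ofReal β < βc →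
    ∀ x, G β x ≤ G β' x + ENNReal.ofReal (β - β') *
      ∑' p : (Fin d → ℤ) × (Fin d → ℤ),
        G β' p.1 * ENNReal.ofReal (K.J p.2) * G β (x - p.1 - p.2)
  H : ℝ → (Fin d → ℤ) → ℝ
  H_nonneg : ∀ β x, 0 ≤ H β x
  H_zero : ∀ x, H 0 x = 0
  H_symm : ∀ β x, H β (-x) = H β x
  H_cont : ∀ x, ContinuousOn (fun β => H β x)
    {β : ℝ | 0 ≤ β ∧ ENNReal.ofReal β < βc}
  H_expDecay : ∀ ⦃β : ℝ⦄, 0 ≤ β → ENNReal.ofReal β < βc →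
    ∃ C > (0:ℝ), ∃ c > (0:ℝ), ∀ x, H β x ≤ C * Real.exp (-c * supNorm x)
  I2 : ∀ ⦃β : ℝ⦄, 0 ≤ β → ENNReal.ofReal β < βc → ∀ x,
    (∑' p : (Fin d → ℤ) × (Fin d → ℤ),
      (G β p.1).toReal * (K.J p.2 - H β p.2) * (G β (x - p.1 - p.2)).toReal)
      ≤ G' β x

namespace Model

variable {d : ℕ} {c₀ : ℝ}

def sigma (M : Model d c₀) : ℝ := M.K.sigma

/-- `F_β = J * G_β`. -/
def F (M : Model d c₀) (β : ℝ) (x : Fin d → ℤ) : ℝ≥0∞ :=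
  ∑' y, ENNReal.ofReal (M.K.J y) * M.G β (x - y)

/-- The susceptibility `χ(β)`. -/
def chi (M : Model d c₀) (β : ℝ) : ℝ≥0∞ := ∑' x, M.G β x

/-- `ξ(β)²`. -/
def xiSq (M : Model d c₀) (β : ℝ) : ℝ≥0∞ :=
  (∑' x, ENNReal.ofReal (sqNorm x) * M.F β x) / M.chi β

/-- The correlation length of order two, `ξ(β)`. -/
def xi (M : Model d c₀) (β : ℝ) : ℝ := Real.sqrt (M.xiSq β).toReal

/-- The error term `E(β)`. -/
def E (M : Model d c₀) (β : ℝ) : ℝ≥0∞ :=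
  ⨆ t ∈ Set.Icc (0 : ℝ) β,
    (ENNReal.ofReal (∑' x, M.H t x) +
      ENNReal.ofReal (∑' x, sqNorm x * M.H t x) / M.xiSq t)

/-- `β(δ)`. -/
def betaOf (M : Model d c₀) (δ : ℝ) : ℝ :=
  sSup {β : ℝ | 0 ≤ β ∧ ENNReal.ofReal β < M.βc ∧ M.E β < ENNReal.ofReal δ}

/-- One-step distribution of the effective random walk at parameter `β`. -/
def effStep (M : Model d c₀) (β : ℝ) (y : Fin d → ℤ) : ℝ≥0∞ :=
  M.F β y / M.chi β

/-- `k`-step distribution of the effective random walk at parameter `β`. -/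
def effIter (M : Model d c₀) (β : ℝ) : ℕ → (Fin d → ℤ) → ℝ≥0∞
  | 0 => fun x => if x = 0 then 1 else 0
  | n + 1 => fun x => ∑' y, M.effStep β y * M.effIter β n (x - y)

/-- Moment generating function `M_β(s)` of the first coordinate of one step of the
effective random walk. -/
def Mgf (M : Model d c₀) (β s : ℝ) : ℝ≥0∞ :=
  ∑' y : Fin d → ℤ, M.effStep β y * ENNReal.ofReal (Real.exp (s / M.xi β * ((e1 y : ℤ) : ℝ)))

end Model

end Blackbox
open Blackbox

/-!
Dividing `F_t` by its mass `χ(t)` gives the step distribution of a random walk of standard deviation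
`ξ(t)`. While `E` is small, (I.1) and (I.2) pin `χ' / χ²` near `1`; they make `χ` grow at most about
as fast as `ξ²` and keep all moments of the walk up to order `4d` comparable with powers of `ξ(t)`.
A characteristic function estimate then shows that `k` steps of the walk spread out over the scale
`√k ξ(t)`, with polynomial decay beyond it.

For `t ≤ β`, iterating (I.1) bounds `F_β` by a `k`-step sum of the walk at `t` plus `F_β` averaged
over the scale `√k ξ(t)`. If `√k ξ(t) = ξ(z)`, that average is controlled by the same bound at time
`z`; for `a < d - 2` and `k` large the passage from `z` back to `t` is a contraction, so the box
averages of `F_β` at scale `ξ(t)` decay with exponent `a`. Repeating the argument once from `t = 0`,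
where `χ(0) = 1` and `ξ(0) = σ_J`, leaves as leading term the Green function of the walk with step
`J`, whose constant depends only on `d` and `c₀`. Finally (I.1) at `t = 0` writes `F_β` as an
average with respect to the kernel, which turns the bound on box averages into a pointwise one.
-/

namespace Blackbox

section Convolution

variable {E : Type*} [AddCommGroup E]

/-- Convolution of `[0, ∞]`-valued functions on a discrete abelian group. Extended values keep every
sum unconditionally defined. -/
def conv (f g : E → ℝ≥0∞) (x : E) : ℝ≥0∞ := ∑' y, f y * g (x - y)

/-- The Kronecker delta at the origin, the unit for `conv`. -/
def delta : E → ℝ≥0∞ := Set.indicator {0} 1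

/-- The `n`-fold convolution power. -/
def convPow (f : E → ℝ≥0∞) : ℕ → E → ℝ≥0∞
  | 0 => delta
  | n + 1 => conv f (convPow f n)

/-- The total mass of a `[0, ∞]`-valued function. -/
def mass {α : Type*} (f : α → ℝ≥0∞) : ℝ≥0∞ := ∑' x, f x

theorem mass_mono {α : Type*} {f g : α → ℝ≥0∞} (h : f ≤ g) : mass f ≤ mass g :=
  ENNReal.tsum_le_tsum h

theorem mass_add {α : Type*} (f g : α → ℝ≥0∞) : mass (f + g) = mass f + mass g :=
  ENNReal.tsum_add

theorem mass_smul {α : Type*} (c : ℝ≥0∞) (f : α → ℝ≥0∞) : mass (c • f) = c * mass f :=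
  ENNReal.tsum_mul_left

theorem conv_comm (f g : E → ℝ≥0∞) : conv f g = conv g f := by
  funext x
  unfold conv
  rw [← (Equiv.subLeft x).tsum_eq]
  exact tsum_congr fun y => by simp [mul_comm]

theorem conv_assoc (f g h : E → ℝ≥0∞) : conv (conv f g) h = conv f (conv g h) := by
  funext x
  unfold conv
  simp_rw [← ENNReal.tsum_mul_right, ← ENNReal.tsum_mul_left]
  rw [ENNReal.tsum_comm]
  refine tsum_congr fun z => ?_
  rw [← (Equiv.addLeft z).tsum_eq]
  exact tsum_congr fun y => by simp [mul_assoc, sub_sub]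

theorem conv_mono {f g f' g' : E → ℝ≥0∞} (hf : f ≤ f') (hg : g ≤ g') : conv f g ≤ conv f' g' :=
  fun x => ENNReal.tsum_le_tsum fun y => mul_le_mul' (hf y) (hg (x - y))

@[simp]
theorem conv_delta (f : E → ℝ≥0∞) : conv f delta = f := by
  funext x
  unfold conv delta
  rw [tsum_eq_single x fun y hy => by simp [sub_eq_zero, hy.symm]]
  simp

@[simp]
theorem delta_conv (f : E → ℝ≥0∞) : conv delta f = f := by rw [conv_comm, conv_delta]

theorem conv_add (f g h : E → ℝ≥0∞) : conv f (g + h) = conv f g + conv f h := by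
  funext x
  simp [conv, mul_add, ENNReal.tsum_add]

theorem add_conv (f g h : E → ℝ≥0∞) : conv (f + g) h = conv f h + conv g h := by
  simp only [conv_comm _ h, conv_add]

theorem conv_smul (c : ℝ≥0∞) (f g : E → ℝ≥0∞) : conv f (c • g) = c • conv f g := by
  funext x
  simp only [conv, Pi.smul_apply, smul_eq_mul, ← ENNReal.tsum_mul_left, mul_left_comm]

theorem smul_conv (c : ℝ≥0∞) (f g : E → ℝ≥0∞) : conv (c • f) g = c • conv f g := by
  rw [conv_comm, conv_smul, conv_comm]

theorem sum_conv {ι : Type*} (s : Finset ι) (f : ι → E → ℝ≥0∞) (g : E → ℝ≥0∞) :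
    conv (∑ i ∈ s, f i) g = ∑ i ∈ s, conv (f i) g := by
  funext x
  simp only [conv, Finset.sum_apply, Finset.sum_mul]
  rw [Summable.tsum_finsetSum fun _ _ => ENNReal.summable]

theorem tsum_mul_conv (w f g : E → ℝ≥0∞) :
    ∑' x, w x * conv f g x = ∑' y, ∑' z, w (y + z) * (f y * g z) := by
  unfold conv
  simp_rw [← ENNReal.tsum_mul_left]
  rw [ENNReal.tsum_comm]
  refine tsum_congr fun y => ?_
  rw [← (Equiv.addLeft y).tsum_eq]
  exact tsum_congr fun z => by simp

theorem mass_conv (f g : E → ℝ≥0∞) : mass (conv f g) = mass f * mass g := by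
  simpa [mass, ENNReal.tsum_mul_left, ENNReal.tsum_mul_right] using tsum_mul_conv 1 f g

@[simp]
theorem mass_delta : mass (delta : E → ℝ≥0∞) = 1 := by
  unfold mass delta
  rw [tsum_eq_single 0 fun x hx => by simp [hx]]
  simp

theorem mass_convPow (f : E → ℝ≥0∞) (n : ℕ) : mass (convPow f n) = mass f ^ n := by
  induction n with
  | zero => simp [convPow]
  | succ n ih => rw [convPow, mass_conv, ih, pow_succ']

theorem convPow_one (f : E → ℝ≥0∞) : convPow f 1 = f := by simp [convPow]

theorem convPow_add (f : E → ℝ≥0∞) (m n : ℕ) :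
    convPow f (m + n) = conv (convPow f m) (convPow f n) := by
  induction m with
  | zero => simp [convPow]
  | succ m ih => rw [Nat.add_right_comm, convPow, ih, convPow, conv_assoc]

theorem conv_le_mass_mul {g : E → ℝ≥0∞} {B : ℝ≥0∞} (f : E → ℝ≥0∞) (hg : ∀ x, g x ≤ B) (x : E) :
    conv f g x ≤ mass f * B := by
  unfold conv mass
  rw [← ENNReal.tsum_mul_right]
  exact ENNReal.tsum_le_tsum fun y => mul_le_mul_right (hg _) _

theorem even_delta : (delta : E → ℝ≥0∞).Even := fun x => by
  by_cases hx : x = 0 <;> simp [delta, hx]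

theorem even_conv {f g : E → ℝ≥0∞} (hf : f.Even) (hg : g.Even) : (conv f g).Even := fun x => by
  unfold conv
  rw [← (Equiv.neg E).tsum_eq]
  refine tsum_congr fun y => ?_
  rw [Equiv.neg_apply, hf, ← hg (x - y)]
  congr 2
  abel

theorem even_convPow {f : E → ℝ≥0∞} (hf : f.Even) (n : ℕ) : (convPow f n).Even := by
  induction n with
  | zero => exact even_delta
  | succ n ih => exact even_conv hf ih

end Convolution

section IntLattice

/-- The integer lattice `ℤ^d`. -/
abbrev IntLattice (d : ℕ) := Fin d → ℤ

variable {d : ℕ}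

theorem supNorm_nonneg (x : IntLattice d) : 0 ≤ supNorm x := Nat.cast_nonneg _

theorem supNorm_le_iff (x : IntLattice d) {r : ℝ} (hr : 0 ≤ r) :
    supNorm x ≤ r ↔ ∀ i, |(x i : ℝ)| ≤ r := by
  rw [supNorm, ← Nat.le_floor_iff hr, Finset.sup_le_iff]
  simp [Nat.le_floor_iff hr, Nat.cast_natAbs]

theorem abs_le_supNorm (x : IntLattice d) (i : Fin d) : |(x i : ℝ)| ≤ supNorm x :=
  (supNorm_le_iff x (supNorm_nonneg x)).1 le_rfl i

theorem supNorm_add_le (x y : IntLattice d) : supNorm (x + y) ≤ supNorm x + supNorm y := by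
  rw [supNorm_le_iff _ (add_nonneg (supNorm_nonneg _) (supNorm_nonneg _))]
  intro i
  simpa using (abs_add_le _ _).trans (add_le_add (abs_le_supNorm x i) (abs_le_supNorm y i))

theorem supNorm_neg (x : IntLattice d) : supNorm (-x) = supNorm x := by simp [supNorm]

theorem exists_abs_eq_supNorm (hd : 0 < d) (x : IntLattice d) :
    ∃ i, |(x i : ℝ)| = supNorm x := by
  have : NeZero d := ⟨hd.ne'⟩
  obtain ⟨i, -, hi⟩ := Finset.exists_mem_eq_sup Finset.univ Finset.univ_nonempty
    (fun i => (x i).natAbs)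
  exact ⟨i, by rw [supNorm, hi, Nat.cast_natAbs, Int.cast_abs]⟩

theorem sqNorm_nonneg (x : IntLattice d) : 0 ≤ sqNorm x := Finset.sum_nonneg fun _ _ => sq_nonneg _

theorem IsSymmFun.even {α : Type*} {f : IntLattice d → α} (hf : IsSymmFun f) : f.Even := fun x => by
  simpa [Function.comp_def, ← Pi.neg_def] using hf (Equiv.refl _) (fun _ => true) x

/-- The signed coordinate permutation of `ℤ^d` used in `IsSymmFun`. -/
def signedPerm (π : Equiv.Perm (Fin d)) (e : Fin d → Bool) : IntLattice d ≃ IntLattice d where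
  toFun x := fun i => (if e i then -1 else 1) * x (π i)
  invFun x := fun i => (if e (π.symm i) then -1 else 1) * x (π.symm i)
  left_inv x := by funext i; by_cases h : e (π.symm i) <;> simp [h]
  right_inv x := by funext i; by_cases h : e i <;> simp [h]

theorem isSymmFun_conv {f g : IntLattice d → ℝ≥0∞} (hf : IsSymmFun f) (hg : IsSymmFun g) :
    IsSymmFun (conv f g) := by
  intro π e x
  unfold conv
  rw [← (signedPerm π e).tsum_eq]
  refine tsum_congr fun y => ?_
  congr 1
  · exact hf π e y
  · rw [← hg π e (x - y)]
    congr 1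
    funext i
    simp [signedPerm, mul_sub]

end IntLattice

section WeightedSums

variable {d : ℕ}

/-- The indicator of the box `{|x| ≤ r}`. -/
def boxIndicator (r : ℝ) : IntLattice d → ℝ≥0∞ := Set.indicator {x | supNorm x ≤ r} 1

/-- The Japanese bracket `⟨x⟩_s = 1 + |x| / s` at length scale `s`. -/
def bracket (s : ℝ) (x : IntLattice d) : ℝ := 1 + supNorm x / s

theorem one_le_bracket {s : ℝ} (hs : 0 ≤ s) (x : IntLattice d) : 1 ≤ bracket s x :=
  le_add_of_nonneg_right (div_nonneg (supNorm_nonneg x) hs)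

theorem bracket_pos {s : ℝ} (hs : 0 ≤ s) (x : IntLattice d) : 0 < bracket s x :=
  zero_lt_one.trans_le (one_le_bracket hs x)

theorem bracket_anti {s t : ℝ} (hs : 0 < s) (hst : s ≤ t) (x : IntLattice d) :
    bracket t x ≤ bracket s x :=
  add_le_add_right (div_le_div_of_nonneg_left (supNorm_nonneg x) hs hst) 1

theorem bracket_sub_le_two_mul {s : ℝ} (hs : 0 < s) (x : IntLattice d) {y : IntLattice d}
    (hy : supNorm y ≤ s) : bracket s (x - y) ≤ 2 * bracket s x := by
  have htri : supNorm (x - y) ≤ supNorm x + s := by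
    simpa [sub_eq_add_neg, supNorm_neg] using (supNorm_add_le x (-y)).trans
      (add_le_add_right ((supNorm_neg y).le.trans hy) _)
  have hdiv : supNorm (x - y) / s ≤ supNorm x / s + 1 := by
    rw [div_add_one hs.ne']
    gcongr
  have := one_le_bracket hs.le x
  unfold bracket at *
  linarith

/-- Peetre's inequality. -/
theorem bracket_le_bracket_mul_bracket_sub {s : ℝ} (hs : 0 ≤ s) (x w : IntLattice d) :
    bracket s x ≤ bracket s w * bracket s (x - w) := by
  have htri : supNorm x / s ≤ supNorm w / s + supNorm (x - w) / s := by
    rw [← add_div]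
    gcongr
    simpa using supNorm_add_le w (x - w)
  have hprod : 0 ≤ supNorm w / s * (supNorm (x - w) / s) :=
    mul_nonneg (div_nonneg (supNorm_nonneg w) hs) (div_nonneg (supNorm_nonneg _) hs)
  unfold bracket
  linarith

theorem inv_bracket_pow_le_two_pow_mul {s : ℝ} (hs : 0 < s) (n : ℕ) (x : IntLattice d)
    {y : IntLattice d} (hy : supNorm y ≤ s) :
    (bracket s x ^ n)⁻¹ ≤ 2 ^ n * (bracket s (x - y) ^ n)⁻¹ := by
  have hx := bracket_pos hs.le x
  have hxy := bracket_pos hs.le (x - y)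
  rw [← div_eq_mul_inv, ← div_pow, ← inv_pow]
  gcongr
  rw [inv_eq_one_div, div_le_div_iff₀ hx hxy, one_mul]
  exact bracket_sub_le_two_mul hs x hy

theorem inv_bracket_pow_mul_rpow_neg_le {s a : ℝ} (hs : 0 ≤ s) (ha : 0 ≤ a) (had : a ≤ d)
    (x w : IntLattice d) :
    (bracket s (x - w) ^ (4 * d))⁻¹ * bracket s w ^ (-a) ≤
      bracket s x ^ (-a) * (bracket s (x - w) ^ (2 * d))⁻¹ := by
  have hx := bracket_pos hs x
  have hw := bracket_pos hs w
  have hxw := one_le_bracket hs (x - w)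
  have hxw' := bracket_pos hs (x - w)
  have hpeetre : bracket s x ^ a ≤ bracket s w ^ a * bracket s (x - w) ^ d := calc
    bracket s x ^ a ≤ (bracket s w * bracket s (x - w)) ^ a :=
      Real.rpow_le_rpow hx.le (bracket_le_bracket_mul_bracket_sub hs x w) ha
    _ = bracket s w ^ a * bracket s (x - w) ^ a := Real.mul_rpow hw.le hxw'.le
    _ ≤ bracket s w ^ a * bracket s (x - w) ^ d := by
      rw [← Real.rpow_natCast _ d]
      gcongr
  have hpow :
      bracket s (x - w) ^ d * bracket s (x - w) ^ (2 * d) ≤ bracket s (x - w) ^ (4 * d) := by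
    rw [← pow_add]
    exact pow_le_pow_right₀ hxw (by omega)
  rw [Real.rpow_neg hx.le, Real.rpow_neg hw.le, ← mul_inv, ← mul_inv]
  apply inv_anti₀ (by positivity)
  calc bracket s x ^ a * bracket s (x - w) ^ (2 * d)
      ≤ bracket s w ^ a * bracket s (x - w) ^ d * bracket s (x - w) ^ (2 * d) := by gcongr
    _ = bracket s w ^ a * (bracket s (x - w) ^ d * bracket s (x - w) ^ (2 * d)) := mul_assoc _ _ _
    _ ≤ bracket s w ^ a * bracket s (x - w) ^ (4 * d) := by gcongr
    _ = _ := mul_comm _ _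

theorem tsum_prod_pi {α : Type*} {d : ℕ} (g : Fin d → α → ℝ≥0∞) :
    ∑' w : Fin d → α, ∏ i, g i (w i) = ∏ i, ∑' n, g i n := by
  induction d with
  | zero => simp
  | succ d ih =>
    rw [← (Fin.consEquiv (fun _ : Fin (d + 1) => α)).tsum_eq, ENNReal.tsum_prod']
    simp only [Fin.consEquiv_apply, Fin.prod_univ_succ, Fin.cons_zero, Fin.cons_succ,
      ENNReal.tsum_mul_left, ih, ENNReal.tsum_mul_right]

theorem sum_range_inv_sq_le {s : ℝ} (hs : 0 < s) (N : ℕ) :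
    ∑ n ∈ Finset.range N, ((1 + (n : ℝ) / s) ^ 2)⁻¹ ≤ 1 + s := by
  have htelescope : ∀ N : ℕ,
      ∑ n ∈ Finset.range (N + 1), ((1 + (n : ℝ) / s) ^ 2)⁻¹ ≤ 1 + s - s ^ 2 / (s + N) := by
    intro N
    induction N with
    | zero =>
      have : s ^ 2 / s = s := by field_simp
      simp [this]
    | succ N ih =>
      have hterm : ((1 + ((N : ℝ) + 1) / s) ^ 2)⁻¹ ≤ s ^ 2 / (s + N) - s ^ 2 / (s + (N + 1)) := calc
        _ = s ^ 2 / ((s + (N + 1)) * (s + (N + 1))) := by field_simp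
        _ ≤ s ^ 2 / ((s + N) * (s + (N + 1))) := by gcongr; linarith
        _ = _ := by field_simp; ring
      rw [Finset.sum_range_succ]
      push_cast
      linarith
  refine (Finset.sum_le_sum_of_subset_of_nonneg (Finset.range_mono N.le_succ)
    fun _ _ _ => by positivity).trans ((htelescope N).trans ?_)
  linarith [show 0 ≤ s ^ 2 / (s + N) by positivity]

theorem tsum_int_inv_sq_le {s : ℝ} (hs : 1 ≤ s) :
    ∑' n : ℤ, ENNReal.ofReal (((1 + |(n : ℝ)| / s) ^ 2)⁻¹) ≤ ENNReal.ofReal (4 * s) := by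
  have hs0 : 0 < s := by linarith
  have hnat : ∑' n : ℕ, ENNReal.ofReal (((1 + (n : ℝ) / s) ^ 2)⁻¹) ≤ ENNReal.ofReal (2 * s) := by
    refine ENNReal.tsum_le_of_sum_range_le fun N => ?_
    rw [← ENNReal.ofReal_sum_of_nonneg fun i _ => by positivity]
    exact ENNReal.ofReal_le_ofReal ((sum_range_inv_sq_le hs0 N).trans (by linarith))
  have hsplit := (HasSum.of_nat_of_neg_add_one
    (f := fun n : ℤ => ENNReal.ofReal (((1 + |(n : ℝ)| / s) ^ 2)⁻¹))
    ENNReal.summable.hasSum ENNReal.summable.hasSum).tsum_eq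
  rw [hsplit, show 4 * s = 2 * s + 2 * s by ring,
    ENNReal.ofReal_add (by positivity) (by positivity)]
  refine add_le_add (by simpa using hnat) (le_trans ?_ hnat)
  refine ENNReal.tsum_le_tsum fun n => ENNReal.ofReal_le_ofReal ?_
  have habs : |(-((n : ℝ) + 1))| = n + 1 := by rw [abs_neg, abs_of_nonneg (by positivity)]
  push_cast
  rw [habs]
  gcongr
  linarith

theorem tsum_inv_bracket_pow_le {s : ℝ} (hs : 1 ≤ s) :
    ∑' w : IntLattice d, ENNReal.ofReal ((bracket s w ^ (2 * d))⁻¹) ≤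
      ENNReal.ofReal ((4 * s) ^ d) := by
  have : 0 < s := by linarith
  calc ∑' w : IntLattice d, ENNReal.ofReal ((bracket s w ^ (2 * d))⁻¹)
      ≤ ∑' w : IntLattice d, ∏ i, ENNReal.ofReal (((1 + |(w i : ℝ)| / s) ^ 2)⁻¹) := by
        refine ENNReal.tsum_le_tsum fun w => ?_
        rw [← ENNReal.ofReal_prod_of_nonneg fun i _ => by positivity]
        refine ENNReal.ofReal_le_ofReal ?_
        rw [pow_mul, ← inv_pow, ← Fin.prod_const]
        refine Finset.prod_le_prod (fun i _ => by positivity) fun i _ => ?_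
        unfold bracket
        gcongr
        exact abs_le_supNorm w i
    _ = (∑' n : ℤ, ENNReal.ofReal (((1 + |(n : ℝ)| / s) ^ 2)⁻¹)) ^ d := by
        rw [tsum_prod_pi fun _ (n : ℤ) => ENNReal.ofReal (((1 + |(n : ℝ)| / s) ^ 2)⁻¹),
          Fin.prod_const]
    _ ≤ ENNReal.ofReal (4 * s) ^ d := by gcongr; exact tsum_int_inv_sq_le hs
    _ = ENNReal.ofReal ((4 * s) ^ d) := (ENNReal.ofReal_pow (by positivity) d).symm

theorem ofReal_le_tsum_indicator_abs_le {s : ℝ} (hs : 0 ≤ s) :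
    ENNReal.ofReal s ≤ ∑' n : ℤ, if |(n : ℝ)| ≤ s then (1 : ℝ≥0∞) else 0 := by
  calc ENNReal.ofReal s ≤ ((⌊s⌋₊ + 1 : ℕ) : ℝ≥0∞) := by
        rw [← ENNReal.ofReal_natCast]
        exact ENNReal.ofReal_le_ofReal (by exact_mod_cast (Nat.lt_floor_add_one s).le)
    _ = ∑ n ∈ Finset.range (⌊s⌋₊ + 1), if (n : ℝ) ≤ s then (1 : ℝ≥0∞) else 0 := by
        rw [Finset.sum_congr rfl fun n hn => if_pos ((Nat.le_floor_iff hs).1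
          (Nat.lt_succ_iff.1 (Finset.mem_range.1 hn)))]
        simp
    _ ≤ ∑' n : ℕ, if (n : ℝ) ≤ s then (1 : ℝ≥0∞) else 0 := ENNReal.sum_le_tsum _
    _ ≤ _ := by
        simpa using ENNReal.tsum_comp_le_tsum_of_injective (f := fun n : ℕ => (n : ℤ))
          Nat.cast_injective (fun n : ℤ => if |(n : ℝ)| ≤ s then (1 : ℝ≥0∞) else 0)

theorem ofReal_pow_le_mass_boxIndicator {s : ℝ} (hs : 0 ≤ s) :
    ENNReal.ofReal (s ^ d) ≤ mass (boxIndicator s : IntLattice d → ℝ≥0∞) := by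
  have hprod : mass (boxIndicator s : IntLattice d → ℝ≥0∞) =
      (∑' n : ℤ, if |(n : ℝ)| ≤ s then (1 : ℝ≥0∞) else 0) ^ d := by
    rw [← Fin.prod_const, ← tsum_prod_pi]
    refine tsum_congr fun w => ?_
    simp [boxIndicator, Set.indicator_apply, Finset.prod_ite_zero, supNorm_le_iff _ hs]
  rw [hprod, ENNReal.ofReal_pow hs]
  gcongr
  exact ofReal_le_tsum_indicator_abs_le hs

theorem mass_boxIndicator_mul_tsum_le (U g : IntLattice d → ℝ≥0∞) (A : ℝ≥0∞) {s : ℝ}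
    (hg : ∀ y z, supNorm z ≤ s → g y ≤ A * g (y + z)) :
    mass (boxIndicator s : IntLattice d → ℝ≥0∞) * ∑' y, U y * g y ≤
      A * ∑' w, g w * conv U (boxIndicator s) w := by
  rw [tsum_mul_conv, mul_comm, ← ENNReal.tsum_mul_right, ← ENNReal.tsum_mul_left]
  refine ENNReal.tsum_le_tsum fun y => ?_
  rw [mass, ← ENNReal.tsum_mul_left, ← ENNReal.tsum_mul_left]
  refine ENNReal.tsum_le_tsum fun z => ?_
  by_cases hz : supNorm z ≤ s
  · calc U y * g y * boxIndicator s z ≤ U y * (A * g (y + z)) * boxIndicator s z := by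
          gcongr
          exact hg y z hz
      _ = _ := by ring
  · simp [boxIndicator, hz]

theorem tsum_inv_bracket_pow_mul_conv_le {U : IntLattice d → ℝ≥0∞} {D a s : ℝ} (hD : 0 ≤ D)
    (ha : 0 ≤ a) (had : a ≤ d) (hs : 1 ≤ s)
    (hU : ∀ w, conv U (boxIndicator s) w ≤ ENNReal.ofReal (D * bracket s w ^ (-a)))
    (x : IntLattice d) :
    ∑' w, ENNReal.ofReal ((bracket s (x - w) ^ (4 * d))⁻¹) * conv U (boxIndicator s) w ≤
      ENNReal.ofReal (D * bracket s x ^ (-a)) * ENNReal.ofReal ((4 * s) ^ d) := by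
  have hs0 : 0 ≤ s := by linarith
  have hpointwise : ∀ w,
      ENNReal.ofReal ((bracket s (x - w) ^ (4 * d))⁻¹) * conv U (boxIndicator s) w ≤
        ENNReal.ofReal (D * bracket s x ^ (-a)) *
          ENNReal.ofReal ((bracket s (x - w) ^ (2 * d))⁻¹) := by
    intro w
    have := bracket_pos hs0 x
    have := bracket_pos hs0 (x - w)
    refine (mul_le_mul_right (hU w) _).trans ?_
    rw [← ENNReal.ofReal_mul (by positivity), ← ENNReal.ofReal_mul (by positivity)]
    refine ENNReal.ofReal_le_ofReal ?_
    rw [mul_left_comm, mul_assoc]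
    exact mul_le_mul_of_nonneg_left (inv_bracket_pow_mul_rpow_neg_le hs0 ha had x w) hD
  refine (ENNReal.tsum_le_tsum hpointwise).trans ?_
  rw [ENNReal.tsum_mul_left]
  gcongr
  exact ((Equiv.subLeft x).tsum_eq _).trans_le (tsum_inv_bracket_pow_le hs)

/-- The constant of `tsum_mul_inv_bracket_pow_le`. -/
def weightedSumConst (d : ℕ) : ℝ := 2 ^ (4 * d) * 4 ^ d

theorem weightedSumConst_pos (d : ℕ) : 0 < weightedSumConst d := by
  unfold weightedSumConst
  positivity

/-- Averaging over boxes of side `s` costs only a constant against a weight that varies on scale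
`s`, so polynomial decay of the box averages of `U` passes to its weighted sums. -/
theorem tsum_mul_inv_bracket_pow_le {U : IntLattice d → ℝ≥0∞} {D a s : ℝ} (hD : 0 ≤ D) (ha : 0 ≤ a)
    (had : a ≤ d) (hs : 1 ≤ s)
    (hU : ∀ w, conv U (boxIndicator s) w ≤ ENNReal.ofReal (D * bracket s w ^ (-a)))
    (x : IntLattice d) :
    ∑' y, U y * ENNReal.ofReal ((bracket s (x - y) ^ (4 * d))⁻¹) ≤
      ENNReal.ofReal (weightedSumConst d * (D * bracket s x ^ (-a))) := by
  have hs0 : 0 < s := by linarith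
  have hpos : ∀ y : IntLattice d, 0 < bracket s y := bracket_pos hs0.le
  set g : IntLattice d → ℝ≥0∞ := fun y => ENNReal.ofReal ((bracket s (x - y) ^ (4 * d))⁻¹)
  have hslow : ∀ y z, supNorm z ≤ s → g y ≤ ENNReal.ofReal (2 ^ (4 * d)) * g (y + z) := by
    intro y z hz
    rw [← ENNReal.ofReal_mul (by positivity)]
    refine ENNReal.ofReal_le_ofReal ?_
    rw [← sub_sub]
    exact inv_bracket_pow_le_two_pow_mul hs0 _ _ hz
  have hmul : ENNReal.ofReal (s ^ d) * ∑' y, U y * g y ≤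
      ENNReal.ofReal (s ^ d) *
        ENNReal.ofReal (weightedSumConst d * (D * bracket s x ^ (-a))) := calc
    _ ≤ ENNReal.ofReal (2 ^ (4 * d)) * ∑' w, g w * conv U (boxIndicator s) w :=
      (mul_le_mul_left (ofReal_pow_le_mass_boxIndicator hs0.le) _).trans
        (mass_boxIndicator_mul_tsum_le U g _ hslow)
    _ ≤ ENNReal.ofReal (2 ^ (4 * d)) * (ENNReal.ofReal (D * bracket s x ^ (-a)) *
          ENNReal.ofReal ((4 * s) ^ d)) := by
      gcongr
      exact tsum_inv_bracket_pow_mul_conv_le hD ha had hs hU x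
    _ = _ := by
      have := hpos x
      rw [← ENNReal.ofReal_mul (by positivity), ← ENNReal.ofReal_mul (by positivity),
        ← ENNReal.ofReal_mul (by positivity), weightedSumConst, mul_pow]
      congr 1
      ring
  have hs_ne : ENNReal.ofReal (s ^ d) ≠ 0 := by simpa using pow_pos hs0 d
  exact (ENNReal.mul_le_mul_iff_right hs_ne ENNReal.ofReal_ne_top).1 hmul

end WeightedSums

section Moments

variable {d : ℕ}

/-- The power sum `∑ᵢ xᵢ^(2q)`, an additive substitute for `|x|^(2q)`. -/
def evenPowSum (q : ℕ) (x : IntLattice d) : ℝ := ∑ i, (x i : ℝ) ^ (2 * q)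

/-- The `2q`-th moment of a function on `ℤ^d`, taken with respect to `evenPowSum`. -/
def moment (q : ℕ) (f : IntLattice d → ℝ≥0∞) : ℝ≥0∞ :=
  ∑' x, ENNReal.ofReal (evenPowSum q x) * f x

theorem evenPowSum_nonneg (q : ℕ) (x : IntLattice d) : 0 ≤ evenPowSum q x :=
  Finset.sum_nonneg fun _ _ => (even_two_mul q).pow_nonneg _

theorem evenPowSum_zero_left (x : IntLattice d) : evenPowSum 0 x = d := by simp [evenPowSum]

theorem evenPowSum_one (x : IntLattice d) : evenPowSum 1 x = sqNorm x := by
  simp [evenPowSum, sqNorm]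

theorem supNorm_pow_le_evenPowSum (hd : 0 < d) (q : ℕ) (x : IntLattice d) :
    supNorm x ^ (2 * q) ≤ evenPowSum q x := by
  obtain ⟨i, hi⟩ := exists_abs_eq_supNorm hd x
  rw [← hi, (even_two_mul q).pow_abs]
  exact Finset.single_le_sum (f := fun i => (x i : ℝ) ^ (2 * q))
    (fun _ _ => (even_two_mul q).pow_nonneg _) (Finset.mem_univ i)

theorem evenPowSum_le (q : ℕ) (x : IntLattice d) :
    evenPowSum q x ≤ d * supNorm x ^ (2 * q) := by
  have hterm : ∀ i, (x i : ℝ) ^ (2 * q) ≤ supNorm x ^ (2 * q) := fun i => by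
    rw [← (even_two_mul q).pow_abs]
    exact pow_le_pow_left₀ (abs_nonneg _) (abs_le_supNorm x i) _
  simpa [evenPowSum] using Finset.sum_le_card_nsmul Finset.univ _ _ fun i _ => hterm i

theorem moment_zero (f : IntLattice d → ℝ≥0∞) : moment 0 f = d * mass f := by
  simp [moment, evenPowSum_zero_left, mass, ENNReal.tsum_mul_left]

theorem moment_mono (q : ℕ) {f g : IntLattice d → ℝ≥0∞} (h : f ≤ g) : moment q f ≤ moment q g :=
  ENNReal.tsum_le_tsum fun x => mul_le_mul_right (h x) _

theorem moment_add (q : ℕ) (f g : IntLattice d → ℝ≥0∞) :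
    moment q (f + g) = moment q f + moment q g := by
  simp [moment, mul_add, ENNReal.tsum_add]

theorem moment_smul (q : ℕ) (c : ℝ≥0∞) (f : IntLattice d → ℝ≥0∞) :
    moment q (c • f) = c * moment q f := by
  simp only [moment, Pi.smul_apply, smul_eq_mul, ← ENNReal.tsum_mul_left, mul_left_comm]

theorem moment_succ_delta (q : ℕ) : moment (q + 1) (delta : IntLattice d → ℝ≥0∞) = 0 := by
  refine ENNReal.tsum_eq_zero.2 fun x => ?_
  by_cases hx : x = 0 <;> simp [delta, hx, evenPowSum]

theorem pow_succ_mul_pow_succ_le {a b : ℝ} (ha : 0 ≤ a) (hb : 0 ≤ b) (i j : ℕ) :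
    a ^ (i + 1) * b ^ (j + 1) ≤ a ^ (i + j + 1) * b + a * b ^ (i + j + 1) := by
  rcases le_total a b with hab | hba
  · calc a ^ (i + 1) * b ^ (j + 1) = a * (a ^ i * b ^ (j + 1)) := by ring
      _ ≤ a * (b ^ i * b ^ (j + 1)) := by gcongr
      _ = a * b ^ (i + j + 1) := by ring
      _ ≤ _ := le_add_of_nonneg_left (by positivity)
  · calc a ^ (i + 1) * b ^ (j + 1) = a ^ (i + 1) * b ^ j * b := by ring
      _ ≤ a ^ (i + 1) * a ^ j * b := by gcongr
      _ = a ^ (i + j + 1) * b := by ring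
      _ ≤ _ := le_add_of_nonneg_right (by positivity)

theorem pow_mul_pow_add_neg_pow_le (x t : ℝ) (n j : ℕ) (hj : j ≤ 2 * (n + 1)) :
    x ^ (2 * (n + 1) - j) * (t ^ j + (-t) ^ j) ≤
      (if j = 0 then 2 * x ^ (2 * (n + 1)) else 0) +
        (if j = 2 * (n + 1) then 2 * t ^ (2 * (n + 1)) else 0) +
        2 * (x ^ (2 * n) * t ^ 2 + x ^ 2 * t ^ (2 * n)) := by
  have hx := (even_two_mul (n + 1)).pow_nonneg x
  have ht := (even_two_mul (n + 1)).pow_nonneg t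
  have hB : 0 ≤ x ^ (2 * n) * t ^ 2 + x ^ 2 * t ^ (2 * n) :=
    add_nonneg (mul_nonneg ((even_two_mul n).pow_nonneg x) (sq_nonneg t))
      (mul_nonneg (sq_nonneg x) ((even_two_mul n).pow_nonneg t))
  rcases Nat.even_or_odd' j with ⟨i, rfl | rfl⟩
  · rw [(even_two_mul i).neg_pow]
    obtain rfl | hi := Nat.eq_zero_or_pos i
    · simp only [mul_zero, Nat.sub_zero, pow_zero, if_true]
      rw [if_neg (by omega)]
      linarith
    obtain rfl | hin : i = n + 1 ∨ i ≤ n := by omega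
    · rw [Nat.sub_self, if_neg (by omega), if_pos rfl]
      linarith
    obtain ⟨k, rfl⟩ : ∃ k, i = k + 1 := ⟨i - 1, by omega⟩
    obtain ⟨l, rfl⟩ : ∃ l, n = l + k + 1 := ⟨n - (k + 1), by omega⟩
    have hmid := pow_succ_mul_pow_succ_le (sq_nonneg x) (sq_nonneg t) l k
    simp only [← pow_mul] at hmid
    rw [if_neg (by omega), if_neg (by omega),
      show 2 * (l + k + 1 + 1) - 2 * (k + 1) = 2 * (l + 1) by omega]
    linarith
  · rw [Odd.neg_pow ⟨i, rfl⟩, add_neg_cancel, mul_zero]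
    positivity

theorem add_pow_add_sub_pow_le (x t : ℝ) (n : ℕ) :
    (x + t) ^ (2 * (n + 1)) + (x - t) ^ (2 * (n + 1)) ≤
      2 * (x ^ (2 * (n + 1)) + t ^ (2 * (n + 1)) +
        4 ^ (n + 1) * (x ^ (2 * n) * t ^ 2 + x ^ 2 * t ^ (2 * n))) := by
  set N := 2 * (n + 1) with hN
  set B := x ^ (2 * n) * t ^ 2 + x ^ 2 * t ^ (2 * n)
  have hchoose : ∑ j ∈ Finset.range (N + 1), (N.choose j : ℝ) = 2 ^ N := by
    exact_mod_cast Nat.sum_range_choose N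
  calc (x + t) ^ N + (x - t) ^ N
      = ∑ j ∈ Finset.range (N + 1), x ^ (N - j) * (t ^ j + (-t) ^ j) * N.choose j := by
        rw [add_comm x t, sub_eq_neg_add, add_pow, add_pow, ← Finset.sum_add_distrib]
        exact Finset.sum_congr rfl fun j _ => by ring
    _ ≤ ∑ j ∈ Finset.range (N + 1), ((if j = 0 then 2 * x ^ N else 0) +
          (if j = N then 2 * t ^ N else 0) + 2 * B) * N.choose j := by
        refine Finset.sum_le_sum fun j hj => mul_le_mul_of_nonneg_right ?_ (Nat.cast_nonneg _)
        exact pow_mul_pow_add_neg_pow_le x t n j (Nat.lt_succ_iff.1 (Finset.mem_range.1 hj))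
    _ = 2 * x ^ N + 2 * t ^ N + 2 * B * 2 ^ N := by
        simp [add_mul, ite_mul, Finset.sum_add_distrib, ← Finset.mul_sum, hchoose]
    _ = _ := by rw [hN, pow_mul 2 2]; ring

theorem evenPowSum_mul_le (a b : ℕ) (x t : IntLattice d) :
    ∑ i, (x i : ℝ) ^ (2 * a) * (t i : ℝ) ^ (2 * b) ≤ evenPowSum a x * evenPowSum b t :=
  calc ∑ i, (x i : ℝ) ^ (2 * a) * (t i : ℝ) ^ (2 * b)
      ≤ ∑ i, (x i : ℝ) ^ (2 * a) * evenPowSum b t := by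
        refine Finset.sum_le_sum fun i _ =>
          mul_le_mul_of_nonneg_left ?_ ((even_two_mul a).pow_nonneg _)
        exact Finset.single_le_sum (f := fun i => (t i : ℝ) ^ (2 * b))
          (fun _ _ => (even_two_mul b).pow_nonneg _) (Finset.mem_univ i)
    _ = evenPowSum a x * evenPowSum b t := (Finset.sum_mul ..).symm

theorem evenPowSum_add_add_evenPowSum_sub_le (n : ℕ) (x t : IntLattice d) :
    evenPowSum (n + 1) (x + t) + evenPowSum (n + 1) (x - t) ≤
      2 * (evenPowSum (n + 1) x + evenPowSum (n + 1) t +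
        4 ^ (n + 1) * (evenPowSum n x * evenPowSum 1 t + evenPowSum 1 x * evenPowSum n t)) := by
  calc evenPowSum (n + 1) (x + t) + evenPowSum (n + 1) (x - t)
      = ∑ i, (((x i : ℝ) + t i) ^ (2 * (n + 1)) + ((x i : ℝ) - t i) ^ (2 * (n + 1))) := by
        simp [evenPowSum, Finset.sum_add_distrib]
    _ ≤ ∑ i, 2 * ((x i : ℝ) ^ (2 * (n + 1)) + (t i : ℝ) ^ (2 * (n + 1)) + 4 ^ (n + 1) *
          ((x i : ℝ) ^ (2 * n) * (t i : ℝ) ^ (2 * 1) +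
            (x i : ℝ) ^ (2 * 1) * (t i : ℝ) ^ (2 * n))) :=
        Finset.sum_le_sum fun i _ => add_pow_add_sub_pow_le _ _ n
    _ = 2 * (evenPowSum (n + 1) x + evenPowSum (n + 1) t + 4 ^ (n + 1) *
          (∑ i, (x i : ℝ) ^ (2 * n) * (t i : ℝ) ^ (2 * 1) +
            ∑ i, (x i : ℝ) ^ (2 * 1) * (t i : ℝ) ^ (2 * n))) := by
        simp only [evenPowSum, Finset.mul_sum, ← Finset.sum_add_distrib]
    _ ≤ _ := by gcongr <;> exact evenPowSum_mul_le _ _ x t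

theorem evenPowSum_one_add_add_sub (x t : IntLattice d) :
    evenPowSum 1 (x + t) + evenPowSum 1 (x - t) = 2 * (evenPowSum 1 x + evenPowSum 1 t) := by
  simp only [evenPowSum, ← Finset.sum_add_distrib, Finset.mul_sum]
  exact Finset.sum_congr rfl fun i _ => by simp; ring

/-- Symmetrizing in the second summand cancels the odd cross terms. -/
theorem two_mul_moment_conv (q : ℕ) (f : IntLattice d → ℝ≥0∞) {g : IntLattice d → ℝ≥0∞}
    (hg : g.Even) :
    2 * moment q (conv f g) =
      ∑' y, ∑' z, ENNReal.ofReal (evenPowSum q (y + z) + evenPowSum q (y - z)) * (f y * g z) := by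
  have hadd : moment q (conv f g) =
      ∑' y, ∑' z, ENNReal.ofReal (evenPowSum q (y + z)) * (f y * g z) := tsum_mul_conv _ f g
  have hsub : moment q (conv f g) =
      ∑' y, ∑' z, ENNReal.ofReal (evenPowSum q (y - z)) * (f y * g z) := by
    rw [hadd]
    refine tsum_congr fun y => ?_
    rw [← (Equiv.neg _).tsum_eq]
    exact tsum_congr fun z => by rw [Equiv.neg_apply, hg, ← sub_eq_add_neg]
  rw [two_mul]
  nth_rewrite 1 [hadd]
  rw [hsub]
  simp only [← ENNReal.tsum_add, ← add_mul,
    ← ENNReal.ofReal_add (evenPowSum_nonneg _ _) (evenPowSum_nonneg _ _)]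

theorem tsum_tsum_mul_mul {α β : Type*} (a f : α → ℝ≥0∞) (b g : β → ℝ≥0∞) :
    ∑' y, ∑' z, a y * b z * (f y * g z) = (∑' y, a y * f y) * ∑' z, b z * g z := by
  rw [← ENNReal.tsum_mul_right]
  refine tsum_congr fun y => ?_
  rw [← ENNReal.tsum_mul_left]
  exact tsum_congr fun z => mul_mul_mul_comm ..

theorem le_of_two_mul_le_two_mul {a b : ℝ≥0∞} (h : 2 * a ≤ 2 * b) : a ≤ b :=
  (ENNReal.mul_le_mul_iff_right two_ne_zero ENNReal.ofNat_ne_top).1 h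

theorem moment_one_conv (f : IntLattice d → ℝ≥0∞) {g : IntLattice d → ℝ≥0∞} (hg : g.Even) :
    moment 1 (conv f g) = moment 1 f * mass g + mass f * moment 1 g := by
  have htwo : 2 * moment 1 (conv f g) = 2 * (moment 1 f * mass g + mass f * moment 1 g) := by
    have hleft := tsum_tsum_mul_mul (fun y => ENNReal.ofReal (evenPowSum 1 y)) f 1 g
    have hright := tsum_tsum_mul_mul 1 f (fun y => ENNReal.ofReal (evenPowSum 1 y)) g
    simp only [Pi.one_apply, mul_one, one_mul] at hleft hright
    simp only [two_mul_moment_conv 1 f hg, evenPowSum_one_add_add_sub]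
    unfold moment mass
    simp only [← hleft, ← hright, ← ENNReal.tsum_add, ← ENNReal.tsum_mul_left]
    refine tsum_congr fun y => tsum_congr fun z => ?_
    rw [ENNReal.ofReal_mul zero_le_two,
      ENNReal.ofReal_add (evenPowSum_nonneg _ _) (evenPowSum_nonneg _ _), ENNReal.ofReal_ofNat]
    ring
  exact le_antisymm (le_of_two_mul_le_two_mul htwo.le) (le_of_two_mul_le_two_mul htwo.ge)

theorem moment_succ_conv_le (n : ℕ) (f : IntLattice d → ℝ≥0∞) {g : IntLattice d → ℝ≥0∞}
    (hg : g.Even) :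
    moment (n + 1) (conv f g) ≤ moment (n + 1) f * mass g + mass f * moment (n + 1) g +
      4 ^ (n + 1) * (moment n f * moment 1 g + moment 1 f * moment n g) := by
  let p (q : ℕ) (y : IntLattice d) : ℝ≥0∞ := ENNReal.ofReal (evenPowSum q y)
  have hfac (a b : ℕ) := tsum_tsum_mul_mul (p a) f (p b) g
  have hleft := tsum_tsum_mul_mul (p (n + 1)) f 1 g
  have hright := tsum_tsum_mul_mul 1 f (p (n + 1)) g
  simp only [Pi.one_apply, mul_one, one_mul] at hleft hright
  refine le_of_two_mul_le_two_mul ?_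
  rw [two_mul_moment_conv _ f hg]
  change _ ≤ 2 * ((∑' y, p (n + 1) y * f y) * (∑' z, g z) +
    (∑' y, f y) * (∑' z, p (n + 1) z * g z) +
    4 ^ (n + 1) * ((∑' y, p n y * f y) * (∑' z, p 1 z * g z) +
      (∑' y, p 1 y * f y) * (∑' z, p n z * g z)))
  simp only [← hleft, ← hright, ← hfac, ← ENNReal.tsum_add, ← ENNReal.tsum_mul_left]
  refine ENNReal.tsum_le_tsum fun y => ENNReal.tsum_le_tsum fun z => ?_
  have hpos (q : ℕ) (w : IntLattice d) : 0 ≤ evenPowSum q w := evenPowSum_nonneg q w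
  refine (mul_le_mul_left (ENNReal.ofReal_le_ofReal
    (evenPowSum_add_add_evenPowSum_sub_le n y z)) _).trans_eq ?_
  have hcross₁ := mul_nonneg (hpos n y) (hpos 1 z)
  have hcross₂ := mul_nonneg (hpos 1 y) (hpos n z)
  rw [ENNReal.ofReal_mul zero_le_two, ENNReal.ofReal_add (add_nonneg (hpos _ _) (hpos _ _))
      (mul_nonneg (by positivity) (add_nonneg hcross₁ hcross₂)),
    ENNReal.ofReal_add (hpos _ _) (hpos _ _), ENNReal.ofReal_mul (by positivity),
    ENNReal.ofReal_add hcross₁ hcross₂, ENNReal.ofReal_mul (hpos _ _),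
    ENNReal.ofReal_mul (hpos _ _), ENNReal.ofReal_pow zero_le_four]
  simp only [ENNReal.ofReal_ofNat, p]
  ring

/-- The step distribution `f` of a symmetric walk on `ℤ^d` with standard deviation `r`, whose first
`Q` even moments are of the order dictated by the scale `r`. -/
structure IsWalkStep (κ : ℕ → ℝ) (Q : ℕ) (r : ℝ) (f : IntLattice d → ℝ≥0∞) : Prop where
  symm : IsSymmFun f
  mass_eq_one : mass f = 1
  moment_one : moment 1 f = ENNReal.ofReal (r ^ 2)
  moment_le : ∀ q ≤ Q, moment q f ≤ ENNReal.ofReal (κ q * r ^ (2 * q))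

theorem IsWalkStep.mass_convPow {κ : ℕ → ℝ} {Q : ℕ} {r : ℝ} {f : IntLattice d → ℝ≥0∞}
    (hf : IsWalkStep κ Q r f) (k : ℕ) : mass (convPow f k) = 1 := by
  rw [Blackbox.mass_convPow, hf.mass_eq_one, one_pow]

theorem IsWalkStep.moment_one_convPow {κ : ℕ → ℝ} {Q : ℕ} {r : ℝ} {f : IntLattice d → ℝ≥0∞}
    (hf : IsWalkStep κ Q r f) (k : ℕ) :
    moment 1 (convPow f k) = ENNReal.ofReal (k * r ^ 2) := by
  induction k with
  | zero => simp [convPow, moment_succ_delta 0]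
  | succ k ih =>
    rw [convPow, moment_one_conv _ (even_convPow hf.symm.even k), ih, hf.moment_one,
      hf.mass_convPow, hf.mass_eq_one, mul_one, one_mul,
      ← ENNReal.ofReal_add (by positivity) (by positivity)]
    congr 1
    push_cast
    ring

/-- The constants in the moment bounds `IsWalkStep.moment_convPow_le` for convolution powers. -/
def convPowMomentConst (d : ℕ) (κ : ℕ → ℝ) : ℕ → ℝ
  | 0 => d
  | 1 => 1
  | q + 2 => κ (q + 2) + 4 ^ (q + 2) * (convPowMomentConst d κ (q + 1) + κ (q + 1))

theorem convPowMomentConst_nonneg {κ : ℕ → ℝ} (hκ : ∀ q, 0 ≤ κ q) :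
    ∀ q, 0 ≤ convPowMomentConst d κ q
  | 0 => Nat.cast_nonneg d
  | 1 => zero_le_one
  | q + 2 => by
    have := convPowMomentConst_nonneg hκ (q + 1)
    have := hκ (q + 1)
    have := hκ (q + 2)
    simp only [convPowMomentConst]
    positivity

theorem pow_add_succ_pow_le (k : ℝ) (hk : 0 ≤ k) (q : ℕ) :
    k ^ (q + 1) + (k + 1) ^ q ≤ (k + 1) ^ (q + 1) := by
  have hle : k ^ q ≤ (k + 1) ^ q := by gcongr; linarith
  have := mul_le_mul_of_nonneg_right hle hk
  rw [pow_succ, pow_succ]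
  linarith

theorem convPowMomentConst_step {κ : ℕ → ℝ} (hκ : ∀ q, 0 ≤ κ q) (q : ℕ) {k : ℝ} (hk : 0 ≤ k) :
    κ (q + 2) + convPowMomentConst d κ (q + 2) * k ^ (q + 2) +
        4 ^ (q + 2) * (κ (q + 1) * k + convPowMomentConst d κ (q + 1) * k ^ (q + 1)) ≤
      convPowMomentConst d κ (q + 2) * (k + 1) ^ (q + 2) := by
  have hK := convPowMomentConst_nonneg (d := d) hκ (q + 1)
  have hK' := convPowMomentConst_nonneg (d := d) hκ (q + 2)
  have hκ₁ := hκ (q + 1)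
  have hκ₂ := hκ (q + 2)
  have hone : 1 ≤ (k + 1) ^ (q + 1) := one_le_pow₀ (by linarith)
  have hlin : k ≤ (k + 1) ^ (q + 1) :=
    (le_add_of_nonneg_right zero_le_one).trans (le_self_pow₀ (by linarith) q.succ_ne_zero)
  have hpow : k ^ (q + 1) ≤ (k + 1) ^ (q + 1) := by gcongr; linarith
  calc _ ≤ κ (q + 2) * (k + 1) ^ (q + 1) + convPowMomentConst d κ (q + 2) * k ^ (q + 2) +
        4 ^ (q + 2) * (κ (q + 1) * (k + 1) ^ (q + 1) +
          convPowMomentConst d κ (q + 1) * (k + 1) ^ (q + 1)) := by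
        gcongr
        exact le_mul_of_one_le_right hκ₂ hone
    _ = convPowMomentConst d κ (q + 2) * (k ^ (q + 2) + (k + 1) ^ (q + 1)) := by
        rw [convPowMomentConst]
        ring
    _ ≤ _ := by gcongr; exact pow_add_succ_pow_le k hk (q + 1)

theorem IsWalkStep.moment_convPow_succ_le {κ : ℕ → ℝ} (hκ : ∀ q, 0 ≤ κ q) {Q : ℕ} {r : ℝ}
    (hr : 0 ≤ r) {f : IntLattice d → ℝ≥0∞} (hf : IsWalkStep κ Q r f) {q k : ℕ} (hq : q + 2 ≤ Q)
    {A B : ℝ} (hA : 0 ≤ A) (hB : 0 ≤ B)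
    (hmomentA : moment (q + 1) (convPow f k) ≤ ENNReal.ofReal (A * r ^ (2 * (q + 1))))
    (hmomentB : moment (q + 2) (convPow f k) ≤ ENNReal.ofReal (B * r ^ (2 * (q + 2)))) :
    moment (q + 2) (convPow f (k + 1)) ≤
      ENNReal.ofReal ((κ (q + 2) + B + 4 ^ (q + 2) * (κ (q + 1) * k + A)) * r ^ (2 * (q + 2))) := by
  have hκ₁ := hκ (q + 1)
  have hκ₂ := hκ (q + 2)
  calc moment (q + 2) (convPow f (k + 1))
      ≤ moment (q + 2) f + moment (q + 2) (convPow f k) +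
        4 ^ (q + 2) * (moment (q + 1) f * moment 1 (convPow f k) +
          moment 1 f * moment (q + 1) (convPow f k)) := by
        simpa only [convPow, hf.mass_convPow, hf.mass_eq_one, mul_one, one_mul] using
          moment_succ_conv_le (q + 1) f (even_convPow hf.symm.even k)
    _ ≤ ENNReal.ofReal (κ (q + 2) * r ^ (2 * (q + 2))) + ENNReal.ofReal (B * r ^ (2 * (q + 2))) +
        ENNReal.ofReal (4 ^ (q + 2)) *
          (ENNReal.ofReal (κ (q + 1) * r ^ (2 * (q + 1))) * ENNReal.ofReal (k * r ^ 2) +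
            ENNReal.ofReal (r ^ 2) * ENNReal.ofReal (A * r ^ (2 * (q + 1)))) := by
        rw [hf.moment_one, hf.moment_one_convPow, ENNReal.ofReal_pow zero_le_four,
          ENNReal.ofReal_ofNat]
        gcongr
        · exact hf.moment_le _ hq
        · exact hf.moment_le _ (by omega)
    _ = _ := by
        rw [← ENNReal.ofReal_mul (by positivity), ← ENNReal.ofReal_mul (by positivity),
          ← ENNReal.ofReal_add (by positivity) (by positivity),
          ← ENNReal.ofReal_add (by positivity) (by positivity),
          ← ENNReal.ofReal_mul (by positivity),
          ← ENNReal.ofReal_add (by positivity) (by positivity)]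
        congr 1
        ring

theorem IsWalkStep.moment_convPow_le {κ : ℕ → ℝ} (hκ : ∀ q, 0 ≤ κ q) {Q : ℕ} {r : ℝ} (hr : 0 ≤ r)
    {f : IntLattice d → ℝ≥0∞} (hf : IsWalkStep κ Q r f) {q : ℕ} (hq : q ≤ Q) (k : ℕ) :
    moment q (convPow f k) ≤ ENNReal.ofReal (convPowMomentConst d κ q * k ^ q * r ^ (2 * q)) := by
  induction q using Nat.twoStepInduction generalizing k with
  | zero => simp [moment_zero, hf.mass_convPow, convPowMomentConst]
  | one => simp [hf.moment_one_convPow, convPowMomentConst]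
  | more q _ ih =>
    induction k with
    | zero => simp [convPow, moment_succ_delta]
    | succ k ihk =>
      have hK := convPowMomentConst_nonneg (d := d) hκ (q + 1)
      have hK' := convPowMomentConst_nonneg (d := d) hκ (q + 2)
      refine (hf.moment_convPow_succ_le hκ hr hq (by positivity) (by positivity)
        (ih (by omega) k) ihk).trans (ENNReal.ofReal_le_ofReal ?_)
      refine mul_le_mul_of_nonneg_right ?_ (by positivity)
      exact_mod_cast convPowMomentConst_step hκ q (Nat.cast_nonneg k)

end Moments

section CharacteristicFunction

variable {d : ℕ}

/-- The bilinear pairing `θ · x` of a frequency with a lattice point. -/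
def pairing : (Fin d → ℝ) →+ IntLattice d →+ ℝ :=
  AddMonoidHom.mk' (fun θ => AddMonoidHom.mk' (fun x => ∑ i, θ i * x i) fun x y => by
      simp [mul_add, Finset.sum_add_distrib])
    fun θ η => AddMonoidHom.ext fun x => by
      simp only [AddMonoidHom.mk'_apply, AddMonoidHom.add_apply, Pi.add_apply, add_mul,
        Finset.sum_add_distrib]

theorem pairing_apply (θ : Fin d → ℝ) (x : IntLattice d) : pairing θ x = ∑ i, θ i * x i := rfl

/-- The plane wave `x ↦ e^{i θ · x}` of frequency `θ`. -/
def planeWave (θ : Fin d → ℝ) (x : IntLattice d) : ℂ := Complex.exp (pairing θ x * Complex.I)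

@[simp] lemma norm_planeWave (θ : Fin d → ℝ) (x : IntLattice d) : ‖planeWave θ x‖ = 1 :=
  Complex.norm_exp_ofReal_mul_I _

theorem planeWave_add (θ : Fin d → ℝ) (x y : IntLattice d) :
    planeWave θ (x + y) = planeWave θ x * planeWave θ y := by
  rw [planeWave, map_add, Complex.ofReal_add, add_mul, Complex.exp_add, planeWave, planeWave]

/-- The characteristic function `θ ↦ ∑ₓ f(x) e^{i θ · x}`. -/
def charFn (f : IntLattice d → ℝ≥0∞) (θ : Fin d → ℝ) : ℂ :=
  ∑' x, ((f x).toReal : ℂ) * planeWave θ x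

theorem summable_norm_mul_planeWave {f : IntLattice d → ℝ≥0∞} (hf : mass f ≠ ⊤)
    (θ : Fin d → ℝ) : Summable fun x => ‖((f x).toReal : ℂ) * planeWave θ x‖ := by
  simpa using ENNReal.summable_toReal hf

theorem hasSum_charFn {f : IntLattice d → ℝ≥0∞} (hf : mass f ≠ ⊤) (θ : Fin d → ℝ) :
    HasSum (fun x => ((f x).toReal : ℂ) * planeWave θ x) (charFn f θ) :=
  (summable_norm_mul_planeWave hf θ).of_norm.hasSum

theorem charFn_conv {f g : IntLattice d → ℝ≥0∞} (hf : mass f ≠ ⊤) (hg : mass g ≠ ⊤)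
    (θ : Fin d → ℝ) : charFn (conv f g) θ = charFn f θ * charFn g θ := by
  let e : IntLattice d × IntLattice d ≃ IntLattice d × IntLattice d :=
    { toFun := fun p => (p.2, p.1 - p.2)
      invFun := fun p => (p.1 + p.2, p.1)
      left_inv := fun p => by ext <;> simp
      right_inv := fun p => by ext <;> simp }
  have hprod : Summable fun p => ((f (e p).1).toReal : ℂ) * planeWave θ (e p).1 *
      (((g (e p).2).toReal : ℂ) * planeWave θ (e p).2) :=
    e.summable_iff.2 <| summable_mul_of_summable_norm (summable_norm_mul_planeWave hf θ)
      (summable_norm_mul_planeWave hg θ)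
  unfold charFn
  rw [tsum_mul_tsum_of_summable_norm (summable_norm_mul_planeWave hf θ)
    (summable_norm_mul_planeWave hg θ), ← e.tsum_eq, hprod.tsum_prod]
  refine tsum_congr fun x => ?_
  rw [conv, ENNReal.tsum_toReal_eq fun y => ENNReal.mul_ne_top
    (ENNReal.ne_top_of_tsum_ne_top hf _) (ENNReal.ne_top_of_tsum_ne_top hg _),
    Complex.ofReal_tsum, ← tsum_mul_right]
  refine tsum_congr fun y => ?_
  rw [← add_sub_cancel y x, planeWave_add]
  simp only [e, Equiv.coe_fn_mk, ENNReal.toReal_mul, Complex.ofReal_mul,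
    add_sub_cancel_left]
  ring

theorem charFn_delta (θ : Fin d → ℝ) : charFn delta θ = 1 := by
  rw [charFn, tsum_eq_single 0 fun x hx => by simp [delta, hx]]
  simp [delta, planeWave]

theorem charFn_convPow {f : IntLattice d → ℝ≥0∞} (hf : mass f ≠ ⊤) (θ : Fin d → ℝ) (k : ℕ) :
    charFn (convPow f k) θ = charFn f θ ^ k := by
  induction k with
  | zero => simp [convPow, charFn_delta]
  | succ k ih =>
    rw [convPow, charFn_conv hf (mass_convPow f k ▸ ENNReal.pow_ne_top hf), ih, pow_succ']

theorem charFn_eq_tsum_cos {f : IntLattice d → ℝ≥0∞} (hf : mass f ≠ ⊤) (he : f.Even)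
    (θ : Fin d → ℝ) :
    charFn f θ = ((∑' x, (f x).toReal * Real.cos (pairing θ x) : ℝ) : ℂ) := by
  have hneg : HasSum (fun x => ((f x).toReal : ℂ) * planeWave θ (-x)) (charFn f θ) := by
    simpa [Function.comp_def, he _] using (Equiv.neg _).hasSum_iff.2 (hasSum_charFn hf θ)
  rw [Complex.ofReal_tsum, eq_comm]
  convert (((hasSum_charFn hf θ).add hneg).div_const 2).tsum_eq using 1
  · refine tsum_congr fun x => ?_
    rw [Complex.ofReal_mul, Complex.ofReal_cos, Complex.cos, ← mul_add, mul_div_assoc]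
    simp [planeWave, Complex.exp_neg]
  · ring

/-- Expanding `|∑ⱼ e^{i θⱼ · w}|²` shows that the `f`-average of this function around any point is
at most the sum of `|charFn f|` over the differences of the frequencies. -/
theorem conv_norm_sum_planeWave_sq_le {ι : Type*} [Fintype ι] (θ : ι → Fin d → ℝ)
    {f : IntLattice d → ℝ≥0∞} (hf : mass f ≠ ⊤) (z : IntLattice d) :
    conv f (fun w => ENNReal.ofReal (‖∑ j, planeWave (θ j) w‖ ^ 2)) z ≤
      ENNReal.ofReal (∑ j, ∑ l, ‖charFn f (θ l - θ j)‖) := by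
  have hwave : ∀ j l y, planeWave (θ j) (z - y) *
      (starRingEnd ℂ) (planeWave (θ l) (z - y)) =
        planeWave (θ j - θ l) z * planeWave (θ l - θ j) y := fun j l y => by
    simp only [planeWave, ← Complex.exp_conj, ← Complex.exp_add, map_sub, AddMonoidHom.sub_apply,
      map_mul, Complex.conj_ofReal, Complex.conj_I]
    congr 1
    push_cast
    ring
  have hterm : ∀ y, ∑ j, ∑ l, planeWave (θ j - θ l) z *
      (((f y).toReal : ℂ) * planeWave (θ l - θ j) y) =
        (((f y).toReal * ‖∑ j, planeWave (θ j) (z - y)‖ ^ 2 : ℝ) : ℂ) := fun y => by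
    rw [Complex.ofReal_mul, ← Complex.normSq_eq_norm_sq, ← Complex.mul_conj, map_sum,
      Finset.sum_mul_sum, Finset.mul_sum]
    refine Finset.sum_congr rfl fun j _ => ?_
    rw [Finset.mul_sum]
    exact Finset.sum_congr rfl fun l _ => by rw [hwave]; ring
  have hsum : HasSum (fun y => (f y).toReal * ‖∑ j, planeWave (θ j) (z - y)‖ ^ 2)
      (∑ j, ∑ l, planeWave (θ j - θ l) z * charFn f (θ l - θ j)).re := by
    simpa only [hterm, Complex.ofReal_re] using Complex.hasSum_re <|
      hasSum_sum (s := Finset.univ) fun j _ => hasSum_sum (s := Finset.univ) fun l _ =>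
        (hasSum_charFn hf (θ l - θ j)).mul_left (planeWave (θ j - θ l) z)
  calc conv f (fun w => ENNReal.ofReal (‖∑ j, planeWave (θ j) w‖ ^ 2)) z
      = ∑' y, ENNReal.ofReal ((f y).toReal * ‖∑ j, planeWave (θ j) (z - y)‖ ^ 2) :=
        tsum_congr fun y => by
          rw [ENNReal.ofReal_mul ENNReal.toReal_nonneg,
            ENNReal.ofReal_toReal (ENNReal.ne_top_of_tsum_ne_top hf y)]
    _ = ENNReal.ofReal (∑ j, ∑ l, planeWave (θ j - θ l) z * charFn f (θ l - θ j)).re := by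
        rw [← ENNReal.ofReal_tsum_of_nonneg (fun y => by positivity) hsum.summable, hsum.tsum_eq]
    _ ≤ _ := by
        refine ENNReal.ofReal_le_ofReal ((Complex.re_le_norm _).trans ((norm_sum_le _ _).trans
          (Finset.sum_le_sum fun j _ => (norm_sum_le _ _).trans_eq ?_)))
        simp

theorem cos_le_one_sub_sq_div_two_add_pow_four_div_two (u : ℝ) :
    Real.cos u ≤ 1 - u ^ 2 / 2 + u ^ 4 / 2 := by
  have hu : 0 ≤ u ^ 4 := (even_two_mul 2).pow_nonneg u
  rcases le_total |u| 1 with h | h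
  · have hcos := (abs_le.1 (Real.cos_bound h)).2
    rw [Even.pow_abs (by decide)] at hcos
    linarith
  · have h1 : 1 ≤ u ^ 2 := by rw [← sq_abs]; exact one_le_pow₀ h
    have := Real.cos_le_one u
    nlinarith

theorem hasSum_moment {f : IntLattice d → ℝ≥0∞} {q : ℕ} (hq : moment q f ≠ ⊤) :
    HasSum (fun x => evenPowSum q x * (f x).toReal) (moment q f).toReal := by
  rw [moment, ENNReal.tsum_toReal_eq (ENNReal.ne_top_of_tsum_ne_top hq)]
  simpa [ENNReal.toReal_mul, evenPowSum_nonneg] using (ENNReal.summable_toReal hq).hasSum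

theorem summable_mul_coord_mul_coord {f : IntLattice d → ℝ≥0∞} (hf : moment 1 f ≠ ⊤)
    (i j : Fin d) : Summable fun x : IntLattice d => (f x).toReal * ((x i : ℝ) * x j) := by
  refine (hasSum_moment hf).summable.of_norm_bounded fun x => ?_
  have hsq : ∀ l, (x l : ℝ) ^ 2 ≤ evenPowSum 1 x := fun l =>
    Finset.single_le_sum (f := fun i => (x i : ℝ) ^ 2) (fun _ _ => sq_nonneg _)
      (Finset.mem_univ l)
  rw [norm_mul, Real.norm_of_nonneg ENNReal.toReal_nonneg, mul_comm]
  refine mul_le_mul_of_nonneg_right ?_ ENNReal.toReal_nonneg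
  exact abs_le.2 ⟨by nlinarith [hsq i, hsq j, sq_nonneg ((x i : ℝ) + x j)],
    by nlinarith [hsq i, hsq j, sq_nonneg ((x i : ℝ) - x j)]⟩

theorem IsSymmFun.tsum_mul_coord_mul_coord {f : IntLattice d → ℝ≥0∞} (hf : IsSymmFun f)
    {i j : Fin d} (hij : i ≠ j) : ∑' x : IntLattice d, (f x).toReal * ((x i : ℝ) * x j) = 0 := by
  refine self_eq_neg.1 ?_
  rw [← tsum_neg, ← (signedPerm (Equiv.refl (Fin d)) fun l => decide (l = i)).tsum_eq]
  refine tsum_congr fun x => ?_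
  rw [show f (signedPerm _ _ x) = f x from hf _ _ x]
  simp [signedPerm, hij.symm]

theorem IsSymmFun.tsum_mul_coord_sq {f : IntLattice d → ℝ≥0∞} (hf : IsSymmFun f)
    (h1 : moment 1 f ≠ ⊤) (i : Fin d) :
    ∑' x : IntLattice d, (f x).toReal * ((x i : ℝ) * x i) = (moment 1 f).toReal / d := by
  have hswap : ∀ j, ∑' x : IntLattice d, (f x).toReal * ((x j : ℝ) * x j) =
      ∑' x : IntLattice d, (f x).toReal * ((x i : ℝ) * x i) := fun j => by
    rw [← (signedPerm (Equiv.swap i j) fun _ => false).tsum_eq]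
    refine tsum_congr fun x => ?_
    rw [show f (signedPerm _ _ x) = f x from hf _ _ x]
    simp [signedPerm]
  have hd : (d : ℝ) ≠ 0 := Nat.cast_ne_zero.2 (i.pos.ne')
  rw [eq_div_iff hd, ← (hasSum_moment h1).tsum_eq]
  calc _ = ∑ j, ∑' x : IntLattice d, (f x).toReal * ((x j : ℝ) * x j) := by
        simp [hswap, mul_comm]
    _ = ∑' x : IntLattice d, ∑ j, (f x).toReal * ((x j : ℝ) * x j) :=
        (Summable.tsum_finsetSum fun j _ => summable_mul_coord_mul_coord h1 j j).symm
    _ = _ := tsum_congr fun x => by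
        rw [← Finset.mul_sum, mul_comm]
        simp [evenPowSum, sq]

theorem IsSymmFun.hasSum_mul_pairing_sq {f : IntLattice d → ℝ≥0∞} (hf : IsSymmFun f)
    (h1 : moment 1 f ≠ ⊤) (θ : Fin d → ℝ) :
    HasSum (fun x => (f x).toReal * pairing θ x ^ 2)
      ((∑ i, θ i ^ 2) * ((moment 1 f).toReal / d)) := by
  have hcoord : ∀ i j, HasSum (fun x : IntLattice d => (f x).toReal * ((x i : ℝ) * x j))
      (if i = j then (moment 1 f).toReal / d else 0) := fun i j => by
    convert (summable_mul_coord_mul_coord h1 i j).hasSum using 1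
    split_ifs with hij
    · rw [← hij, hf.tsum_mul_coord_sq h1]
    · rw [hf.tsum_mul_coord_mul_coord hij]
  have hpoint : ∀ x, (f x).toReal * pairing θ x ^ 2 =
      ∑ i, ∑ j, θ i * θ j * ((f x).toReal * ((x i : ℝ) * x j)) := fun x => by
    rw [pairing_apply, sq, Finset.sum_mul_sum, Finset.mul_sum]
    refine Finset.sum_congr rfl fun i _ => ?_
    rw [Finset.mul_sum]
    exact Finset.sum_congr rfl fun j _ => by ring
  have hvalue : (∑ i, θ i ^ 2) * ((moment 1 f).toReal / d) =
      ∑ i, ∑ j, θ i * θ j * if i = j then (moment 1 f).toReal / d else 0 := by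
    simp [Finset.sum_mul, sq]
  rw [funext hpoint, hvalue]
  exact hasSum_sum fun i _ => hasSum_sum fun j _ => (hcoord i j).mul_left (θ i * θ j)

theorem pairing_sq_le (θ : Fin d → ℝ) (x : IntLattice d) :
    pairing θ x ^ 2 ≤ (∑ i, θ i ^ 2) * evenPowSum 1 x := by
  simpa [pairing_apply, evenPowSum] using
    Finset.sum_mul_sq_le_sq_mul_sq Finset.univ θ fun i => (x i : ℝ)

theorem pairing_pow_four_le (θ : Fin d → ℝ) (x : IntLattice d) :
    pairing θ x ^ 4 ≤ (∑ i, θ i ^ 2) ^ 2 * d * evenPowSum 2 x := by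
  have hsq : evenPowSum 1 x ^ 2 ≤ d * evenPowSum 2 x := by
    have hfour : evenPowSum 2 x = ∑ i, ((x i : ℝ) ^ 2) ^ 2 :=
      Finset.sum_congr rfl fun i _ => pow_mul _ 2 2
    simpa [hfour, evenPowSum_one, sqNorm] using
      sq_sum_le_card_mul_sum_sq (s := Finset.univ) (f := fun i : Fin d => (x i : ℝ) ^ 2)
  calc pairing θ x ^ 4 = (pairing θ x ^ 2) ^ 2 := by ring
    _ ≤ ((∑ i, θ i ^ 2) * evenPowSum 1 x) ^ 2 := by gcongr; exact pairing_sq_le θ x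
    _ = (∑ i, θ i ^ 2) ^ 2 * evenPowSum 1 x ^ 2 := mul_pow ..
    _ ≤ (∑ i, θ i ^ 2) ^ 2 * (d * evenPowSum 2 x) := by gcongr
    _ = _ := (mul_assoc ..).symm

variable {κ : ℕ → ℝ} {Q : ℕ} {r : ℝ} {f : IntLattice d → ℝ≥0∞}

theorem IsWalkStep.mass_ne_top (hf : IsWalkStep κ Q r f) : mass f ≠ ⊤ :=
  hf.mass_eq_one ▸ ENNReal.one_ne_top

theorem IsWalkStep.moment_ne_top (hf : IsWalkStep κ Q r f) {q : ℕ} (hq : q ≤ Q) : moment q f ≠ ⊤ :=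
  ne_top_of_le_ne_top ENNReal.ofReal_ne_top (hf.moment_le q hq)

theorem IsWalkStep.hasSum_toReal (hf : IsWalkStep κ Q r f) : HasSum (fun x => (f x).toReal) 1 := by
  convert (ENNReal.summable_toReal hf.mass_ne_top).hasSum using 1
  rw [← ENNReal.tsum_toReal_eq (ENNReal.ne_top_of_tsum_ne_top hf.mass_ne_top)]
  exact (congrArg ENNReal.toReal hf.mass_eq_one).symm

theorem IsWalkStep.hasSum_mul_pairing_sq (hf : IsWalkStep κ Q r f) (θ : Fin d → ℝ) :
    HasSum (fun x => (f x).toReal * pairing θ x ^ 2) ((∑ i, θ i ^ 2) * (r ^ 2 / d)) := by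
  have hsum := hf.symm.hasSum_mul_pairing_sq (hf.moment_one ▸ ENNReal.ofReal_ne_top) θ
  rwa [hf.moment_one, ENNReal.toReal_ofReal (sq_nonneg r)] at hsum

theorem IsWalkStep.hasSum_mul_cos (hf : IsWalkStep κ Q r f) (θ : Fin d → ℝ) :
    HasSum (fun x => (f x).toReal * Real.cos (pairing θ x))
      (∑' x, (f x).toReal * Real.cos (pairing θ x)) := by
  refine (hf.hasSum_toReal.summable.of_norm_bounded fun x => ?_).hasSum
  rw [norm_mul, Real.norm_of_nonneg ENNReal.toReal_nonneg]
  exact mul_le_of_le_one_right ENNReal.toReal_nonneg (Real.abs_cos_le_one _)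

theorem IsWalkStep.tsum_mul_cos_nonneg (hf : IsWalkStep κ Q r f) {θ : Fin d → ℝ}
    (hθ : (∑ i, θ i ^ 2) * (r ^ 2 / d) ≤ 2) :
    0 ≤ ∑' x, (f x).toReal * Real.cos (pairing θ x) := by
  have hle := hasSum_le (fun x => ?_)
    (hf.hasSum_toReal.sub ((hf.hasSum_mul_pairing_sq θ).div_const 2)) (hf.hasSum_mul_cos θ)
  · linarith
  · rw [mul_div_assoc, ← mul_one_sub]
    exact mul_le_mul_of_nonneg_left Real.one_sub_sq_div_two_le_cos ENNReal.toReal_nonneg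

theorem IsWalkStep.tsum_mul_cos_le (hf : IsWalkStep κ Q r f) (hQ : 2 ≤ Q) (hκ : 0 ≤ κ 2)
    (θ : Fin d → ℝ) :
    ∑' x, (f x).toReal * Real.cos (pairing θ x) ≤ 1 - (∑ i, θ i ^ 2) * (r ^ 2 / d) / 2 +
      (∑ i, θ i ^ 2) ^ 2 * d * (κ 2 * r ^ (2 * 2)) / 2 := by
  have hmom : (moment 2 f).toReal ≤ κ 2 * r ^ (2 * 2) :=
    ENNReal.toReal_le_of_le_ofReal (mul_nonneg hκ ((even_two_mul 2).pow_nonneg r))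
      (hf.moment_le 2 hQ)
  have hle := hasSum_le (fun x => ?_) (hf.hasSum_mul_cos θ)
    ((hf.hasSum_toReal.sub ((hf.hasSum_mul_pairing_sq θ).div_const 2)).add
      (((hasSum_moment (hf.moment_ne_top hQ)).mul_left ((∑ i, θ i ^ 2) ^ 2 * d)).div_const 2))
  · refine hle.trans ?_
    gcongr
  · have hcos := (cos_le_one_sub_sq_div_two_add_pow_four_div_two (pairing θ x)).trans
      (add_le_add_right (div_le_div_of_nonneg_right (pairing_pow_four_le θ x) zero_le_two) _)
    exact (mul_le_mul_of_nonneg_left hcos ENNReal.toReal_nonneg).trans_eq (by ring)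

theorem IsWalkStep.norm_charFn_le (hd : 0 < d) (hf : IsWalkStep κ Q r f) (hQ : 2 ≤ Q)
    (hκ : 1 ≤ κ 2) {θ : Fin d → ℝ} (hθ : (∑ i, θ i ^ 2) * r ^ 2 ≤ 1 / (2 * d ^ 2 * κ 2)) :
    ‖charFn f θ‖ ≤ Real.exp (-((∑ i, θ i ^ 2) * r ^ 2 / (4 * d))) := by
  have hd1 : (1 : ℝ) ≤ d := by exact_mod_cast hd
  set T := ∑ i, θ i ^ 2
  set S := T * r ^ 2 with hS
  have hS0 : 0 ≤ S := mul_nonneg (Finset.sum_nonneg fun i _ => sq_nonneg _) (sq_nonneg r)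
  have hSκ : S * (d ^ 2 * κ 2) ≤ 1 / 2 := by
    rw [le_div_iff₀ (by positivity)] at hθ
    linarith
  have hdκ : 1 ≤ (d : ℝ) ^ 2 * κ 2 := one_le_mul_of_one_le_of_one_le (one_le_pow₀ hd1) hκ
  have hS1 : S ≤ 1 := by linarith [le_mul_of_one_le_right hS0 hdκ]
  have hvar : T * (r ^ 2 / d) = S / d := by rw [hS, mul_div_assoc]
  have hnonneg := hf.tsum_mul_cos_nonneg (θ := θ) <| by
    rw [hvar]
    exact (div_le_self hS0 hd1).trans (by linarith)
  rw [charFn_eq_tsum_cos hf.mass_ne_top hf.symm.even, Complex.norm_real,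
    Real.norm_of_nonneg hnonneg]
  have hfour : T ^ 2 * d * (κ 2 * r ^ (2 * 2)) / 2 ≤ S / (4 * d) := by
    rw [le_div_iff₀ (by positivity)]
    calc T ^ 2 * d * (κ 2 * r ^ (2 * 2)) / 2 * (4 * d) = 2 * S * (S * (d ^ 2 * κ 2)) := by
          rw [hS]; ring
      _ ≤ 2 * S * (1 / 2) := by gcongr
      _ = S := by ring
  calc ∑' x, (f x).toReal * Real.cos (pairing θ x)
      ≤ 1 - S / d / 2 + T ^ 2 * d * (κ 2 * r ^ (2 * 2)) / 2 :=
        hvar ▸ hf.tsum_mul_cos_le hQ (by linarith) θ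
    _ ≤ 1 - S / d / 2 + S / (4 * d) := by gcongr
    _ = -(S / (4 * d)) + 1 := by field_simp; ring
    _ ≤ _ := Real.add_one_le_exp _

end CharacteristicFunction

section AntiConcentration

variable {d : ℕ}

theorem exp_neg_sq_div_sq_le {s : ℝ} (hs : 0 < s) (u : ℝ) :
    Real.exp (-(u ^ 2 / s ^ 2)) ≤ 2 * ((1 + |u| / s) ^ 2)⁻¹ := by
  have hexp : 1 + u ^ 2 / s ^ 2 ≤ Real.exp (u ^ 2 / s ^ 2) := by
    linarith [Real.add_one_le_exp (u ^ 2 / s ^ 2)]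
  have hsq : (1 + |u| / s) ^ 2 ≤ 2 * (1 + u ^ 2 / s ^ 2) := by
    have hdiv : u ^ 2 / s ^ 2 = (|u| / s) ^ 2 := by rw [div_pow, sq_abs]
    rw [hdiv]
    linarith [sq_nonneg (1 - |u| / s)]
  rw [Real.exp_neg, ← div_eq_mul_inv, inv_eq_one_div,
    div_le_div_iff₀ (by positivity) (by positivity)]
  linarith

theorem sum_exp_neg_sub_sq_div_le {s : ℝ} (hs : 1 ≤ s) {m : ℕ} (a : Fin m) :
    ∑ b : Fin m, Real.exp (-(((b : ℝ) - (a : ℝ)) ^ 2 / s ^ 2)) ≤ 8 * s := by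
  have hs0 : 0 < s := by linarith
  have hsum : ∑ b : Fin m, ((1 + |(b : ℝ) - (a : ℝ)| / s) ^ 2)⁻¹ ≤ 4 * s := by
    refine (ENNReal.ofReal_le_ofReal_iff (by positivity)).1 (le_trans ?_ (tsum_int_inv_sq_le hs))
    rw [ENNReal.ofReal_sum_of_nonneg fun i _ => by positivity,
      ← tsum_fintype (L := .unconditional _)]
    have hinj : Function.Injective fun b : Fin m => ((b : ℤ) - (a : ℤ)) := fun b b' h => by
      simpa [Fin.val_inj] using h
    simpa using ENNReal.tsum_comp_le_tsum_of_injective hinj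
      fun n : ℤ => ENNReal.ofReal (((1 + |(n : ℝ)| / s) ^ 2)⁻¹)
  calc _ ≤ ∑ b : Fin m, 2 * ((1 + |(b : ℝ) - (a : ℝ)| / s) ^ 2)⁻¹ :=
        Finset.sum_le_sum fun b _ => exp_neg_sq_div_sq_le hs0 _
    _ ≤ _ := by rw [← Finset.mul_sum]; linarith

theorem sum_sum_exp_neg_sub_sq_div_le {s : ℝ} (hs : 1 ≤ s) (m : ℕ) :
    ∑ j : Fin d → Fin m, ∑ l : Fin d → Fin m,
      Real.exp (-((∑ i, ((l i : ℝ) - (j i : ℝ)) ^ 2) / s ^ 2)) ≤ (m : ℝ) ^ d * (8 * s) ^ d := by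
  have hrow (j : Fin d → Fin m) : ∑ l : Fin d → Fin m,
      Real.exp (-((∑ i, ((l i : ℝ) - (j i : ℝ)) ^ 2) / s ^ 2)) ≤ (8 * s) ^ d := by
    have hprod := Finset.prod_univ_sum (fun _ : Fin d => (Finset.univ : Finset (Fin m)))
      fun i b => Real.exp (-(((b : ℝ) - (j i : ℝ)) ^ 2 / s ^ 2))
    rw [Fintype.piFinset_univ] at hprod
    simp_rw [Finset.sum_div, ← Finset.sum_neg_distrib, Real.exp_sum, ← hprod]
    simpa using Finset.prod_le_prod
      (fun i _ => Finset.sum_nonneg fun b _ => (Real.exp_pos _).le)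
      fun i (_ : i ∈ Finset.univ) => sum_exp_neg_sub_sq_div_le hs (j i)
  simpa using Finset.sum_le_sum fun j (_ : j ∈ Finset.univ) => hrow j

/-- The frequencies `a j`, with `j` running over a cube of side `m`; summing plane waves over such
a grid produces a function concentrated on a box of side of order `1 / (a m)`. -/
def frequencyGrid {m : ℕ} (a : ℝ) (j : Fin d → Fin m) : Fin d → ℝ := fun i => a * (j i : ℝ)

theorem abs_pairing_frequencyGrid_le {m : ℕ} {a r : ℝ} (ha : 0 ≤ a) (j : Fin d → Fin m)
    {w : IntLattice d} (hw : supNorm w ≤ r) :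
    |pairing (frequencyGrid a j) w| ≤ d * (a * m * r) := by
  have hterm (i : Fin d) : |frequencyGrid a j i * w i| ≤ a * m * r := by
    have hj : (j i : ℝ) ≤ m := by exact_mod_cast (j i).2.le
    have hwi := (abs_le_supNorm w i).trans hw
    rw [frequencyGrid, abs_mul, abs_of_nonneg (by positivity)]
    gcongr
  rw [pairing_apply]
  exact (Finset.abs_sum_le_sum_abs _ _).trans
    (by simpa using Finset.sum_le_sum fun i (_ : i ∈ Finset.univ) => hterm i)

theorem pow_div_two_le_norm_sum_planeWave {m : ℕ} {a r : ℝ} (ha : 0 ≤ a)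
    (har : d * (a * m * r) ≤ 1) {w : IntLattice d} (hw : supNorm w ≤ r) :
    (m : ℝ) ^ d / 2 ≤ ‖∑ j : Fin d → Fin m, planeWave (frequencyGrid a j) w‖ := by
  have hterm (j : Fin d → Fin m) : 1 / 2 ≤ (planeWave (frequencyGrid a j) w).re := by
    rw [planeWave, Complex.exp_ofReal_mul_I_re]
    have hsq : pairing (frequencyGrid a j) w ^ 2 ≤ 1 :=
      (sq_le_one_iff_abs_le_one _).2 ((abs_pairing_frequencyGrid_le ha j hw).trans har)
    linarith [Real.one_sub_sq_div_two_le_cos (x := pairing (frequencyGrid a j) w)]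
  refine le_trans ?_ (Complex.re_le_norm _)
  rw [Complex.re_sum]
  simpa [div_eq_mul_inv] using Finset.sum_le_sum fun j (_ : j ∈ Finset.univ) => hterm j

theorem smul_boxIndicator_le_norm_sum_planeWave_sq {m : ℕ} {a r : ℝ} (ha : 0 ≤ a)
    (har : d * (a * m * r) ≤ 1) :
    ENNReal.ofReal (((m : ℝ) ^ d / 2) ^ 2) • boxIndicator r ≤ fun w : IntLattice d =>
      ENNReal.ofReal (‖∑ j : Fin d → Fin m, planeWave (frequencyGrid a j) w‖ ^ 2) := by
  intro w
  by_cases hw : supNorm w ≤ r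
  · rw [Pi.smul_apply, boxIndicator, Set.indicator_of_mem (by exact hw), Pi.one_apply,
      smul_eq_mul, mul_one]
    exact ENNReal.ofReal_le_ofReal
      (pow_le_pow_left₀ (by positivity) (pow_div_two_le_norm_sum_planeWave ha har hw) 2)
  · simp [boxIndicator, hw]

theorem sum_sub_sq_le {m : ℕ} (j l : Fin d → Fin m) :
    ∑ i, ((l i : ℝ) - (j i : ℝ)) ^ 2 ≤ d * m ^ 2 := by
  have hterm (i : Fin d) : ((l i : ℝ) - (j i : ℝ)) ^ 2 ≤ m ^ 2 := by
    have hl : (l i : ℝ) ≤ m := by exact_mod_cast (l i).2.le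
    have hj : (j i : ℝ) ≤ m := by exact_mod_cast (j i).2.le
    have := (l i).val.cast_nonneg (α := ℝ)
    have := (j i).val.cast_nonneg (α := ℝ)
    exact sq_le_sq' (by linarith) (by linarith)
  simpa using Finset.sum_le_sum fun i (_ : i ∈ Finset.univ) => hterm i

variable {κ : ℕ → ℝ} {Q : ℕ} {r : ℝ} {f : IntLattice d → ℝ≥0∞}

/-- With `c = 1 / (2 d² κ₂)`, the grid spacing `c / (r m)` keeps all frequency differences in the
range where `IsWalkStep.norm_charFn_le` applies, and `4 d³ κ₂ = 2 d / c`. -/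
theorem IsWalkStep.norm_charFn_convPow_frequencyGrid_sub_le (hd : 0 < d) (hr : 0 < r)
    (hf : IsWalkStep κ Q r f) (hQ : 2 ≤ Q) (hκ : 1 ≤ κ 2) {m k : ℕ} (hm : 0 < m)
    (hmk : m ^ 2 ≤ k) (j l : Fin d → Fin m) :
    ‖charFn (convPow f k) (frequencyGrid (1 / (2 * d ^ 2 * κ 2) / (r * m)) l -
        frequencyGrid (1 / (2 * d ^ 2 * κ 2) / (r * m)) j)‖ ≤
      Real.exp (-((∑ i, ((l i : ℝ) - (j i : ℝ)) ^ 2) / (4 * d ^ 3 * κ 2) ^ 2)) := by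
  have hd1 : (1 : ℝ) ≤ d := by exact_mod_cast hd
  have : (0 : ℝ) < m := by exact_mod_cast hm
  have hmk' : (m : ℝ) ^ 2 ≤ k := by exact_mod_cast hmk
  set c := 1 / (2 * d ^ 2 * κ 2) with hc
  have hc0 : 0 < c := by positivity
  set S := ∑ i, ((l i : ℝ) - (j i : ℝ)) ^ 2 with hS
  have : 0 ≤ S := Finset.sum_nonneg fun i _ => sq_nonneg _
  have hT : (∑ i, (frequencyGrid (c / (r * m)) l - frequencyGrid (c / (r * m)) j) i ^ 2) * r ^ 2 =
      c ^ 2 / m ^ 2 * S := by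
    rw [Finset.sum_mul, hS, Finset.mul_sum]
    refine Finset.sum_congr rfl fun i _ => ?_
    simp only [frequencyGrid, Pi.sub_apply]
    field_simp
  have hdc : d * c ≤ 1 := by
    rw [hc, mul_one_div, div_le_one (by positivity)]
    nlinarith [one_le_mul_of_one_le_of_one_le hd1 hκ]
  have hsmall : c ^ 2 / m ^ 2 * S ≤ c := by
    calc c ^ 2 / m ^ 2 * S ≤ c ^ 2 / m ^ 2 * (d * m ^ 2) := by gcongr; exact sum_sub_sq_le j l
      _ = d * c * c := by field_simp
      _ ≤ c := mul_le_of_le_one_left hc0.le hdc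
  have hbound := hf.norm_charFn_le hd hQ hκ (hT.trans_le hsmall)
  rw [hT] at hbound
  rw [charFn_convPow hf.mass_ne_top, norm_pow]
  refine (pow_le_pow_left₀ (norm_nonneg _) hbound k).trans ?_
  rw [← Real.exp_nat_mul, mul_neg, Real.exp_le_exp, neg_le_neg_iff]
  calc S / (4 * d ^ 3 * κ 2) ^ 2 = c ^ 2 * S / (4 * d * d) := by rw [hc]; field_simp; norm_num
    _ ≤ c ^ 2 * S / (4 * d) := by
      gcongr
      exact le_mul_of_one_le_right (by positivity) hd1
    _ = m ^ 2 * (c ^ 2 / m ^ 2 * S / (4 * d)) := by field_simp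
    _ ≤ k * (c ^ 2 / m ^ 2 * S / (4 * d)) := by gcongr

theorem IsWalkStep.conv_convPow_boxIndicator_le_of_sq_le (hd : 0 < d) (hr : 0 < r)
    (hf : IsWalkStep κ Q r f) (hQ : 2 ≤ Q) (hκ : 1 ≤ κ 2) {m k : ℕ} (hm : 0 < m)
    (hmk : m ^ 2 ≤ k) (z : IntLattice d) :
    conv (convPow f k) (boxIndicator r) z ≤
      ENNReal.ofReal (4 * (8 * (4 * d ^ 3 * κ 2) / m) ^ d) := by
  have hd1 : (1 : ℝ) ≤ d := by exact_mod_cast hd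
  have : (0 : ℝ) < m := by exact_mod_cast hm
  set a := 1 / (2 * d ^ 2 * κ 2) / (r * m) with ha
  have ha0 : 0 ≤ a := by positivity
  have har : d * (a * m * r) ≤ 1 := by
    have hdκ := one_le_mul_of_one_le_of_one_le hd1 hκ
    rw [ha, show d * (1 / (2 * d ^ 2 * κ 2) / (r * m) * m * r) = 1 / (2 * (d * κ 2)) by field_simp,
      div_le_one (by positivity)]
    linarith
  have hs : 1 ≤ 4 * (d : ℝ) ^ 3 * κ 2 := by
    linarith [one_le_mul_of_one_le_of_one_le (one_le_pow₀ hd1 (n := 3)) hκ]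
  have hmass : mass (convPow f k) ≠ ⊤ := hf.mass_convPow k ▸ ENNReal.one_ne_top
  have hwaves := (conv_norm_sum_planeWave_sq_le (fun j : Fin d → Fin m => frequencyGrid a j)
    hmass z).trans <| ENNReal.ofReal_le_ofReal <|
      (Finset.sum_le_sum fun j _ => Finset.sum_le_sum fun l _ =>
        hf.norm_charFn_convPow_frequencyGrid_sub_le hd hr hQ hκ hm hmk j l).trans
      (sum_sum_exp_neg_sub_sq_div_le hs m)
  have hpos : 0 < ((m : ℝ) ^ d / 2) ^ 2 := by positivity
  rw [← ENNReal.mul_le_mul_iff_right (ENNReal.ofReal_ne_zero_iff.2 hpos) ENNReal.ofReal_ne_top]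
  calc ENNReal.ofReal (((m : ℝ) ^ d / 2) ^ 2) * conv (convPow f k) (boxIndicator r) z
      = conv (convPow f k) (ENNReal.ofReal (((m : ℝ) ^ d / 2) ^ 2) • boxIndicator r) z := by
        rw [conv_smul]; rfl
    _ ≤ _ := (conv_mono le_rfl (smul_boxIndicator_le_norm_sum_planeWave_sq ha0 har) z).trans hwaves
    _ = _ := by
      rw [← ENNReal.ofReal_mul hpos.le, div_pow (8 * (4 * (d : ℝ) ^ 3 * κ 2))]
      congr 1
      field_simp
      ring

/-- The constant in the anti-concentration bound for sums of independent steps. -/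
def antiConcConst (d : ℕ) (κ₂ : ℝ) : ℝ := 4 * (16 * (4 * d ^ 3 * κ₂)) ^ d

theorem IsWalkStep.conv_convPow_boxIndicator_le (hd : 0 < d) (hr : 0 < r) (hf : IsWalkStep κ Q r f)
    (hQ : 2 ≤ Q) (hκ : 1 ≤ κ 2) (k : ℕ) (z : IntLattice d) :
    conv (convPow f k) (boxIndicator r) z ≤
      ENNReal.ofReal (antiConcConst d (κ 2) / √(k + 1) ^ d) := by
  have hd1 : (1 : ℝ) ≤ d := by exact_mod_cast hd
  rcases Nat.eq_zero_or_pos k with rfl | hk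
  · have hs := one_le_mul_of_one_le_of_one_le (one_le_pow₀ hd1 (n := 3)) hκ
    have hpow : (1 : ℝ) ≤ (16 * (4 * d ^ 3 * κ 2)) ^ d := one_le_pow₀ (by linarith)
    have hone : 1 ≤ antiConcConst d (κ 2) := by
      unfold antiConcConst
      linarith
    have hbox : boxIndicator r z ≤ 1 := Set.indicator_le_self' (fun _ _ => zero_le) z
    simpa [convPow] using hbox.trans (ENNReal.one_le_ofReal.2 hone)
  set m := Nat.sqrt k
  have hm : 0 < m := Nat.sqrt_pos.2 hk
  have hm1 : (1 : ℝ) ≤ m := by exact_mod_cast hm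
  have hsqrt : √(k + 1) ≤ 2 * m := by
    have hlt : (k : ℝ) + 1 ≤ (m + 1) ^ 2 := by exact_mod_cast Nat.lt_succ_sqrt' k
    exact Real.sqrt_le_iff.2 ⟨by positivity, hlt.trans (by gcongr; linarith)⟩
  refine (hf.conv_convPow_boxIndicator_le_of_sq_le hd hr hQ hκ hm (Nat.sqrt_le' k) z).trans
    (ENNReal.ofReal_le_ofReal ?_)
  rw [antiConcConst, mul_div_assoc 4, ← div_pow]
  gcongr 4 * ?_ ^ d
  rw [div_le_div_iff₀ (by positivity) (by positivity)]
  nlinarith [show (0 : ℝ) < 4 * d ^ 3 * κ 2 by positivity]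

end AntiConcentration

section Decay

variable {d : ℕ} {κ : ℕ → ℝ} {r : ℝ} {f : IntLattice d → ℝ≥0∞}

/-- The weight `⟨x⟩_s^{4d}`. -/
def bracketWeight (s : ℝ) (x : IntLattice d) : ℝ≥0∞ := ENNReal.ofReal (bracket s x ^ (4 * d))

theorem add_pow_le_two_pow_mul {a b : ℝ} (ha : 0 ≤ a) (hb : 0 ≤ b) (n : ℕ) :
    (a + b) ^ n ≤ 2 ^ n * (a ^ n + b ^ n) := by
  have hmax : a + b ≤ 2 * max a b := by linarith [le_max_left a b, le_max_right a b]
  calc (a + b) ^ n ≤ (2 * max a b) ^ n := by gcongr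
    _ = 2 ^ n * max a b ^ n := mul_pow ..
    _ ≤ 2 ^ n * (a ^ n + b ^ n) := by
      gcongr
      rcases max_choice a b with h | h <;> rw [h]
      exacts [le_add_of_nonneg_right (pow_nonneg hb n), le_add_of_nonneg_left (pow_nonneg ha n)]

theorem bracketWeight_le_moment_weight (hd : 0 < d) {s : ℝ} (hs : 0 < s) (x : IntLattice d) :
    bracketWeight s x ≤ ENNReal.ofReal (2 ^ (4 * d)) *
      (1 + ENNReal.ofReal ((s ^ (4 * d))⁻¹) * ENNReal.ofReal (evenPowSum (2 * d) x)) := by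
  have hx := supNorm_nonneg x
  have hpow := supNorm_pow_le_evenPowSum hd (2 * d) x
  have heven := evenPowSum_nonneg (2 * d) x
  rw [← ENNReal.ofReal_one, ← ENNReal.ofReal_mul (by positivity),
    ← ENNReal.ofReal_add zero_le_one (by positivity), ← ENNReal.ofReal_mul (by positivity)]
  refine ENNReal.ofReal_le_ofReal
    ((add_pow_le_two_pow_mul zero_le_one (div_nonneg hx hs.le) (4 * d)).trans ?_)
  rw [one_pow, div_pow, div_eq_inv_mul]
  gcongr
  rwa [← mul_assoc] at hpow

theorem bracketWeight_le_add {s : ℝ} (hs : 0 < s) {x y z : IntLattice d}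
    (hxyz : supNorm (x - y - z) ≤ s) :
    bracketWeight s x ≤ ENNReal.ofReal (2 ^ (4 * d)) * (bracketWeight s y + bracketWeight s z) := by
  have hy := bracket_pos hs.le y
  have hz := bracket_pos hs.le z
  have hx := bracket_pos hs.le x
  have htri : supNorm x ≤ s + supNorm z + supNorm y := by
    have hsum := (supNorm_add_le (x - y - z + z) y).trans
      (add_le_add_left ((supNorm_add_le (x - y - z) z).trans (add_le_add_left hxyz _)) _)
    rwa [sub_add_cancel, sub_add_cancel] at hsum
  have hbracket : bracket s x ≤ bracket s y + bracket s z := by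
    have hdiv := div_le_div_of_nonneg_right htri hs.le
    rw [add_div, add_div, div_self hs.ne'] at hdiv
    unfold bracket
    linarith
  unfold bracketWeight
  rw [← ENNReal.ofReal_add (by positivity) (by positivity), ← ENNReal.ofReal_mul (by positivity)]
  exact ENNReal.ofReal_le_ofReal
    ((pow_le_pow_left₀ hx.le hbracket _).trans (add_pow_le_two_pow_mul hy.le hz.le _))

theorem bracketWeight_mul_conv_conv_le {s : ℝ} (hs : 0 < s) (hrs : r ≤ s)
    (g h : IntLattice d → ℝ≥0∞) (x : IntLattice d) :
    bracketWeight s x * conv g (conv h (boxIndicator r)) x ≤ ENNReal.ofReal (2 ^ (4 * d)) *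
      (conv (bracketWeight s * g) (conv h (boxIndicator r)) x +
        conv (bracketWeight s * h) (conv g (boxIndicator r)) x) := by
  rw [← conv_assoc (bracketWeight s * h), conv_comm _ g, conv_assoc]
  unfold conv
  rw [← ENNReal.tsum_add, ← ENNReal.tsum_mul_left, ← ENNReal.tsum_mul_left]
  refine ENNReal.tsum_le_tsum fun y => ?_
  simp only [← ENNReal.tsum_mul_left, ← ENNReal.tsum_add]
  refine ENNReal.tsum_le_tsum fun z => ?_
  by_cases hz : supNorm (x - y - z) ≤ r
  · refine (mul_le_mul_left (bracketWeight_le_add hs (hz.trans hrs)) _).trans_eq ?_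
    simp only [Pi.mul_apply]
    ring
  · simp [boxIndicator, hz]

theorem IsWalkStep.mass_bracketWeight_mul_convPow_le (hd : 0 < d) (hκ : ∀ q, 0 ≤ κ q) (hr : 0 < r)
    (hf : IsWalkStep κ (2 * d) r f) {j k : ℕ} (hjk : j ≤ k) :
    mass (bracketWeight (√(k + 1) * r) * convPow f j) ≤
      ENNReal.ofReal (2 ^ (4 * d) * (1 + convPowMomentConst d κ (2 * d))) := by
  have hK := convPowMomentConst_nonneg (d := d) hκ (2 * d)
  set s := √(k + 1) * r with hs
  have hs0 : 0 < s := by positivity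
  have hspow : s ^ (4 * d) = (k + 1) ^ (2 * d) * r ^ (2 * (2 * d)) := by
    rw [hs, mul_pow, show 4 * d = 2 * (2 * d) by ring, pow_mul √(k + 1 : ℝ),
      Real.sq_sqrt (by positivity)]
  have hmoment : ENNReal.ofReal ((s ^ (4 * d))⁻¹) * moment (2 * d) (convPow f j) ≤
      ENNReal.ofReal (convPowMomentConst d κ (2 * d)) := by
    refine (mul_le_mul_right (hf.moment_convPow_le hκ hr.le le_rfl j) _).trans ?_
    rw [← ENNReal.ofReal_mul (by positivity)]
    refine ENNReal.ofReal_le_ofReal ?_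
    have : (j : ℝ) ≤ k + 1 := by exact_mod_cast hjk.trans k.le_succ
    rw [inv_mul_le_iff₀ (by positivity), hspow]
    calc convPowMomentConst d κ (2 * d) * j ^ (2 * d) * r ^ (2 * (2 * d))
        ≤ convPowMomentConst d κ (2 * d) * (k + 1) ^ (2 * d) * r ^ (2 * (2 * d)) := by gcongr
      _ = _ := by ring
  calc mass (bracketWeight s * convPow f j)
      ≤ mass (ENNReal.ofReal (2 ^ (4 * d)) • (convPow f j + ENNReal.ofReal ((s ^ (4 * d))⁻¹) •
          fun y => ENNReal.ofReal (evenPowSum (2 * d) y) * convPow f j y)) := by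
        refine mass_mono fun y =>
          (mul_le_mul_left (bracketWeight_le_moment_weight hd hs0 y) (convPow f j y)).trans_eq ?_
        simp only [Pi.smul_apply, Pi.add_apply, smul_eq_mul]
        ring
    _ = ENNReal.ofReal (2 ^ (4 * d)) *
          (1 + ENNReal.ofReal ((s ^ (4 * d))⁻¹) * moment (2 * d) (convPow f j)) := by
        rw [mass_smul, mass_add, mass_smul, hf.mass_convPow]
        rfl
    _ ≤ _ := by
        rw [ENNReal.ofReal_mul (by positivity), ENNReal.ofReal_add zero_le_one hK,
          ENNReal.ofReal_one]
        gcongr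

/-- The constant in the off-diagonal decay bound for sums of independent steps. -/
def decayConst (d : ℕ) (κ : ℕ → ℝ) : ℝ :=
  2 ^ (4 * d) * (2 * (2 ^ (4 * d) * (1 + convPowMomentConst d κ (2 * d)) *
    (antiConcConst d (κ 2) * 2 ^ d)))

theorem antiConcConst_nonneg {κ₂ : ℝ} (hκ : 0 ≤ κ₂) : 0 ≤ antiConcConst d κ₂ := by
  unfold antiConcConst
  positivity

theorem decayConst_nonneg (hκ : ∀ q, 0 ≤ κ q) : 0 ≤ decayConst d κ := by
  have := convPowMomentConst_nonneg (d := d) hκ (2 * d)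
  have := antiConcConst_nonneg (d := d) (hκ 2)
  unfold decayConst
  positivity

theorem IsWalkStep.conv_convPow_boxIndicator_le_of_half_le (hd : 0 < d) (hκ : 1 ≤ κ 2) (hr : 0 < r)
    (hf : IsWalkStep κ (2 * d) r f) {j k : ℕ} (hjk : k ≤ 2 * j + 1) (w : IntLattice d) :
    conv (convPow f j) (boxIndicator r) w ≤
      ENNReal.ofReal (antiConcConst d (κ 2) * 2 ^ d / √(k + 1) ^ d) := by
  refine (hf.conv_convPow_boxIndicator_le hd hr (by omega) hκ j w).trans
    (ENNReal.ofReal_le_ofReal ?_)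
  have hconst := antiConcConst_nonneg (d := d) (zero_le_one.trans hκ)
  have hsqrt : √(k + 1) ≤ 2 * √(j + 1) := by
    have : (k : ℝ) ≤ 2 * j + 1 := by exact_mod_cast hjk
    refine Real.sqrt_le_iff.2 ⟨by positivity, ?_⟩
    rw [mul_pow, Real.sq_sqrt (by positivity)]
    linarith
  rw [div_le_div_iff₀ (by positivity) (by positivity), mul_assoc, ← mul_pow]
  gcongr

theorem IsWalkStep.conv_bracketWeight_mul_convPow_le (hd : 0 < d) (hκ : ∀ q, 1 ≤ κ q) (hr : 0 < r)
    (hf : IsWalkStep κ (2 * d) r f) {i j k : ℕ} (hi : i ≤ k) (hj : k ≤ 2 * j + 1)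
    (x : IntLattice d) :
    conv (bracketWeight (√(k + 1) * r) * convPow f i) (conv (convPow f j) (boxIndicator r)) x ≤
      ENNReal.ofReal (2 ^ (4 * d) * (1 + convPowMomentConst d κ (2 * d)) *
        (antiConcConst d (κ 2) * 2 ^ d / √(k + 1) ^ d)) := by
  have hκ0 (q : ℕ) : 0 ≤ κ q := zero_le_one.trans (hκ q)
  have hmoment := convPowMomentConst_nonneg (d := d) hκ0 (2 * d)
  rw [ENNReal.ofReal_mul (by positivity)]
  exact (conv_le_mass_mul _
    (hf.conv_convPow_boxIndicator_le_of_half_le hd (hκ 2) hr hj) x).trans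
      (mul_le_mul_left (hf.mass_bracketWeight_mul_convPow_le hd hκ0 hr hi) _)

/-- One of the two halves of a `k`-step walk ending at distance `|x|` travels at least half of that
distance; weighting that half costs a moment, and the other half is anti-concentrated. -/
theorem IsWalkStep.bracketWeight_mul_conv_convPow_boxIndicator_le (hd : 0 < d) (hκ : ∀ q, 1 ≤ κ q)
    (hr : 0 < r) (hf : IsWalkStep κ (2 * d) r f) (k : ℕ) (x : IntLattice d) :
    bracketWeight (√(k + 1) * r) x * conv (convPow f k) (boxIndicator r) x ≤
      ENNReal.ofReal (decayConst d κ / √(k + 1) ^ d) := by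
  have hκ0 (q : ℕ) : 0 ≤ κ q := zero_le_one.trans (hκ q)
  have := antiConcConst_nonneg (d := d) (hκ0 2)
  have := convPowMomentConst_nonneg (d := d) hκ0 (2 * d)
  set s := √(k + 1) * r
  have hs0 : 0 < s := by positivity
  have hrs : r ≤ s := le_mul_of_one_le_left hr.le
    (Real.one_le_sqrt.2 (le_add_of_nonneg_left k.cast_nonneg))
  obtain ⟨i, j, hij, hi, hj⟩ : ∃ i j, k = i + j ∧ k ≤ 2 * i + 1 ∧ k ≤ 2 * j + 1 :=
    ⟨k / 2, k - k / 2, by omega, by omega, by omega⟩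
  calc bracketWeight s x * conv (convPow f k) (boxIndicator r) x
      = bracketWeight s x * conv (convPow f i) (conv (convPow f j) (boxIndicator r)) x := by
        conv_lhs => rw [hij, convPow_add, conv_assoc]
    _ ≤ _ := bracketWeight_mul_conv_conv_le hs0 hrs _ _ x
    _ ≤ _ := mul_le_mul_right (add_le_add
        (hf.conv_bracketWeight_mul_convPow_le hd hκ hr (i := i) (by omega) hj x)
        (hf.conv_bracketWeight_mul_convPow_le hd hκ hr (i := j) (by omega) hi x)) _
    _ = _ := by
      rw [← ENNReal.ofReal_add (by positivity) (by positivity),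
        ← ENNReal.ofReal_mul (by positivity)]
      congr 1
      unfold decayConst
      ring

theorem IsWalkStep.conv_convPow_boxIndicator_le_decay (hd : 0 < d) (hκ : ∀ q, 1 ≤ κ q) (hr : 0 < r)
    (hf : IsWalkStep κ (2 * d) r f) (k : ℕ) (x : IntLattice d) :
    conv (convPow f k) (boxIndicator r) x ≤ ENNReal.ofReal
      (decayConst d κ / √(k + 1) ^ d * (bracket (√(k + 1) * r) x ^ (4 * d))⁻¹) := by
  have hpos : 0 < bracket (√(k + 1) * r) x ^ (4 * d) := pow_pos (bracket_pos (by positivity) x) _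
  rw [← ENNReal.mul_le_mul_iff_right (ENNReal.ofReal_ne_zero_iff.2 hpos) ENNReal.ofReal_ne_top,
    ← ENNReal.ofReal_mul hpos.le, mul_left_comm, mul_inv_cancel₀ hpos.ne', mul_one]
  exact hf.bracketWeight_mul_conv_convPow_boxIndicator_le hd hκ hr k x

end Decay

open Set Filter Topology

/-- The upper right Dini derivative of `W` at `t` is at most `u`. -/
def RightDerivLE (W : ℝ → ℝ) (u t : ℝ) : Prop :=
  ∀ r > u, ∀ᶠ z in 𝓝[>] t, W z - W t ≤ r * (z - t)

section RightDerivLE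

variable {V W : ℝ → ℝ} {t u v : ℝ}

theorem rightDerivLE_of_tendsto {U : ℝ → ℝ} (hU : Tendsto U (𝓝[>] t) (𝓝 u))
    (h : ∀ᶠ z in 𝓝[>] t, W z - W t ≤ U z * (z - t)) : RightDerivLE W u t := by
  intro r hr
  filter_upwards [h, hU.eventually_lt_const hr, self_mem_nhdsWithin] with z hz hUz htz
  exact hz.trans (mul_le_mul_of_nonneg_right hUz.le (sub_nonneg.2 (le_of_lt htz)))

theorem rightDerivLE_const_mul_id (c t : ℝ) : RightDerivLE (fun z => c * z) c t :=
  rightDerivLE_of_tendsto tendsto_const_nhds (.of_forall fun z => (mul_sub c z t).ge)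

theorem RightDerivLE.add (hV : RightDerivLE V v t) (hW : RightDerivLE W u t) :
    RightDerivLE (fun z => V z + W z) (v + u) t := by
  intro r hr
  filter_upwards [hV (v + (r - (v + u)) / 2) (by linarith),
    hW (u + (r - (v + u)) / 2) (by linarith)] with z hVz hWz
  linarith

theorem RightDerivLE.comp {φ : ℝ → ℝ} {φ' : ℝ} {s : Set ℝ} (hW : RightDerivLE W u t)
    (hlim : Tendsto W (𝓝[>] t) (𝓝 (W t))) (hφ : HasDerivAt φ φ' (W t)) (hs : s ∈ 𝓝 (W t))
    (hmono : MonotoneOn φ s) : RightDerivLE (fun z => φ (W z)) (φ' * u) t := by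
  intro r hr
  have hslope : Tendsto (dslope φ (W t) ∘ W) (𝓝[>] t) (𝓝 φ') := by
    have hcont : ContinuousAt (dslope φ (W t)) (W t) :=
      continuousAt_dslope_same.2 hφ.differentiableAt
    simpa only [dslope_same, hφ.deriv] using hcont.tendsto.comp hlim
  have hnear : ∀ᶠ r' in 𝓝[>] u, φ' * r' < r :=
    ((continuous_const.mul continuous_id).tendsto' u _ rfl).eventually_lt_const hr
      |>.filter_mono nhdsWithin_le_nhds
  obtain ⟨r', hr', hur'⟩ := (hnear.and self_mem_nhdsWithin).exists
  filter_upwards [hW r' hur', hlim.eventually hs, self_mem_nhdsWithin,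
    (hslope.mul_const r').eventually_lt_const hr'] with z hWz hzs htz hzr
  have hslope_nonneg : 0 ≤ dslope φ (W t) (W z) := by
    rcases eq_or_ne (W z) (W t) with heq | hne
    · have hlim_nonneg := ge_of_tendsto (hasDerivAt_iff_tendsto_slope.1 hφ)
        (b := 0) (by
          filter_upwards [nhdsWithin_le_nhds hs, self_mem_nhdsWithin] with y hy _
          exact hmono.slope_nonneg (mem_of_mem_nhds hs) hy)
      rwa [heq, dslope_same, hφ.deriv]
    · rw [dslope_of_ne _ hne]
      exact hmono.slope_nonneg (mem_of_mem_nhds hs) hzs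
  calc φ (W z) - φ (W t) = dslope φ (W t) (W z) * (W z - W t) := by
        rw [mul_comm, ← smul_eq_mul, sub_smul_dslope]
    _ ≤ dslope φ (W t) (W z) * (r' * (z - t)) := by gcongr
    _ = dslope φ (W t) (W z) * r' * (z - t) := by ring
    _ ≤ r * (z - t) := mul_le_mul_of_nonneg_right hzr.le (sub_nonneg.2 (le_of_lt htz))

theorem RightDerivLE.const_mul (hW : RightDerivLE W u t)
    (hlim : Tendsto W (𝓝[>] t) (𝓝 (W t))) {c : ℝ} (hc : 0 ≤ c) :
    RightDerivLE (fun z => c * W z) (c * u) t :=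
  hW.comp hlim (by simpa using (hasDerivAt_id (W t)).const_mul c) univ_mem
    (monotone_mul_left_of_nonneg hc |>.monotoneOn _)

theorem RightDerivLE.log (hW : RightDerivLE W u t) (hlim : Tendsto W (𝓝[>] t) (𝓝 (W t)))
    (hpos : 0 < W t) : RightDerivLE (fun z => Real.log (W z)) (u / W t) t := by
  rw [div_eq_inv_mul]
  exact hW.comp hlim (Real.hasDerivAt_log hpos.ne') (Ioi_mem_nhds hpos)
    Real.strictMonoOn_log.monotoneOn

theorem RightDerivLE.neg_log (hW : RightDerivLE (fun z => -W z) (-u) t)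
    (hlim : Tendsto W (𝓝[>] t) (𝓝 (W t))) (hpos : 0 < W t) :
    RightDerivLE (fun z => -Real.log (W z)) (-(u / W t)) t := by
  have hderiv : HasDerivAt (fun w => -Real.log (-w)) (W t)⁻¹ (-W t) :=
    ((hasDerivAt_neg (-W t)).log (by simpa using hpos.ne')).neg.congr_deriv (by
      rw [neg_neg, neg_div, neg_neg, one_div])
  have hmono : MonotoneOn (fun w => -Real.log (-w)) (Iio 0) := fun a _ b hb hab =>
    neg_le_neg (Real.log_le_log (neg_pos.2 hb) (neg_le_neg hab))
  have hcomp := hW.comp hlim.neg hderiv (Iio_mem_nhds (neg_lt_zero.2 hpos)) hmono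
  simpa only [neg_neg, mul_neg, inv_mul_eq_div] using hcomp

theorem RightDerivLE.inv (hW : RightDerivLE (fun z => -W z) (-u) t)
    (hlim : Tendsto W (𝓝[>] t) (𝓝 (W t))) (hpos : 0 < W t) :
    RightDerivLE (fun z => (W z)⁻¹) (-(u / W t ^ 2)) t := by
  have hderiv : HasDerivAt (fun w => -w⁻¹) (W t ^ 2)⁻¹ (-W t) :=
    (hasDerivAt_inv (neg_ne_zero.2 hpos.ne')).neg.congr_deriv (by rw [neg_sq, neg_neg])
  have hmono : MonotoneOn (fun w : ℝ => -w⁻¹) (Iio 0) := fun a ha b hb hab =>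
    neg_le_neg ((inv_le_inv_of_neg hb ha).2 hab)
  have hcomp := hW.comp hlim.neg hderiv (Iio_mem_nhds (neg_lt_zero.2 hpos)) hmono
  simpa only [inv_neg, neg_neg, mul_neg, inv_mul_eq_div] using hcomp

theorem RightDerivLE.frequently_slope_lt (hW : RightDerivLE W u t) {r : ℝ} (hr : u < r) :
    ∃ᶠ z in 𝓝[>] t, slope W t z < r := by
  refine Eventually.frequently ?_
  filter_upwards [hW ((u + r) / 2) (by linarith), self_mem_nhdsWithin] with z hz htz
  rw [slope_def_field]
  exact ((div_le_iff₀ (sub_pos.2 htz)).2 hz).trans_lt (by linarith)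

variable {a b K : ℝ}

theorem le_left_of_rightDerivLE_zero (hab : a ≤ b) (hW : ContinuousOn W (Icc a b))
    (h : ∀ t ∈ Ico a b, RightDerivLE W 0 t) : W b ≤ W a :=
  image_le_of_liminf_slope_right_le_deriv_boundary (B := fun _ => W a) (B' := fun _ => 0) hW
    le_rfl continuousOn_const (fun t _ => hasDerivWithinAt_const t _ (W a))
    (fun t ht _ hr => (h t ht).frequently_slope_lt hr) (right_mem_Icc.2 hab)

theorem le_of_rightDerivLE_neg {W' : ℝ → ℝ} (hW : ContinuousOn W (Icc a b)) (ha : W a ≤ K)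
    (h : ∀ t ∈ Ico a b, RightDerivLE W (W' t) t) (hneg : ∀ t ∈ Ico a b, W t = K → W' t < 0)
    (ht : t ∈ Icc a b) : W t ≤ K :=
  image_le_of_liminf_slope_right_lt_deriv_boundary' (B := fun _ => K) (B' := fun _ => 0) hW
    (fun s hs _ hr => (h s hs).frequently_slope_lt hr) ha continuousOn_const
    (fun s _ => hasDerivWithinAt_const s _ K) hneg ht

end RightDerivLE

section Icc

variable {β t z C : ℝ} {V W : ℝ → ℝ}

theorem continuousOn_of_monotoneOn_of_le_add_mul (hmono : MonotoneOn W (Icc 0 β))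
    (h : ∀ t z, 0 ≤ t → t ≤ z → z ≤ β → W z ≤ W t + (z - t) * C) :
    ContinuousOn W (Icc 0 β) := by
  refine (LipschitzOnWith.of_dist_le_mul (K := C.toNNReal) ?_).continuousOn
  have hle : ∀ t ∈ Icc 0 β, ∀ z ∈ Icc 0 β, t ≤ z → dist (W t) (W z) ≤ C.toNNReal * dist t z := by
    intro t ht z hz htz
    rw [dist_comm, dist_comm t z, Real.dist_eq, Real.dist_eq,
      abs_of_nonneg (sub_nonneg.2 (hmono ht hz htz)), abs_of_nonneg (sub_nonneg.2 htz)]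
    calc W z - W t ≤ C * (z - t) := by linarith [h t z ht.1 htz hz.2]
      _ ≤ C.toNNReal * (z - t) :=
        mul_le_mul_of_nonneg_right (Real.le_coe_toNNReal C) (sub_nonneg.2 htz)
  intro t ht z hz
  rcases le_total t z with htz | hzt
  · exact hle t ht z hz htz
  · rw [dist_comm, dist_comm t z]
    exact hle z hz t ht hzt

theorem tendsto_nhdsGT_of_continuousOn_Icc (hW : ContinuousOn W (Icc 0 β)) (ht : t ∈ Ico 0 β) :
    Tendsto W (𝓝[>] t) (𝓝 (W t)) :=
  (hW t (Ico_subset_Icc_self ht)).mono_left <| nhdsWithin_le_of_mem <|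
    mem_of_superset (Ioo_mem_nhdsGT ht.2) fun _ hz => ⟨ht.1.trans hz.1.le, hz.2.le⟩

theorem eventually_nhdsGT_mem_Ioc (ht : t ∈ Ico 0 β) : ∀ᶠ z in 𝓝[>] t, z ∈ Ioc t β :=
  mem_of_superset (Ioo_mem_nhdsGT ht.2) Ioo_subset_Ioc_self

theorem mul_le_mul_right_endpoint (hV : MonotoneOn V (Icc 0 β)) (hW : MonotoneOn W (Icc 0 β))
    (hV0 : ∀ s ∈ Icc 0 β, 0 ≤ V s) (hW0 : ∀ s ∈ Icc 0 β, 0 ≤ W s) (ht : t ∈ Icc 0 β)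
    (hz : z ∈ Icc 0 β) : V t * W z ≤ V β * W β :=
  have hβ : β ∈ Icc 0 β := right_mem_Icc.2 (ht.1.trans ht.2)
  mul_le_mul (hV ht hβ ht.2) (hW hz hβ hz.2) (hW0 z hz) (hV0 β hβ)

end Icc

/-- The differential inequalities satisfied on `[0, β]` by the mass `X` and the second moment `Y`
of a two-point function with `∂ G ≈ G * J * G`. The lower bounds are on Dini derivatives, and the
upper ones in the integrated form of (I.1). -/
structure SecondMomentFlow (β δ : ℝ) (X Y : ℝ → ℝ) : Prop where
  one_le_mass : ∀ t ∈ Icc 0 β, 1 ≤ X t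
  one_le_second : ∀ t ∈ Icc 0 β, 1 ≤ Y t
  monotoneOn_mass : MonotoneOn X (Icc 0 β)
  monotoneOn_second : MonotoneOn Y (Icc 0 β)
  mass_le : ∀ t z, 0 ≤ t → t ≤ z → z ≤ β → X z ≤ X t + (z - t) * (X t * X z)
  second_le : ∀ t z, 0 ≤ t → t ≤ z → z ≤ β → Y z ≤ Y t + (z - t) * (Y t * X z + X t * Y z)
  rightDerivLE_neg_mass : ∀ t ∈ Ico 0 β,
    RightDerivLE (fun z => -X z) (-((1 - δ) * X t ^ 2)) t
  rightDerivLE_neg_second : ∀ t ∈ Ico 0 β,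
    RightDerivLE (fun z => -Y z) (-((2 - 3 * δ) * (X t * Y t))) t

namespace SecondMomentFlow

variable {β δ s t : ℝ} {X Y : ℝ → ℝ}

theorem mass_pos (h : SecondMomentFlow β δ X Y) (ht : t ∈ Icc 0 β) : 0 < X t :=
  one_pos.trans_le (h.one_le_mass t ht)

theorem second_pos (h : SecondMomentFlow β δ X Y) (ht : t ∈ Icc 0 β) : 0 < Y t :=
  one_pos.trans_le (h.one_le_second t ht)

theorem continuousOn_mass (h : SecondMomentFlow β δ X Y) : ContinuousOn X (Icc 0 β) := by
  refine continuousOn_of_monotoneOn_of_le_add_mul (C := X β * X β) h.monotoneOn_mass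
    fun t z h0 htz hz => (h.mass_le t z h0 htz hz).trans ?_
  have hX := fun s hs => (h.mass_pos (t := s) hs).le
  have := mul_le_mul_right_endpoint h.monotoneOn_mass h.monotoneOn_mass hX hX
    ⟨h0, htz.trans hz⟩ ⟨h0.trans htz, hz⟩
  have := sub_nonneg.2 htz
  gcongr

theorem continuousOn_second (h : SecondMomentFlow β δ X Y) : ContinuousOn Y (Icc 0 β) := by
  refine continuousOn_of_monotoneOn_of_le_add_mul (C := Y β * X β + X β * Y β)
    h.monotoneOn_second fun t z h0 htz hz => (h.second_le t z h0 htz hz).trans ?_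
  have hX := fun s hs => (h.mass_pos (t := s) hs).le
  have hY := fun s hs => (h.second_pos (t := s) hs).le
  have ht : t ∈ Icc 0 β := ⟨h0, htz.trans hz⟩
  have hz' : z ∈ Icc 0 β := ⟨h0.trans htz, hz⟩
  have := mul_le_mul_right_endpoint h.monotoneOn_second h.monotoneOn_mass hY hX ht hz'
  have := mul_le_mul_right_endpoint h.monotoneOn_mass h.monotoneOn_second hX hY ht hz'
  have := sub_nonneg.2 htz
  gcongr

theorem tendsto_mass (h : SecondMomentFlow β δ X Y) (ht : t ∈ Ico 0 β) :
    Tendsto X (𝓝[>] t) (𝓝 (X t)) :=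
  tendsto_nhdsGT_of_continuousOn_Icc h.continuousOn_mass ht

theorem tendsto_second (h : SecondMomentFlow β δ X Y) (ht : t ∈ Ico 0 β) :
    Tendsto Y (𝓝[>] t) (𝓝 (Y t)) :=
  tendsto_nhdsGT_of_continuousOn_Icc h.continuousOn_second ht

theorem rightDerivLE_log_mass (h : SecondMomentFlow β δ X Y) (ht : t ∈ Ico 0 β) :
    RightDerivLE (fun z => Real.log (X z)) (X t) t := by
  have hX : RightDerivLE X (X t * X t) t := by
    refine rightDerivLE_of_tendsto ((h.tendsto_mass ht).const_mul (X t)) ?_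
    filter_upwards [eventually_nhdsGT_mem_Ioc ht] with z hz
    linarith [h.mass_le t z ht.1 hz.1.le hz.2]
  have hpos := h.mass_pos (Ico_subset_Icc_self ht)
  simpa only [mul_div_cancel_right₀ _ hpos.ne'] using hX.log (h.tendsto_mass ht) hpos

theorem rightDerivLE_neg_log_second (h : SecondMomentFlow β δ X Y) (ht : t ∈ Ico 0 β) :
    RightDerivLE (fun z => -Real.log (Y z)) (-((2 - 3 * δ) * X t)) t := by
  have hpos := h.second_pos (Ico_subset_Icc_self ht)
  simpa only [← mul_assoc, mul_div_cancel_right₀ _ hpos.ne'] using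
    (h.rightDerivLE_neg_second t ht).neg_log (h.tendsto_second ht) hpos

theorem mul_sub_add_inv_mass_le (h : SecondMomentFlow β δ X Y) (hs : 0 ≤ s) (hst : s ≤ t)
    (ht : t ≤ β) : (1 - δ) * (t - s) + (X t)⁻¹ ≤ (X s)⁻¹ := by
  have hcont : ContinuousOn (fun z => (1 - δ) * z + (X z)⁻¹) (Icc 0 β) :=
    (continuousOn_const.mul continuousOn_id).add
      (h.continuousOn_mass.inv₀ fun z hz => (h.mass_pos hz).ne')
  have hle := le_left_of_rightDerivLE_zero hst (hcont.mono (Icc_subset_Icc hs ht))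
    fun z hz => by
      have hz' : z ∈ Ico 0 β := ⟨hs.trans hz.1, hz.2.trans_le ht⟩
      have hpos := h.mass_pos (Ico_subset_Icc_self hz')
      have hadd := (rightDerivLE_const_mul_id (1 - δ) z).add
        ((h.rightDerivLE_neg_mass z hz').inv (h.tendsto_mass hz') hpos)
      rwa [mul_div_cancel_right₀ _ (pow_pos hpos 2).ne', add_neg_cancel] at hadd
  linarith

theorem mul_log_mass_sub_le (h : SecondMomentFlow β δ X Y) (hδ : 3 * δ ≤ 2) (hs : 0 ≤ s)
    (hst : s ≤ t) (ht : t ≤ β) :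
    (2 - 3 * δ) * (Real.log (X t) - Real.log (X s)) ≤ Real.log (Y t) - Real.log (Y s) := by
  have hlogX := h.continuousOn_mass.log fun z hz => (h.mass_pos hz).ne'
  have hlogY := h.continuousOn_second.log fun z hz => (h.second_pos hz).ne'
  have hcont : ContinuousOn (fun z => (2 - 3 * δ) * Real.log (X z) + -Real.log (Y z))
      (Icc 0 β) := (hlogX.const_mul (2 - 3 * δ)).add hlogY.neg
  have hle := le_left_of_rightDerivLE_zero hst (hcont.mono (Icc_subset_Icc hs ht))
    fun z hz => by
      have hz' : z ∈ Ico 0 β := ⟨hs.trans hz.1, hz.2.trans_le ht⟩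
      have hadd := ((h.rightDerivLE_log_mass hz').const_mul (tendsto_nhdsGT_of_continuousOn_Icc
        hlogX hz') (by linarith : 0 ≤ 2 - 3 * δ)).add (h.rightDerivLE_neg_log_second hz')
      rwa [add_neg_cancel] at hadd
  linarith

end SecondMomentFlow

/-- The growth of the moment `M` of order `2 (j + 2)` along the flow, in terms of the moment `N`
of order `2 (j + 1)`. -/
structure HigherMomentFlow (β : ℝ) (j : ℕ) (X Y N M : ℝ → ℝ) : Prop where
  lower_nonneg : ∀ t ∈ Icc 0 β, 0 ≤ N t
  monotoneOn_lower : MonotoneOn N (Icc 0 β)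
  continuousOn_lower : ContinuousOn N (Icc 0 β)
  pos : ∀ t ∈ Icc 0 β, 0 < M t
  monotoneOn : MonotoneOn M (Icc 0 β)
  le_add : ∀ t z, 0 ≤ t → t ≤ z → z ≤ β → M z ≤ M t + (z - t) *
    (M t * X z + X t * M z + 4 ^ (j + 2) * (N t * Y z + Y t * N z))

namespace HigherMomentFlow

variable {β δ t : ℝ} {j : ℕ} {X Y N M : ℝ → ℝ}

theorem continuousOn (hM : HigherMomentFlow β j X Y N M) (h : SecondMomentFlow β δ X Y) :
    ContinuousOn M (Icc 0 β) := by
  refine continuousOn_of_monotoneOn_of_le_add_mul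
    (C := M β * X β + X β * M β + 4 ^ (j + 2) * (N β * Y β + Y β * N β)) hM.monotoneOn
    fun t z h0 htz hz => (hM.le_add t z h0 htz hz).trans ?_
  have hX := fun s hs => (h.mass_pos (t := s) hs).le
  have hY := fun s hs => (h.second_pos (t := s) hs).le
  have hM' := fun s hs => (hM.pos s hs).le
  have ht : t ∈ Icc 0 β := ⟨h0, htz.trans hz⟩
  have hz' : z ∈ Icc 0 β := ⟨h0.trans htz, hz⟩
  have := mul_le_mul_right_endpoint hM.monotoneOn h.monotoneOn_mass hM' hX ht hz'
  have := mul_le_mul_right_endpoint h.monotoneOn_mass hM.monotoneOn hX hM' ht hz'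
  have := mul_le_mul_right_endpoint hM.monotoneOn_lower h.monotoneOn_second hM.lower_nonneg hY
    ht hz'
  have := mul_le_mul_right_endpoint h.monotoneOn_second hM.monotoneOn_lower hY hM.lower_nonneg
    ht hz'
  have := sub_nonneg.2 htz
  gcongr

theorem rightDerivLE_log (hM : HigherMomentFlow β j X Y N M) (h : SecondMomentFlow β δ X Y)
    (ht : t ∈ Ico 0 β) : RightDerivLE (fun z => Real.log (M z))
      (2 * X t + 2 * 4 ^ (j + 2) * (N t * Y t / M t)) t := by
  have hpos := hM.pos t (Ico_subset_Icc_self ht)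
  have hlim := tendsto_nhdsGT_of_continuousOn_Icc (hM.continuousOn h) ht
  have hlimN := tendsto_nhdsGT_of_continuousOn_Icc hM.continuousOn_lower ht
  have hbound : RightDerivLE M
      (M t * X t + X t * M t + 4 ^ (j + 2) * (N t * Y t + Y t * N t)) t := by
    refine rightDerivLE_of_tendsto ((((h.tendsto_mass ht).const_mul _).add
      (hlim.const_mul _)).add ((((h.tendsto_second ht).const_mul _).add
      (hlimN.const_mul _)).const_mul _)) ?_
    filter_upwards [eventually_nhdsGT_mem_Ioc ht] with z hz
    linarith [hM.le_add t z ht.1 hz.1.le hz.2]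
  convert hbound.log hlim hpos using 1
  field_simp
  ring

theorem log_ratio_le_iff {K : ℝ} (hM : HigherMomentFlow β j X Y N M)
    (h : SecondMomentFlow β δ X Y) (ht : t ∈ Icc 0 β) (hK : 0 < K) :
    Real.log (M t) + (j + 1) * Real.log (X t) + (j + 2) * -Real.log (Y t) ≤ Real.log K ↔
      M t * X t ^ (j + 1) ≤ K * Y t ^ (j + 2) := by
  have hMt := hM.pos t ht
  have hXt := h.mass_pos ht
  have hYt := h.second_pos ht
  rw [← Real.log_le_log_iff (x := M t * X t ^ (j + 1)) (by positivity) (by positivity),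
    Real.log_mul hMt.ne' (by positivity), Real.log_mul hK.ne' (by positivity), Real.log_pow,
    Real.log_pow]
  push_cast
  constructor <;> intro hle <;> linarith

/-- The lower moment contributes at most `X t / 4` to the logarithmic derivative of `M` at a
time where the claimed bound is attained. -/
theorem lower_mul_second_div_le {A K : ℝ} (hM : HigherMomentFlow β j X Y N M)
    (h : SecondMomentFlow β δ X Y) (ht : t ∈ Icc 0 β) (hN : N t * X t ^ j ≤ A * Y t ^ (j + 1))
    (hK : 8 * 4 ^ (j + 2) * A ≤ K) (heq : K * Y t ^ (j + 2) ≤ M t * X t ^ (j + 1)) :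
    2 * 4 ^ (j + 2) * (N t * Y t / M t) ≤ X t / 4 := by
  have hMt := hM.pos t ht
  have hXt := h.mass_pos ht
  have hYt := h.second_pos ht
  have hXj : 0 < X t ^ j := by positivity
  have hprod : 8 * 4 ^ (j + 2) * (N t * Y t) ≤ X t * M t := by
    refine le_of_mul_le_mul_right ?_ hXj
    calc 8 * 4 ^ (j + 2) * (N t * Y t) * X t ^ j
        = 8 * 4 ^ (j + 2) * (N t * X t ^ j) * Y t := by ring
      _ ≤ 8 * 4 ^ (j + 2) * (A * Y t ^ (j + 1)) * Y t := by gcongr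
      _ = 8 * 4 ^ (j + 2) * A * Y t ^ (j + 2) := by ring
      _ ≤ K * Y t ^ (j + 2) := by gcongr
      _ ≤ M t * X t ^ (j + 1) := heq
      _ = X t * M t * X t ^ j := by ring
  rw [mul_div_assoc', div_le_iff₀ hMt]
  linarith

/-- A barrier argument: the bound cannot be crossed, as wherever it is attained the logarithmic
derivative of `M X ^ (j + 1) / Y ^ (j + 2)` is negative. -/
theorem mul_pow_le {A K : ℝ} (hM : HigherMomentFlow β j X Y N M)
    (h : SecondMomentFlow β δ X Y) (hδ : 3 * (j + 2) * δ ≤ 1 / 4)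
    (hN : ∀ t ∈ Icc 0 β, N t * X t ^ j ≤ A * Y t ^ (j + 1)) (hK0 : 0 < K)
    (hK : 8 * 4 ^ (j + 2) * A ≤ K) (hinit : M 0 * X 0 ^ (j + 1) ≤ K * Y 0 ^ (j + 2))
    (ht : t ∈ Icc 0 β) : M t * X t ^ (j + 1) ≤ K * Y t ^ (j + 2) := by
  have hlogX := h.continuousOn_mass.log fun z hz => (h.mass_pos hz).ne'
  have hlogY := (h.continuousOn_second.log fun z hz => (h.second_pos hz).ne').neg
  have hlogM := (hM.continuousOn h).log fun z hz => (hM.pos z hz).ne'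
  have hzero : (0 : ℝ) ∈ Icc 0 β := left_mem_Icc.2 (ht.1.trans ht.2)
  refine (hM.log_ratio_le_iff h ht hK0).1 (le_of_rightDerivLE_neg
    (W := fun z => Real.log (M z) + (j + 1) * Real.log (X z) + (j + 2) * -Real.log (Y z))
    ((hlogM.add (hlogX.const_mul (j + 1 : ℝ))).add (hlogY.const_mul (j + 2 : ℝ)))
    ((hM.log_ratio_le_iff h hzero hK0).2 hinit)
    (fun s hs => ((hM.rightDerivLE_log h hs).add ((h.rightDerivLE_log_mass hs).const_mul
      (tendsto_nhdsGT_of_continuousOn_Icc hlogX hs) (by positivity))).add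
      ((h.rightDerivLE_neg_log_second hs).const_mul
        (tendsto_nhdsGT_of_continuousOn_Icc hlogY hs) (by positivity))) ?_ ht)
  intro s hs heq
  have hs' : s ∈ Icc 0 β := Ico_subset_Icc_self hs
  have hXs := h.mass_pos hs'
  have hMs := hM.pos s hs'
  have hYs := h.second_pos hs'
  have hlower := hM.lower_mul_second_div_le h hs' (hN s hs') hK <| by
    have hlog : Real.log (K * Y s ^ (j + 2)) = Real.log (M s * X s ^ (j + 1)) := by
      rw [Real.log_mul hK0.ne' (by positivity), Real.log_mul hMs.ne' (by positivity),
        Real.log_pow, Real.log_pow]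
      push_cast
      linarith
    exact ((Real.log_le_log_iff (by positivity) (by positivity)).1 hlog.le)
  have hδX : 3 * (j + 2) * δ * X s ≤ 1 / 4 * X s := by gcongr
  have hjX : 0 ≤ j * X s := by positivity
  linarith

end HigherMomentFlow

theorem exp_neg_mul_le_mul_inv_one_add_pow {c : ℝ} (hc : 0 < c) (N : ℕ) :
    ∃ A > 0, ∀ n : ℝ, 0 ≤ n → Real.exp (-c * n) ≤ A * ((1 + n) ^ N)⁻¹ := by
  refine ⟨Real.exp c * N.factorial / c ^ N, by positivity, fun n hn => ?_⟩
  have hexp := Real.pow_div_factorial_le_exp (c * (1 + n)) (by positivity) N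
  rw [show c * (1 + n) = c - -c * n by ring, Real.exp_sub, show c - -c * n = c * (1 + n) by ring,
    div_le_div_iff₀ (by positivity) (Real.exp_pos _), mul_pow] at hexp
  rw [← div_eq_mul_inv, div_div, le_div_iff₀ (by positivity)]
  linarith

section Moments

variable {d : ℕ} {f g : IntLattice d → ℝ≥0∞}

theorem moment_ne_top_of_le_exp {C c : ℝ} (hC : 0 < C) (hc : 0 < c)
    (hf : ∀ x, f x ≤ .ofReal (C * Real.exp (-c * supNorm x))) (q : ℕ) : moment q f ≠ ⊤ := by
  obtain ⟨A, hA, hexp⟩ := exp_neg_mul_le_mul_inv_one_add_pow hc (2 * d + 2 * q)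
  have hpoint : ∀ x, ENNReal.ofReal (evenPowSum q x) * f x ≤
      .ofReal (d * C * A) * .ofReal ((bracket 1 x ^ (2 * d))⁻¹) := by
    intro x
    have hx := supNorm_nonneg x
    refine (mul_le_mul_right (hf x) _).trans ?_
    rw [← ENNReal.ofReal_mul (evenPowSum_nonneg q x), ← ENNReal.ofReal_mul (by positivity),
      bracket, div_one]
    refine ENNReal.ofReal_le_ofReal ?_
    calc evenPowSum q x * (C * Real.exp (-c * supNorm x))
        ≤ (d * (1 + supNorm x) ^ (2 * q)) *
          (C * (A * ((1 + supNorm x) ^ (2 * d + 2 * q))⁻¹)) := by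
          gcongr
          · exact (evenPowSum_le q x).trans (by gcongr; linarith)
          · exact hexp _ hx
      _ = d * C * A * ((1 + supNorm x) ^ (2 * d))⁻¹ := by rw [pow_add]; field_simp
  refine ne_top_of_le_ne_top ?_ (ENNReal.tsum_le_tsum hpoint)
  rw [ENNReal.tsum_mul_left]
  exact ENNReal.mul_ne_top ENNReal.ofReal_ne_top
    (ne_top_of_le_ne_top ENNReal.ofReal_ne_top (tsum_inv_bracket_pow_le le_rfl))

theorem mass_ne_top_of_moment_zero (hd : 0 < d) (hf : moment 0 f ≠ ⊤) : mass f ≠ ⊤ := by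
  rw [moment_zero] at hf
  exact fun htop => hf (by rw [htop, ENNReal.mul_top (by exact_mod_cast hd.ne')])

theorem moment_conv_ne_top (hd : 0 < d) (hg : g.Even) (hf : ∀ q, moment q f ≠ ⊤)
    (hg' : ∀ q, moment q g ≠ ⊤) (q : ℕ) : moment q (conv f g) ≠ ⊤ := by
  have := mass_ne_top_of_moment_zero hd (hf 0)
  have := mass_ne_top_of_moment_zero hd (hg' 0)
  cases q with
  | zero => rw [moment_zero, mass_conv]; finiteness
  | succ n =>
    have := hf n
    have := hf 1
    have := hf (n + 1)
    have := hg' n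
    have := hg' 1
    have := hg' (n + 1)
    exact ne_top_of_le_ne_top (by finiteness) (moment_succ_conv_le n f hg)

end Moments

theorem tsum_prod_mul_eq_conv_conv {E : Type*} [AddCommGroup E] (f g h : E → ℝ≥0∞) (x : E) :
    ∑' p : E × E, f p.1 * g p.2 * h (x - p.1 - p.2) = conv f (conv g h) x := by
  simp only [ENNReal.tsum_prod', conv, ← ENNReal.tsum_mul_left, mul_assoc]

section DerivOfSeries

variable {α : Type*}

theorem exists_finset_lt_sum_of_ofReal_le_tsum {a : α → ℝ} {u L : ℝ}
    (hu : ENNReal.ofReal u ≤ ∑' x, ENNReal.ofReal (a x)) (hL : L < u) :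
    ∃ S : Finset α, L < ∑ x ∈ S, a x := by
  rcases lt_or_ge L 0 with hneg | hnonneg
  · exact ⟨∅, by simpa using hneg⟩
  have hlt := ((ENNReal.ofReal_lt_ofReal_iff (hnonneg.trans_lt hL)).2 hL).trans_le hu
  rw [ENNReal.tsum_eq_iSup_sum, lt_iSup_iff] at hlt
  obtain ⟨S, hS⟩ := hlt
  classical
  refine ⟨S.filter (0 < a ·), ?_⟩
  have hsum : ∑ x ∈ S, ENNReal.ofReal (a x) =
      ENNReal.ofReal (∑ x ∈ S.filter (0 < a ·), a x) := by
    rw [ENNReal.ofReal_sum_of_nonneg fun x hx => (Finset.mem_filter.1 hx).2.le,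
      Finset.sum_filter]
    refine Finset.sum_congr rfl fun x _ => ?_
    split_ifs with hx
    · rfl
    · exact ENNReal.ofReal_of_nonpos (not_lt.1 hx)
  rw [hsum] at hS
  exact (ENNReal.ofReal_lt_ofReal_iff'.1 hS).1

theorem sum_toReal_sub_le_toReal_tsum_sub {f g : α → ℝ≥0∞} (hfg : f ≤ g)
    (hg : ∑' x, g x ≠ ⊤) (S : Finset α) :
    ∑ x ∈ S, ((g x).toReal - (f x).toReal) ≤ (∑' x, g x).toReal - (∑' x, f x).toReal := by
  have hf := ne_top_of_le_ne_top hg (ENNReal.tsum_le_tsum hfg)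
  rw [ENNReal.tsum_toReal_eq (ENNReal.ne_top_of_tsum_ne_top hg),
    ENNReal.tsum_toReal_eq (ENNReal.ne_top_of_tsum_ne_top hf),
    ← (ENNReal.summable_toReal hg).tsum_sub (ENNReal.summable_toReal hf)]
  refine ((ENNReal.summable_toReal hg).sub (ENNReal.summable_toReal hf)).sum_le_tsum S
    fun x _ => sub_nonneg.2 ?_
  exact ENNReal.toReal_mono (ENNReal.ne_top_of_tsum_ne_top hg x) (hfg x)

/- The series need not be differentiable, but each of its finite partial sums bounds its increments
from below, which suffices for a one-sided estimate. -/
theorem rightDerivLE_neg_tsum {g : ℝ → α → ℝ≥0∞} {g' : α → ℝ} {t β u : ℝ} (ht : t ∈ Ico 0 β)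
    (hmono : MonotoneOn g (Icc 0 β)) (hfin : ∀ z ∈ Icc 0 β, ∑' x, g z x ≠ ⊤)
    (hderiv : ∀ x, HasDerivWithinAt (fun z => (g z x).toReal) (g' x) (Ici 0) t)
    (hu : ENNReal.ofReal u ≤ ∑' x, ENNReal.ofReal (g' x)) :
    RightDerivLE (fun z => -(∑' x, g z x).toReal) (-u) t := by
  intro r hr
  obtain ⟨S, hS⟩ := exists_finset_lt_sum_of_ofReal_le_tsum hu (neg_lt.1 hr)
  have hderivS : HasDerivWithinAt (fun z => ∑ x ∈ S, (g z x).toReal) (∑ x ∈ S, g' x) (Ioi t) t :=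
    HasDerivWithinAt.fun_sum fun x _ => (hderiv x).mono fun z hz => ht.1.trans (le_of_lt hz)
  rw [hasDerivWithinAt_iff_tendsto_slope' (by simp)] at hderivS
  filter_upwards [hderivS.eventually_const_lt hS, eventually_nhdsGT_mem_Ioc ht] with z hslope hz
  have hzI : z ∈ Icc 0 β := ⟨ht.1.trans hz.1.le, hz.2⟩
  rw [slope_def_field, lt_div_iff₀ (sub_pos.2 hz.1), ← Finset.sum_sub_distrib] at hslope
  have hle := sum_toReal_sub_le_toReal_tsum_sub
    (hmono (Ico_subset_Icc_self ht) hzI hz.1.le) (hfin z hzI) S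
  linarith

end DerivOfSeries

namespace Model

variable {d : ℕ} {c₀ : ℝ} (M : Model d c₀)

/-- The kernel `J` as a function with values in `[0, ∞]`. -/
def kernel (x : IntLattice d) : ℝ≥0∞ := .ofReal (M.K.J x)

/-- The error kernel `H_t` as a function with values in `[0, ∞]`. -/
def errorKernel (t : ℝ) (x : IntLattice d) : ℝ≥0∞ := .ofReal (M.H t x)

/-- The parameter `t` lies in `[0, β_c)`. -/
def IsSubcritical (t : ℝ) : Prop := 0 ≤ t ∧ ENNReal.ofReal t < M.βc

variable {M} in
theorem IsSubcritical.mono {s t : ℝ} (ht : M.IsSubcritical t) (hs : 0 ≤ s) (hst : s ≤ t) :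
    M.IsSubcritical s :=
  ⟨hs, (ENNReal.ofReal_le_ofReal hst).trans_lt ht.2⟩

theorem F_eq_conv (t : ℝ) : M.F t = conv M.kernel (M.G t) := rfl

section Kernel

theorem isSymmFun_kernel : IsSymmFun M.kernel := fun π e x => by
  rw [kernel, M.K.symm π e x, kernel]

theorem mass_kernel : mass M.kernel = 1 := by
  unfold mass kernel
  rw [← ENNReal.ofReal_tsum_of_nonneg M.K.nonneg M.K.summable, M.K.norm_one, ENNReal.ofReal_one]

theorem moment_kernel_le (q : ℕ) : moment q M.kernel ≤ .ofReal (d * M.K.R ^ (2 * q)) := by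
  have hpoint : ∀ x, ENNReal.ofReal (evenPowSum q x) * M.kernel x ≤
      .ofReal (d * M.K.R ^ (2 * q)) * M.kernel x := by
    intro x
    rcases (M.K.nonneg x).eq_or_lt with hJ | hJ
    · simp [kernel, ← hJ]
    · refine mul_le_mul_left (ENNReal.ofReal_le_ofReal ((evenPowSum_le q x).trans ?_)) _
      gcongr
      · exact supNorm_nonneg x
      · exact M.K.range_le x hJ
  refine (ENNReal.tsum_le_tsum hpoint).trans_eq ?_
  rw [ENNReal.tsum_mul_left]
  exact (congrArg _ M.mass_kernel).trans (mul_one _)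

theorem moment_kernel_ne_top (q : ℕ) : moment q M.kernel ≠ ⊤ :=
  ne_top_of_le_ne_top ENNReal.ofReal_ne_top (M.moment_kernel_le q)

theorem one_le_moment_kernel (hd : 0 < d) (q : ℕ) : 1 ≤ moment q M.kernel := by
  rw [← M.mass_kernel]
  refine ENNReal.tsum_le_tsum fun x => ?_
  by_cases hx : x = 0
  · simp [hx, kernel, M.K.zero_at_zero]
  · have hnorm : 1 ≤ supNorm x := by
      obtain ⟨i, hi⟩ := Function.ne_iff.1 hx
      exact le_trans (by exact_mod_cast Int.one_le_abs hi) (abs_le_supNorm x i)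
    refine le_mul_of_one_le_left' (ENNReal.one_le_ofReal.2 ?_)
    exact (one_le_pow₀ hnorm).trans (supNorm_pow_le_evenPowSum hd q x)

theorem moment_one_kernel : moment 1 M.kernel = .ofReal (M.sigma ^ 2) := by
  have hnonneg : ∀ x, 0 ≤ sqNorm x * M.K.J x := fun x =>
    mul_nonneg (sqNorm_nonneg x) (M.K.nonneg x)
  simp only [moment, evenPowSum_one, kernel, sigma, AdmissibleKernel.sigma,
    Real.sq_sqrt (tsum_nonneg hnonneg), ENNReal.ofReal_tsum_of_nonneg hnonneg M.K.summable_sq,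
    ENNReal.ofReal_mul (sqNorm_nonneg _)]

theorem sigma_nonneg : 0 ≤ M.sigma := Real.sqrt_nonneg _

theorem one_le_sigma (hd : 0 < d) : 1 ≤ M.sigma := by
  have hone := M.one_le_moment_kernel hd 1
  rw [moment_one_kernel, ENNReal.one_le_ofReal] at hone
  exact (one_le_sq_iff₀ M.sigma_nonneg).1 hone

theorem R_le_inv_mul_sigma (hc : 0 < c₀) : M.K.R ≤ c₀⁻¹ * M.sigma :=
  (le_inv_mul_iff₀ hc).2 M.K.sigma_lower

theorem sigma_le_mul_R : M.sigma ≤ d * M.K.R := by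
  have hR := M.K.R_ge_one
  have hsq := M.moment_kernel_le 1
  rw [moment_one_kernel, ENNReal.ofReal_le_ofReal_iff (by positivity)] at hsq
  refine le_of_sq_le_sq (hsq.trans ?_) (by positivity)
  rw [mul_pow, mul_one]
  gcongr
  exact_mod_cast Nat.le_self_pow two_ne_zero d

/-- The constant in the bound of the kernel by a multiple of
`σ ^ (-d) * (bracket σ x) ^ (-4 * d)`. -/
def kernelConst (d : ℕ) (c₀ : ℝ) : ℝ := c₀⁻¹ * d ^ d * (2 * c₀⁻¹) ^ (4 * d)

theorem kernelConst_nonneg (hc : 0 < c₀) : 0 ≤ kernelConst d c₀ := by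
  unfold kernelConst
  positivity

theorem kernel_le (hd : 0 < d) (hc : 0 < c₀) (hc1 : c₀ ≤ 1) (x : IntLattice d) :
    M.kernel x ≤ .ofReal (kernelConst d c₀ / M.sigma ^ d * (bracket M.sigma x ^ (4 * d))⁻¹) := by
  have hσ := M.one_le_sigma hd
  have hR := M.K.R_ge_one
  have hbracket := bracket_pos M.sigma_nonneg x
  refine ENNReal.ofReal_le_ofReal ?_
  rcases (M.K.nonneg x).eq_or_lt with hJ | hJ
  · rw [← hJ]
    exact mul_nonneg (div_nonneg (kernelConst_nonneg hc) (by positivity)) (by positivity)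
  have hbracket_le : bracket M.sigma x ≤ 2 * c₀⁻¹ := by
    have hratio : supNorm x / M.sigma ≤ c₀⁻¹ := by
      rw [div_le_iff₀ (by linarith)]
      exact (M.K.range_le x hJ).trans (M.R_le_inv_mul_sigma hc)
    have := (one_le_inv₀ hc).2 hc1
    unfold bracket
    linarith
  calc M.K.J x ≤ c₀⁻¹ / M.K.R ^ d := M.K.J_upper x
    _ ≤ c₀⁻¹ * d ^ d / M.sigma ^ d := by
      rw [div_le_div_iff₀ (by positivity) (by positivity), mul_assoc, ← mul_pow]
      gcongr
      exact M.sigma_le_mul_R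
    _ ≤ c₀⁻¹ * d ^ d / M.sigma ^ d *
        ((2 * c₀⁻¹) ^ (4 * d) * (bracket M.sigma x ^ (4 * d))⁻¹) := by
      refine le_mul_of_one_le_right (by positivity) ?_
      rw [← div_eq_mul_inv, one_le_div (by positivity)]
      gcongr
    _ = _ := by
      rw [kernelConst]
      ring

end Kernel

section Moments

theorem G_zero : M.G 0 = delta := by
  funext x
  simp [M.init, delta, Set.indicator_apply]

theorem F_zero : M.F 0 = M.kernel := by rw [F_eq_conv, G_zero, conv_delta]

theorem even_G (t : ℝ) : (M.G t).Even := (M.symm t).even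

theorem even_kernel : M.kernel.Even := M.isSymmFun_kernel.even

theorem even_errorKernel (t : ℝ) : (M.errorKernel t).Even := fun x => by
  rw [errorKernel, M.H_symm, errorKernel]

theorem isSymmFun_F (t : ℝ) : IsSymmFun (M.F t) := isSymmFun_conv M.isSymmFun_kernel (M.symm t)

theorem even_F (t : ℝ) : (M.F t).Even := (M.isSymmFun_F t).even

theorem mass_G (t : ℝ) : mass (M.G t) = M.chi t := rfl

theorem mass_F (t : ℝ) : mass (M.F t) = M.chi t := by
  rw [F_eq_conv, mass_conv, mass_kernel, one_mul, mass_G]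

theorem chi_zero : M.chi 0 = 1 := by rw [← mass_G, G_zero, mass_delta]

theorem moment_one_F (t : ℝ) :
    moment 1 (M.F t) = .ofReal (M.sigma ^ 2) * M.chi t + moment 1 (M.G t) := by
  rw [F_eq_conv, moment_one_conv _ (M.even_G t), moment_one_kernel, mass_kernel, mass_G, one_mul]

variable {M} {s t : ℝ}

theorem IsSubcritical.moment_G_ne_top (ht : M.IsSubcritical t) (q : ℕ) :
    moment q (M.G t) ≠ ⊤ := by
  obtain ⟨C, hC, c, hc, hle⟩ := M.expDecay ht.1 ht.2
  exact moment_ne_top_of_le_exp hC hc hle q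

theorem IsSubcritical.moment_errorKernel_ne_top (ht : M.IsSubcritical t) (q : ℕ) :
    moment q (M.errorKernel t) ≠ ⊤ := by
  obtain ⟨C, hC, c, hc, hle⟩ := M.H_expDecay ht.1 ht.2
  exact moment_ne_top_of_le_exp hC hc (fun x => ENNReal.ofReal_le_ofReal (hle x)) q

theorem IsSubcritical.chi_ne_top (hd : 0 < d) (ht : M.IsSubcritical t) : M.chi t ≠ ⊤ :=
  mass_ne_top_of_moment_zero hd (ht.moment_G_ne_top 0)

theorem IsSubcritical.mass_errorKernel_ne_top (hd : 0 < d) (ht : M.IsSubcritical t) :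
    mass (M.errorKernel t) ≠ ⊤ :=
  mass_ne_top_of_moment_zero hd (ht.moment_errorKernel_ne_top 0)

theorem IsSubcritical.moment_F_ne_top (hd : 0 < d) (ht : M.IsSubcritical t) (q : ℕ) :
    moment q (M.F t) ≠ ⊤ :=
  moment_conv_ne_top hd (M.even_G t) M.moment_kernel_ne_top ht.moment_G_ne_top q

theorem IsSubcritical.G_mono (ht : M.IsSubcritical t) (hs : 0 ≤ s) (hst : s ≤ t) :
    M.G s ≤ M.G t :=
  fun x => M.mono x hs hst ht.2.le

theorem IsSubcritical.F_mono (ht : M.IsSubcritical t) (hs : 0 ≤ s) (hst : s ≤ t) :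
    M.F s ≤ M.F t :=
  conv_mono le_rfl (ht.G_mono hs hst)

theorem IsSubcritical.F_le_add (ht : M.IsSubcritical t) (hs : 0 ≤ s) (hst : s ≤ t) :
    M.F t ≤ M.F s + ENNReal.ofReal (t - s) • conv (M.F s) (M.F t) := by
  have hG : M.G t ≤ M.G s + ENNReal.ofReal (t - s) • conv (M.G s) (M.F t) := by
    exact fun x => (M.I1 hs hst ht.2 x).trans_eq <| congrArg (M.G s x + .ofReal (t - s) * ·) <|
      tsum_prod_mul_eq_conv_conv (M.G s) M.kernel (M.G t) x
  calc M.F t ≤ conv M.kernel (M.G s + ENNReal.ofReal (t - s) • conv (M.G s) (M.F t)) :=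
      conv_mono le_rfl hG
    _ = _ := by rw [conv_add, conv_smul, ← conv_assoc, ← F_eq_conv]

end Moments

end Model

theorem hasSum_toReal_conv_conv {E : Type*} [AddCommGroup E] {f g h : E → ℝ≥0∞} {x : E}
    (hfin : conv f (conv g h) x ≠ ⊤) :
    HasSum (fun p : E × E => (f p.1).toReal * (g p.2).toReal * (h (x - p.1 - p.2)).toReal)
      (conv f (conv g h) x).toReal := by
  rw [← tsum_prod_mul_eq_conv_conv] at hfin ⊢
  rw [ENNReal.tsum_toReal_eq (ENNReal.ne_top_of_tsum_ne_top hfin)]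
  simpa only [ENNReal.toReal_mul] using ENNReal.hasSum_toReal hfin

namespace Model

variable {d : ℕ} {c₀ : ℝ} {M : Model d c₀} {β t : ℝ}

theorem IsSubcritical.conv_conv_G_ne_top (hd : 0 < d) (ht : M.IsSubcritical t)
    {f : IntLattice d → ℝ≥0∞} (hf : mass f ≠ ⊤) (x : IntLattice d) :
    conv (M.G t) (conv f (M.G t)) x ≠ ⊤ := by
  refine ENNReal.ne_top_of_tsum_ne_top (?_ : mass (conv (M.G t) (conv f (M.G t))) ≠ ⊤) x
  have := ht.chi_ne_top hd
  rw [mass_conv, mass_conv, mass_G]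
  finiteness

theorem IsSubcritical.conv_kernel_le (hd : 0 < d) (ht : M.IsSubcritical t) (x : IntLattice d) :
    conv (M.G t) (conv M.kernel (M.G t)) x ≤
      .ofReal (M.G' t x) + conv (M.G t) (conv (M.errorKernel t) (M.G t)) x := by
  have hJ := ht.conv_conv_G_ne_top hd (by simp [mass_kernel] : mass M.kernel ≠ ⊤) x
  have hH := ht.conv_conv_G_ne_top hd (ht.mass_errorKernel_ne_top hd) x
  have hsub := (hasSum_toReal_conv_conv hJ).sub (hasSum_toReal_conv_conv hH)
  simp only [← mul_sub, ← sub_mul, kernel, errorKernel, ENNReal.toReal_ofReal (M.K.nonneg _),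
    ENNReal.toReal_ofReal (M.H_nonneg _ _)] at hsub
  have hI2 := hsub.tsum_eq.symm.trans_le (M.I2 ht.1 ht.2 x)
  rw [← ENNReal.ofReal_toReal hJ, ← ENNReal.ofReal_toReal hH]
  exact (ENNReal.ofReal_le_ofReal (sub_le_iff_le_add.1 hI2)).trans ENNReal.ofReal_add_le

theorem IsSubcritical.rightDerivLE_neg_tsum_mul_G (hd : 0 < d) (hβ : M.IsSubcritical β)
    (ht : t ∈ Ico 0 β) {w : IntLattice d → ℝ} (hw : ∀ x, 0 ≤ w x)
    (hfin : ∀ z ∈ Icc 0 β, ∑' x, .ofReal (w x) * M.G z x ≠ ⊤) {A B : ℝ} (hB₀ : 0 ≤ B)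
    (hA : .ofReal A ≤ ∑' x, .ofReal (w x) * conv (M.G t) (conv M.kernel (M.G t)) x)
    (hB : ∑' x, .ofReal (w x) * conv (M.G t) (conv (M.errorKernel t) (M.G t)) x ≤ .ofReal B) :
    RightDerivLE (fun z => -(∑' x, .ofReal (w x) * M.G z x).toReal) (-(A - B)) t := by
  have htβ := hβ.mono ht.1 ht.2.le
  refine rightDerivLE_neg_tsum (g' := fun x => w x * M.G' t x) ht (fun s hs z hz hsz x =>
    mul_le_mul_right ((hβ.mono hz.1 hz.2).G_mono hs.1 hsz x) _) hfin (fun x => ?_) ?_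
  · simpa only [ENNReal.toReal_mul, ENNReal.toReal_ofReal (hw x)] using
      (M.deriv x htβ.1 htβ.2).const_mul (w x)
  · rw [ENNReal.ofReal_sub _ hB₀, tsub_le_iff_right]
    refine hA.trans (le_trans ?_ (add_le_add_right hB _))
    rw [← ENNReal.tsum_add]
    refine ENNReal.tsum_le_tsum fun x => ?_
    rw [ENNReal.ofReal_mul (hw x), ← mul_add]
    exact mul_le_mul_right (htβ.conv_kernel_le hd x) _

/-- The susceptibility `χ(t)` as a real number. -/
def chiReal (M : Model d c₀) (t : ℝ) : ℝ := (M.chi t).toReal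

/-- The moment of order `2 q` of `F_t` as a real number. -/
def momentReal (M : Model d c₀) (q : ℕ) (t : ℝ) : ℝ := (moment q (M.F t)).toReal

theorem momentReal_nonneg (q : ℕ) (t : ℝ) : 0 ≤ M.momentReal q t := ENNReal.toReal_nonneg

theorem chiReal_zero : M.chiReal 0 = 1 := by rw [chiReal, chi_zero, ENNReal.toReal_one]

theorem momentReal_one_zero : M.momentReal 1 0 = M.sigma ^ 2 := by
  rw [momentReal, F_zero, moment_one_kernel, ENNReal.toReal_ofReal (by positivity)]

namespace IsSubcritical

theorem chi_eq (hd : 0 < d) (ht : M.IsSubcritical t) : M.chi t = .ofReal (M.chiReal t) :=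
  (ENNReal.ofReal_toReal (ht.chi_ne_top hd)).symm

theorem moment_F_eq (hd : 0 < d) (ht : M.IsSubcritical t) (q : ℕ) :
    moment q (M.F t) = .ofReal (M.momentReal q t) :=
  (ENNReal.ofReal_toReal (ht.moment_F_ne_top hd q)).symm

theorem one_le_chiReal (hd : 0 < d) (ht : M.IsSubcritical t) : 1 ≤ M.chiReal t := by
  have hle := mass_mono (ht.G_mono le_rfl ht.1)
  rwa [mass_G, mass_G, chi_zero, ht.chi_eq hd, ENNReal.one_le_ofReal] at hle

theorem one_le_momentReal (hd : 0 < d) (ht : M.IsSubcritical t) (q : ℕ) :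
    1 ≤ M.momentReal q t := by
  have hle := moment_mono q (ht.F_mono le_rfl ht.1)
  rw [F_zero, ht.moment_F_eq hd] at hle
  exact ENNReal.one_le_ofReal.1 ((M.one_le_moment_kernel hd q).trans hle)

theorem monotoneOn_chiReal (hd : 0 < d) (hβ : M.IsSubcritical β) :
    MonotoneOn M.chiReal (Icc 0 β) := fun _ hs t ht hst =>
  have htβ : M.IsSubcritical t := hβ.mono ht.1 ht.2
  ENNReal.toReal_mono (htβ.chi_ne_top hd) (mass_mono (htβ.G_mono hs.1 hst))

theorem monotoneOn_momentReal (hd : 0 < d) (hβ : M.IsSubcritical β) (q : ℕ) :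
    MonotoneOn (M.momentReal q) (Icc 0 β) := fun _ hs t ht hst =>
  have htβ : M.IsSubcritical t := hβ.mono ht.1 ht.2
  ENNReal.toReal_mono (htβ.moment_F_ne_top hd q) (moment_mono q (htβ.F_mono hs.1 hst))

variable {s : ℝ}

theorem chiReal_le_add (hd : 0 < d) (hs : 0 ≤ s) (hst : s ≤ t) (ht : M.IsSubcritical t) :
    M.chiReal t ≤ M.chiReal s + (t - s) * (M.chiReal s * M.chiReal t) := by
  have hle := mass_mono (ht.F_le_add hs hst)
  have := ht.chi_ne_top hd
  have := (ht.mono hs hst).chi_ne_top hd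
  rw [mass_add, mass_smul, mass_conv, mass_F, mass_F] at hle
  have hreal := ENNReal.toReal_mono (by finiteness) hle
  rwa [ENNReal.toReal_add (by finiteness) (by finiteness), ENNReal.toReal_mul,
    ENNReal.toReal_ofReal (sub_nonneg.2 hst), ENNReal.toReal_mul] at hreal

theorem momentReal_one_le_add (hd : 0 < d) (hs : 0 ≤ s) (hst : s ≤ t) (ht : M.IsSubcritical t) :
    M.momentReal 1 t ≤ M.momentReal 1 s +
      (t - s) * (M.momentReal 1 s * M.chiReal t + M.chiReal s * M.momentReal 1 t) := by
  have hle := moment_mono 1 (ht.F_le_add hs hst)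
  have := ht.chi_ne_top hd
  have := (ht.mono hs hst).chi_ne_top hd
  have := ht.moment_F_ne_top hd 1
  have := (ht.mono hs hst).moment_F_ne_top hd 1
  rw [moment_add, moment_smul, moment_one_conv _ (M.even_F t), mass_F, mass_F] at hle
  have hreal := ENNReal.toReal_mono (by finiteness) hle
  rwa [ENNReal.toReal_add (by finiteness) (by finiteness), ENNReal.toReal_mul,
    ENNReal.toReal_ofReal (sub_nonneg.2 hst), ENNReal.toReal_add (by finiteness) (by finiteness),
    ENNReal.toReal_mul, ENNReal.toReal_mul] at hreal

theorem momentReal_succ_le_add (hd : 0 < d) (hs : 0 ≤ s) (hst : s ≤ t)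
    (ht : M.IsSubcritical t) (n : ℕ) :
    M.momentReal (n + 1) t ≤ M.momentReal (n + 1) s + (t - s) *
      (M.momentReal (n + 1) s * M.chiReal t + M.chiReal s * M.momentReal (n + 1) t +
        4 ^ (n + 1) *
          (M.momentReal n s * M.momentReal 1 t + M.momentReal 1 s * M.momentReal n t)) := by
  have hle := moment_mono (n + 1) (ht.F_le_add hs hst)
  rw [moment_add, moment_smul] at hle
  replace hle := hle.trans (add_le_add_right
    (mul_le_mul_right (moment_succ_conv_le n (M.F s) (M.even_F t)) _) _)
  have hs' := ht.mono hs hst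
  have := ht.chi_ne_top hd
  have := hs'.chi_ne_top hd
  have := ht.moment_F_ne_top hd n
  have := hs'.moment_F_ne_top hd n
  have := ht.moment_F_ne_top hd 1
  have := hs'.moment_F_ne_top hd 1
  have := ht.moment_F_ne_top hd (n + 1)
  have := hs'.moment_F_ne_top hd (n + 1)
  rw [mass_F, mass_F] at hle
  have hreal := ENNReal.toReal_mono (by finiteness) hle
  rw [ENNReal.toReal_add (by finiteness) (by finiteness), ENNReal.toReal_mul,
    ENNReal.toReal_ofReal (sub_nonneg.2 hst), ENNReal.toReal_add (by finiteness) (by finiteness),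
    ENNReal.toReal_add (by finiteness) (by finiteness), ENNReal.toReal_mul (a := 4 ^ (n + 1)),
    ENNReal.toReal_add (by finiteness) (by finiteness)] at hreal
  simp only [ENNReal.toReal_mul, ENNReal.toReal_pow, ENNReal.toReal_ofNat] at hreal
  exact hreal

end IsSubcritical

end Model

namespace Model

variable {d : ℕ} {c₀ : ℝ} {M : Model d c₀} {β δ t : ℝ}

/-- The error kernel at `t` has mass at most `δ` and second moment at most `δ ξ(t)²`. -/
def ErrorLE (M : Model d c₀) (δ t : ℝ) : Prop :=
  mass (M.errorKernel t) ≤ .ofReal δ ∧ moment 1 (M.errorKernel t) ≤ .ofReal δ * M.xiSq t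

theorem xiSq_eq_div (t : ℝ) : M.xiSq t = moment 1 (M.F t) / M.chi t := by
  simp only [xiSq, moment, evenPowSum_one]

theorem xi_nonneg (t : ℝ) : 0 ≤ M.xi t := Real.sqrt_nonneg _

theorem xi_sq (t : ℝ) : M.xi t ^ 2 = M.momentReal 1 t / M.chiReal t := by
  rw [xi, Real.sq_sqrt ENNReal.toReal_nonneg, xiSq_eq_div, ENNReal.toReal_div, momentReal, chiReal]

theorem xi_zero : M.xi 0 = M.sigma := by
  refine (pow_left_inj₀ (xi_nonneg 0) M.sigma_nonneg two_ne_zero).1 ?_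
  rw [xi_sq, chiReal_zero, momentReal_one_zero, div_one]

namespace IsSubcritical

theorem chi_ne_zero (ht : M.IsSubcritical t) : M.chi t ≠ 0 := by
  have hle := mass_mono (ht.G_mono le_rfl ht.1)
  rw [mass_G, mass_G, chi_zero] at hle
  exact (zero_lt_one.trans_le hle).ne'

theorem xiSq_ne_top (hd : 0 < d) (ht : M.IsSubcritical t) : M.xiSq t ≠ ⊤ := by
  rw [xiSq_eq_div]
  exact ENNReal.div_ne_top (ht.moment_F_ne_top hd 1) ht.chi_ne_zero

theorem xiSq_mul_chi (hd : 0 < d) (ht : M.IsSubcritical t) :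
    M.xiSq t * M.chi t = moment 1 (M.F t) := by
  rw [xiSq_eq_div, ENNReal.div_mul_cancel ht.chi_ne_zero (ht.chi_ne_top hd)]

theorem mass_errorKernel (hd : 0 < d) (ht : M.IsSubcritical t) :
    mass (M.errorKernel t) = .ofReal (∑' x, M.H t x) := by
  have hsum := ENNReal.summable_toReal (ht.mass_errorKernel_ne_top hd)
  simp only [errorKernel, ENNReal.toReal_ofReal (M.H_nonneg t _)] at hsum
  rw [ENNReal.ofReal_tsum_of_nonneg (M.H_nonneg t) hsum]
  rfl

theorem moment_one_errorKernel (ht : M.IsSubcritical t) :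
    moment 1 (M.errorKernel t) = .ofReal (∑' x, sqNorm x * M.H t x) := by
  have hsum := ENNReal.summable_toReal (ht.moment_errorKernel_ne_top 1)
  simp only [errorKernel, evenPowSum_one, ENNReal.toReal_mul,
    ENNReal.toReal_ofReal (M.H_nonneg t _), ENNReal.toReal_ofReal (sqNorm_nonneg _)] at hsum
  rw [ENNReal.ofReal_tsum_of_nonneg
    (fun x => mul_nonneg (sqNorm_nonneg x) (M.H_nonneg t x)) hsum]
  simp only [moment, errorKernel, evenPowSum_one, ENNReal.ofReal_mul (sqNorm_nonneg _)]

theorem errorLE_of_E_le (hd : 0 < d) (hβ : M.IsSubcritical β) (hE : M.E β ≤ .ofReal δ)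
    (ht : t ∈ Icc 0 β) : M.ErrorLE δ t := by
  have htβ := hβ.mono ht.1 ht.2
  have hle : mass (M.errorKernel t) + moment 1 (M.errorKernel t) / M.xiSq t ≤ .ofReal δ := by
    rw [htβ.mass_errorKernel hd, htβ.moment_one_errorKernel]
    exact (le_iSup₂ (f := fun s (_ : s ∈ Icc (0 : ℝ) β) => ENNReal.ofReal (∑' x, M.H s x) +
      ENNReal.ofReal (∑' x, sqNorm x * M.H s x) / M.xiSq s) t ht).trans hE
  exact ⟨le_self_add.trans hle, (ENNReal.div_le_iff_le_mul (.inr ENNReal.ofReal_ne_top)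
    (.inl (htβ.xiSq_ne_top hd))).1 (le_add_self.trans hle)⟩

end IsSubcritical

theorem isSubcritical_and_E_le_of_lt_betaOf (hβ₀ : 0 ≤ β) (hβ : β < M.betaOf δ) :
    M.IsSubcritical β ∧ M.E β ≤ .ofReal δ := by
  have hne : {b : ℝ | 0 ≤ b ∧ ENNReal.ofReal b < M.βc ∧ M.E b < ENNReal.ofReal δ}.Nonempty := by
    refine Set.nonempty_iff_ne_empty.2 fun hempty => hβ₀.not_gt ?_
    rwa [betaOf, hempty, Real.sSup_empty] at hβ
  obtain ⟨b, ⟨hb₀, hbc, hbE⟩, hb⟩ := exists_lt_of_lt_csSup hne hβ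
  refine ⟨IsSubcritical.mono ⟨hb₀, hbc⟩ hβ₀ hb.le, le_trans ?_ hbE.le⟩
  exact biSup_mono fun _ hs => ⟨hs.1, hs.2.trans hb.le⟩

section Flow

theorem moment_one_conv_kernel {f : IntLattice d → ℝ≥0∞} (hf : f.Even) :
    moment 1 (conv M.kernel f) = ∑' x, .ofReal (M.sigma ^ 2 + evenPowSum 1 x) * f x := by
  rw [moment_one_conv _ hf, moment_one_kernel, mass_kernel, one_mul, mass, moment,
    ← ENNReal.tsum_mul_left, ← ENNReal.tsum_add]
  simp only [ENNReal.ofReal_add (sq_nonneg M.sigma) (evenPowSum_nonneg 1 _), add_mul]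

variable {f : IntLattice d → ℝ≥0∞}

theorem moment_one_conv_kernel_conv_G (hf : f.Even) (t : ℝ) :
    ∑' x, .ofReal (M.sigma ^ 2 + evenPowSum 1 x) * conv (M.G t) (conv f (M.G t)) x =
      moment 1 (M.F t) * (mass f * M.chi t) + M.chi t * moment 1 (conv f (M.G t)) := by
  have hfG := even_conv hf (M.even_G t)
  rw [← moment_one_conv_kernel (even_conv (M.even_G t) hfG), ← conv_assoc, ← F_eq_conv,
    moment_one_conv _ hfG, mass_conv, mass_F, mass_G]

theorem ErrorLE.moment_one_conv_le (hd : 0 < d) (ht : M.IsSubcritical t) (hE : M.ErrorLE δ t) :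
    moment 1 (conv (M.errorKernel t) (M.G t)) ≤ 2 * (.ofReal δ * moment 1 (M.F t)) := by
  rw [moment_one_conv _ (M.even_G t), two_mul, mass_G]
  refine add_le_add ?_ (mul_le_mul' hE.1 ?_)
  · rw [← ht.xiSq_mul_chi hd, ← mul_assoc]
    exact mul_le_mul_left hE.2 _
  · rw [moment_one_F]
    exact le_add_self

theorem IsSubcritical.rightDerivLE_neg_chiReal (hd : 0 < d) (hβ : M.IsSubcritical β)
    (hδ : 0 ≤ δ) (ht : t ∈ Ico 0 β) (hE : M.ErrorLE δ t) :
    RightDerivLE (fun z => -M.chiReal z) (-((1 - δ) * M.chiReal t ^ 2)) t := by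
  have htβ := hβ.mono ht.1 ht.2.le
  have hX : 0 ≤ M.chiReal t := ENNReal.toReal_nonneg
  have hsum : ∀ f : IntLattice d → ℝ≥0∞, ∑' x, .ofReal ((fun _ => 1) x) * f x = mass f := by
    simp [mass]
  have hderiv := hβ.rightDerivLE_neg_tsum_mul_G (w := fun _ => 1) (A := M.chiReal t ^ 2)
    (B := δ * M.chiReal t ^ 2) hd ht (fun _ => zero_le_one)
    (fun z hz => by rw [hsum]; exact (hβ.mono hz.1 hz.2).chi_ne_top hd) (by positivity)
    (by rw [hsum, mass_conv, mass_conv, mass_kernel, mass_G, one_mul, htβ.chi_eq hd,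
      ← ENNReal.ofReal_mul hX, sq])
    (by
      rw [hsum, mass_conv, mass_conv, mass_G, ENNReal.ofReal_mul hδ, ENNReal.ofReal_pow hX,
        ← htβ.chi_eq hd, sq, mul_left_comm]
      exact mul_le_mul_left hE.1 _)
  simp only [hsum] at hderiv
  rwa [← one_sub_mul] at hderiv

theorem IsSubcritical.rightDerivLE_neg_momentReal_one (hd : 0 < d) (hβ : M.IsSubcritical β)
    (hδ : 0 ≤ δ) (ht : t ∈ Ico 0 β) (hE : M.ErrorLE δ t) :
    RightDerivLE (fun z => -M.momentReal 1 z)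
      (-((2 - 3 * δ) * (M.chiReal t * M.momentReal 1 t))) t := by
  have htβ := hβ.mono ht.1 ht.2.le
  have hX : 0 ≤ M.chiReal t := ENNReal.toReal_nonneg
  have hY : 0 ≤ M.momentReal 1 t := momentReal_nonneg 1 t
  have hXY : ENNReal.ofReal (M.chiReal t * M.momentReal 1 t) = M.chi t * moment 1 (M.F t) := by
    rw [ENNReal.ofReal_mul hX, ← htβ.chi_eq hd, ← htβ.moment_F_eq hd]
  have hG : ∀ z, ∑' x, .ofReal (M.sigma ^ 2 + evenPowSum 1 x) * M.G z x = moment 1 (M.F z) :=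
    fun z => (moment_one_conv_kernel (M.even_G z)).symm
  have hderiv := hβ.rightDerivLE_neg_tsum_mul_G (w := fun x => M.sigma ^ 2 + evenPowSum 1 x)
    (A := 2 * (M.chiReal t * M.momentReal 1 t)) (B := 3 * δ * (M.chiReal t * M.momentReal 1 t))
    hd ht (fun x => add_nonneg (sq_nonneg _) (evenPowSum_nonneg 1 x))
    (fun z hz => by rw [hG]; exact (hβ.mono hz.1 hz.2).moment_F_ne_top hd 1) (by positivity)
    (by
      rw [moment_one_conv_kernel_conv_G M.even_kernel, mass_kernel, ← F_eq_conv,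
        ENNReal.ofReal_mul zero_le_two, hXY, ENNReal.ofReal_ofNat]
      exact le_of_eq (by ring))
    (by
      rw [moment_one_conv_kernel_conv_G (M.even_errorKernel t), ENNReal.ofReal_mul (by positivity),
        hXY, ENNReal.ofReal_mul zero_le_three, ENNReal.ofReal_ofNat]
      calc _ ≤ moment 1 (M.F t) * (.ofReal δ * M.chi t) +
            M.chi t * (2 * (.ofReal δ * moment 1 (M.F t))) := by
            gcongr
            · exact hE.1
            · exact hE.moment_one_conv_le hd htβ
        _ = _ := by ring)
  simp only [hG] at hderiv
  rwa [← sub_mul] at hderiv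

theorem IsSubcritical.secondMomentFlow (hd : 0 < d) (hβ : M.IsSubcritical β) (hδ : 0 ≤ δ)
    (hE : ∀ t ∈ Icc 0 β, M.ErrorLE δ t) :
    SecondMomentFlow β δ M.chiReal (M.momentReal 1) where
  one_le_mass _ ht := (hβ.mono ht.1 ht.2).one_le_chiReal hd
  one_le_second _ ht := (hβ.mono ht.1 ht.2).one_le_momentReal hd 1
  monotoneOn_mass := hβ.monotoneOn_chiReal hd
  monotoneOn_second := hβ.monotoneOn_momentReal hd 1
  mass_le _ _ ht htz hz := chiReal_le_add hd ht htz (hβ.mono (ht.trans htz) hz)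
  second_le _ _ ht htz hz := momentReal_one_le_add hd ht htz (hβ.mono (ht.trans htz) hz)
  rightDerivLE_neg_mass t ht :=
    hβ.rightDerivLE_neg_chiReal hd hδ ht (hE t (Ico_subset_Icc_self ht))
  rightDerivLE_neg_second t ht :=
    hβ.rightDerivLE_neg_momentReal_one hd hδ ht (hE t (Ico_subset_Icc_self ht))

end Flow

/-- Constants for which the moment of order `2 q` of `F_t` is at most
`momentConst d c₀ q * χ(t) * ξ(t) ^ (2 q)`. -/
def momentConst (d : ℕ) (c₀ : ℝ) : ℕ → ℝ
  | 0 => d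
  | 1 => 1
  | q + 2 => 8 * 4 ^ (q + 2) * momentConst d c₀ (q + 1) + d * c₀⁻¹ ^ (2 * (q + 2))

theorem one_le_momentConst (hd : 0 < d) (hc : 0 < c₀) : ∀ q, 1 ≤ momentConst d c₀ q
  | 0 => Nat.one_le_cast.2 hd
  | 1 => le_rfl
  | q + 2 => by
    have hprev := one_le_momentConst hd hc (q + 1)
    have hpow : (1 : ℝ) ≤ 4 ^ (q + 2) := one_le_pow₀ (by norm_num)
    have : 0 ≤ d * c₀⁻¹ ^ (2 * (q + 2)) := by positivity
    simp only [momentConst]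
    nlinarith

theorem momentReal_zero_le (hc : 0 < c₀) (q : ℕ) :
    M.momentReal q 0 ≤ d * c₀⁻¹ ^ (2 * q) * (M.sigma ^ 2) ^ q := by
  have hR := M.K.R_ge_one
  calc
    M.momentReal q 0 ≤ d * M.K.R ^ (2 * q) := by
      rw [momentReal, F_zero]
      exact ENNReal.toReal_le_of_le_ofReal (by positivity) (M.moment_kernel_le q)
    _ ≤ d * (c₀⁻¹ * M.sigma) ^ (2 * q) := by gcongr; exact M.R_le_inv_mul_sigma hc
    _ = _ := by rw [mul_pow, ← pow_mul, mul_assoc]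

theorem IsSubcritical.momentReal_mul_pow_le (hd : 0 < d) (hc : 0 < c₀) (hβ : M.IsSubcritical β)
    (h : SecondMomentFlow β δ M.chiReal (M.momentReal 1)) (hδ : 0 ≤ δ) (j : ℕ)
    (hj : 3 * (j + 1) * δ ≤ 1 / 4) :
    ContinuousOn (M.momentReal (j + 1)) (Icc 0 β) ∧ ∀ t ∈ Icc 0 β,
      M.momentReal (j + 1) t * M.chiReal t ^ j ≤
        momentConst d c₀ (j + 1) * M.momentReal 1 t ^ (j + 1) := by
  induction j with
  | zero => exact ⟨h.continuousOn_second, fun t _ => by simp [momentConst]⟩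
  | succ j ih =>
    push_cast at hj
    obtain ⟨hcont, hle⟩ := ih (by linarith)
    have hflow : HigherMomentFlow β j M.chiReal (M.momentReal 1) (M.momentReal (j + 1))
        (M.momentReal (j + 2)) :=
      { lower_nonneg := fun t _ => momentReal_nonneg (j + 1) t
        monotoneOn_lower := hβ.monotoneOn_momentReal hd (j + 1)
        continuousOn_lower := hcont
        pos := fun t ht => zero_lt_one.trans_le ((hβ.mono ht.1 ht.2).one_le_momentReal hd _)
        monotoneOn := hβ.monotoneOn_momentReal hd (j + 2)
        le_add := fun _ _ ht htz hz =>
          momentReal_succ_le_add hd ht htz (hβ.mono (ht.trans htz) hz) (j + 1) }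
    have hprev := one_le_momentConst hd hc (j + 1)
    have hinit : d * c₀⁻¹ ^ (2 * (j + 2)) ≤ momentConst d c₀ (j + 2) :=
      le_add_of_nonneg_left (by positivity)
    refine ⟨hflow.continuousOn h, fun t => hflow.mul_pow_le h (by linarith) hle
      (zero_lt_one.trans_le (one_le_momentConst hd hc (j + 2)))
      (le_add_of_nonneg_right (by positivity)) ?_⟩
    rw [chiReal_zero, one_pow, mul_one, momentReal_one_zero]
    exact (momentReal_zero_le hc (j + 2)).trans (by gcongr)

end Model

section Renewal

variable {E : Type*} [AddCommGroup E]

theorem convPow_succ' (f : E → ℝ≥0∞) (n : ℕ) : convPow f (n + 1) = conv (convPow f n) f :=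
  conv_comm _ _

theorem le_sum_smul_conv_convPow_add {c : ℝ≥0∞} {A P f : E → ℝ≥0∞} (h : f ≤ A + c • conv P f)
    (n : ℕ) :
    f ≤ ∑ i ∈ Finset.range n, c ^ i • conv (convPow P i) A + c ^ n • conv (convPow P n) f := by
  induction n with
  | zero => simp [convPow]
  | succ n ih =>
    have hstep : conv (convPow P n) f ≤
        conv (convPow P n) A + c • conv (convPow P (n + 1)) f := by
      rw [convPow_succ', conv_assoc, ← conv_smul, ← conv_add]
      exact conv_mono le_rfl h
    rw [Finset.sum_range_succ, add_assoc, pow_succ, mul_smul, ← smul_add]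
    exact ih.trans (add_le_add_right (fun x => mul_le_mul_right (hstep x) _) _)

end Renewal

section Bracket

variable {d : ℕ} {a s t : ℝ}

theorem inv_bracket_pow_le_rpow_neg {n : ℕ} (hs : 0 ≤ s) (ha : a ≤ n) (x : IntLattice d) :
    (bracket s x ^ n)⁻¹ ≤ bracket s x ^ (-a) := by
  rw [← Real.rpow_natCast, ← Real.rpow_neg (bracket_pos hs x).le]
  exact Real.rpow_le_rpow_of_exponent_le (one_le_bracket hs x) (neg_le_neg ha)

theorem bracket_mul_rpow_neg_le {μ : ℝ} (hs : 0 < s) (hμ : 1 ≤ μ) (ha : 0 ≤ a)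
    (x : IntLattice d) : bracket (μ * s) x ^ (-a) ≤ μ ^ a * bracket s x ^ (-a) := by
  have hμ0 : 0 < μ := zero_lt_one.trans_le hμ
  have hle : bracket s x / μ ≤ bracket (μ * s) x := by
    have hdiv : 1 / μ ≤ 1 := (div_le_one hμ0).2 hμ
    rw [bracket, bracket, add_div, div_div, mul_comm μ]
    linarith
  have hpos : 0 < bracket s x / μ := div_pos (bracket_pos hs.le x) hμ0
  refine (Real.rpow_le_rpow_of_nonpos hpos hle (neg_nonpos.2 ha)).trans_eq ?_
  rw [Real.div_rpow (bracket_pos hs.le x).le hμ0.le, Real.rpow_neg hμ0.le, div_inv_eq_mul, mul_comm]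

theorem inv_bracket_pow_le_pow_mul_rpow_neg {μ : ℝ} (hs : 0 < s) (ht : 0 < t) (hμ : 1 ≤ μ)
    (hts : t ≤ μ * s) (ha : 0 ≤ a) (had : a ≤ d) (x : IntLattice d) :
    (bracket t x ^ (4 * d))⁻¹ ≤ μ ^ d * bracket s x ^ (-a) := by
  have hμs : 0 ≤ μ * s := ht.le.trans hts
  have hpow : 0 < bracket (μ * s) x ^ (4 * d) := pow_pos (bracket_pos hμs x) _
  have had' : a ≤ (4 * d : ℕ) := by
    push_cast
    linarith
  calc
    (bracket t x ^ (4 * d))⁻¹ ≤ (bracket (μ * s) x ^ (4 * d))⁻¹ :=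
      inv_anti₀ hpow (pow_le_pow_left₀ (bracket_pos hμs x).le (bracket_anti ht hts x) _)
    _ ≤ bracket (μ * s) x ^ (-a) := inv_bracket_pow_le_rpow_neg hμs had' x
    _ ≤ μ ^ a * bracket s x ^ (-a) := bracket_mul_rpow_neg_le hs hμ ha x
    _ ≤ μ ^ d * bracket s x ^ (-a) := by
      have := Real.rpow_nonneg (bracket_pos hs.le x).le (-a)
      rw [← Real.rpow_natCast μ d]
      gcongr

theorem boxIndicator_mono (hst : s ≤ t) :
    (boxIndicator s : IntLattice d → ℝ≥0∞) ≤ boxIndicator t :=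
  Set.indicator_le_indicator_of_subset (fun _ hx => le_trans hx hst) fun _ => zero_le

theorem boxIndicator_le_one (x : IntLattice d) : boxIndicator s x ≤ 1 :=
  Set.indicator_le_self' (fun _ _ => zero_le) x

end Bracket

/-- The abstract input of the bootstrap. Each `F t` has mass `X t`, second moment `X t * r t ^ 2`
and correspondingly bounded higher moments, and the family satisfies a renewal inequality up to the
final time `β`, in which the mass can only grow about as fast as the square of the scale `r`. -/
structure RenewalSystem {d : ℕ} (κ : ℕ → ℝ) (β δ : ℝ) (F : ℝ → IntLattice d → ℝ≥0∞)
    (X r : ℝ → ℝ) : Prop where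
  isSymmFun : ∀ t, IsSymmFun (F t)
  mass_eq : ∀ t ∈ Icc 0 β, mass (F t) = .ofReal (X t)
  moment_one_eq : ∀ t ∈ Icc 0 β, moment 1 (F t) = .ofReal (X t * r t ^ 2)
  moment_le : ∀ t ∈ Icc 0 β, ∀ q ≤ 2 * d,
    moment q (F t) ≤ .ofReal (κ q * (X t * r t ^ (2 * q)))
  mass_zero : X 0 = 1
  one_le_mass : ∀ t ∈ Icc 0 β, 1 ≤ X t
  one_le_scale : ∀ t ∈ Icc 0 β, 1 ≤ r t
  continuousOn_scale : ContinuousOn r (Icc 0 β)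
  monotoneOn_scale : MonotoneOn r (Icc 0 β)
  le_add : ∀ t ∈ Icc 0 β, F β ≤ F t + ENNReal.ofReal (β - t) • conv (F t) (F β)
  mul_mass_le_one : ∀ t ∈ Icc 0 β, (1 - δ) * ((β - t) * X t) ≤ 1
  mul_log_mass_sub_le : ∀ t z, 0 ≤ t → t ≤ z → z ≤ β →
    (1 - 3 * δ) * (Real.log (X z) - Real.log (X t)) ≤ 2 * (Real.log (r z) - Real.log (r t))

/-- The step distribution obtained from `F t` by dividing by its mass. -/
def normalizedStep {α : Type*} (F : ℝ → α → ℝ≥0∞) (X : ℝ → ℝ) (t : ℝ) : α → ℝ≥0∞ :=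
  ENNReal.ofReal (X t)⁻¹ • F t

theorem smul_normalizedStep {α : Type*} {F : ℝ → α → ℝ≥0∞} {X : ℝ → ℝ} {t : ℝ} (hX : 0 < X t) :
    ENNReal.ofReal (X t) • normalizedStep F X t = F t := by
  rw [normalizedStep, smul_smul, ← ENNReal.ofReal_mul hX.le, mul_inv_cancel₀ hX.ne',
    ENNReal.ofReal_one, one_smul]

theorem pow_le_two_of_one_sub_mul_le_one {δ q : ℝ} (hδ : 0 ≤ δ) (hq : 0 ≤ q)
    (h : (1 - δ) * q ≤ 1) {n : ℕ} (hn : n * δ ≤ 1 / 2) : q ^ n ≤ 2 := by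
  rcases n.eq_zero_or_pos with rfl | hn0
  · simp
  have hn1 : (1 : ℝ) ≤ n := by exact_mod_cast hn0
  have hδ1 : δ ≤ 1 / 2 := by nlinarith
  have hpow : (1 - δ) ^ n * q ^ n ≤ 1 := by
    rw [← mul_pow]
    exact pow_le_one₀ (mul_nonneg (by linarith) hq) h
  have hbernoulli : 1 + n * (-δ) ≤ (1 + -δ) ^ n := one_add_mul_le_pow (by linarith) n
  rw [← sub_eq_add_neg] at hbernoulli
  nlinarith [pow_nonneg hq n]

theorem one_le_sqrt_natCast_add_one (k : ℕ) : 1 ≤ √((k : ℝ) + 1) :=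
  Real.one_le_sqrt.2 (le_add_of_nonneg_left k.cast_nonneg)

namespace RenewalSystem

variable {d : ℕ} {κ : ℕ → ℝ} {β δ : ℝ} {F : ℝ → IntLattice d → ℝ≥0∞} {X r : ℝ → ℝ} {t z : ℝ}

theorem isWalkStep_normalizedStep (S : RenewalSystem κ β δ F X r) (ht : t ∈ Icc 0 β) :
    IsWalkStep κ (2 * d) (r t) (normalizedStep F X t) := by
  have hX : 0 < X t := zero_lt_one.trans_le (S.one_le_mass t ht)
  have hXi : 0 ≤ (X t)⁻¹ := inv_nonneg.2 hX.le
  refine ⟨fun π e x => ?_, ?_, ?_, fun q hq => ?_⟩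
  · simp only [normalizedStep, Pi.smul_apply, S.isSymmFun t π e x]
  · rw [normalizedStep, mass_smul, S.mass_eq t ht, ← ENNReal.ofReal_mul hXi,
      inv_mul_cancel₀ hX.ne', ENNReal.ofReal_one]
  · rw [normalizedStep, moment_smul, S.moment_one_eq t ht, ← ENNReal.ofReal_mul hXi,
      inv_mul_cancel_left₀ hX.ne']
  · rw [normalizedStep, moment_smul]
    refine (mul_le_mul_right (S.moment_le t ht q hq) _).trans_eq ?_
    rw [← ENNReal.ofReal_mul hXi, mul_left_comm, inv_mul_cancel_left₀ hX.ne']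

theorem conv_convPow_normalizedStep_le (S : RenewalSystem κ β δ F X r) (hd : 0 < d)
    (hκ : ∀ q, 1 ≤ κ q) (ht : t ∈ Icc 0 β) (k : ℕ) (x : IntLattice d) :
    conv (convPow (normalizedStep F X t) k) (boxIndicator (r t)) x ≤ .ofReal
      (decayConst d κ / √(k + 1) ^ d * (bracket (√(k + 1) * r t) x ^ (4 * d))⁻¹) :=
  (S.isWalkStep_normalizedStep ht).conv_convPow_boxIndicator_le_decay hd hκ
    (zero_lt_one.trans_le (S.one_le_scale t ht)) k x

theorem le_smul_sum_convPow_add (S : RenewalSystem κ β δ F X r) (hδ : 0 ≤ δ) {n : ℕ}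
    (hn : n * δ ≤ 1 / 2) (ht : t ∈ Icc 0 β) :
    F β ≤ (2 * ENNReal.ofReal (X t)) •
        ∑ i ∈ Finset.range n, convPow (normalizedStep F X t) (i + 1) +
      (2 : ℝ≥0∞) • conv (convPow (normalizedStep F X t) n) (F β) := by
  set P := normalizedStep F X t
  set q := (β - t) * X t
  have hX : 0 < X t := zero_lt_one.trans_le (S.one_le_mass t ht)
  have hq0 : 0 ≤ q := mul_nonneg (sub_nonneg.2 ht.2) hX.le
  have hqpow : ∀ i ≤ n, ENNReal.ofReal q ^ i ≤ 2 := fun i hi => by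
    have hi' : i * δ ≤ 1 / 2 := le_trans (by gcongr) hn
    rw [← ENNReal.ofReal_pow hq0, ← ENNReal.ofReal_ofNat 2]
    exact ENNReal.ofReal_le_ofReal
      (pow_le_two_of_one_sub_mul_le_one hδ hq0 (S.mul_mass_le_one t ht) hi')
  have hrenewal : F β ≤ ENNReal.ofReal (X t) • P + ENNReal.ofReal q • conv P (F β) := by
    have hle := S.le_add t ht
    rwa [← smul_normalizedStep (F := F) hX, smul_conv, smul_smul,
      ← ENNReal.ofReal_mul (sub_nonneg.2 ht.2)] at hle
  refine (le_sum_smul_conv_convPow_add hrenewal n).trans (add_le_add ?_ fun x => ?_)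
  · rw [Finset.smul_sum]
    refine Finset.sum_le_sum fun i hi x => ?_
    rw [conv_smul, ← convPow_succ', smul_smul]
    exact mul_le_mul_left (mul_le_mul_left (hqpow i (Finset.mem_range.1 hi).le) _) _
  · exact mul_le_mul_left (hqpow n le_rfl) _

theorem conv_le_sum_add (S : RenewalSystem κ β δ F X r) (hδ : 0 ≤ δ) {n : ℕ}
    (hn : n * δ ≤ 1 / 2) (ht : t ∈ Icc 0 β) (B : IntLattice d → ℝ≥0∞) (x : IntLattice d) :
    conv (F β) B x ≤ 2 * ENNReal.ofReal (X t) *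
        ∑ i ∈ Finset.range n, conv (convPow (normalizedStep F X t) (i + 1)) B x +
      2 * conv (F β) (conv (convPow (normalizedStep F X t) n) B) x := by
  have hle := conv_mono (S.le_smul_sum_convPow_add hδ hn ht) (le_refl B) x
  rwa [add_conv, smul_conv, smul_conv, sum_conv, conv_comm (convPow _ n), conv_assoc,
    Pi.add_apply, Pi.smul_apply, Pi.smul_apply, Finset.sum_apply, smul_eq_mul,
    smul_eq_mul] at hle

theorem mass_le_of_scale_le (S : RenewalSystem κ β δ F X r) (hδ : 0 ≤ δ) {ν : ℝ} (ht : 0 ≤ t)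
    (htz : t ≤ z) (hz : z ≤ β) (hν : 1 ≤ ν) (hδν : 12 * δ * ν ^ 2 ≤ 1) (h : r z ≤ ν * r t) :
    X z ≤ 2 * ν ^ 2 * X t := by
  have hX : 0 < X t := zero_lt_one.trans_le (S.one_le_mass t ⟨ht, htz.trans hz⟩)
  have hXz : 0 < X z := zero_lt_one.trans_le (S.one_le_mass z ⟨ht.trans htz, hz⟩)
  have hr : 0 < r t := zero_lt_one.trans_le (S.one_le_scale t ⟨ht, htz.trans hz⟩)
  have hrz : 0 < r z := zero_lt_one.trans_le (S.one_le_scale z ⟨ht.trans htz, hz⟩)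
  have hlogr : Real.log (r z) ≤ Real.log ν + Real.log (r t) := by
    rw [← Real.log_mul (by linarith) hr.ne']
    exact Real.log_le_log hrz h
  have hlog : Real.log (2 * ν ^ 2) = Real.log 2 + 2 * Real.log ν := by
    rw [Real.log_mul two_ne_zero (by positivity), Real.log_pow, Nat.cast_two]
  have hloss : 3 * δ * Real.log (2 * ν ^ 2) ≤ Real.log 2 :=
    calc
      3 * δ * Real.log (2 * ν ^ 2) ≤ 3 * δ * (2 * ν ^ 2) := by
        gcongr
        exact Real.log_le_self (by positivity)
      _ ≤ 1 / 2 := by linarith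
      _ ≤ Real.log 2 := by linarith [Real.log_two_gt_d9]
  have hδ3 : 0 < 1 - 3 * δ := by nlinarith
  have hdiff : Real.log (X z) - Real.log (X t) ≤ Real.log (2 * ν ^ 2) :=
    le_of_mul_le_mul_left (by linarith [S.mul_log_mass_sub_le t z ht htz hz]) hδ3
  rw [← Real.log_le_log_iff hXz (by positivity), Real.log_mul (by positivity) hX.ne']
  linarith

theorem exists_scale_eq (S : RenewalSystem κ β δ F X r) (ht : t ∈ Icc 0 β) {s : ℝ}
    (hts : r t ≤ s) (hs : s ≤ r β) : ∃ z ∈ Icc t β, r z = s :=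
  intermediate_value_Icc ht.2 (S.continuousOn_scale.mono (Icc_subset_Icc_left ht.1)) ⟨hts, hs⟩

theorem conv_boxIndicator_le_of_scale_le (S : RenewalSystem κ β δ F X r) (hd : 0 < d)
    (hκ : ∀ q, 1 ≤ κ q) {l a : ℝ} (ht : t ∈ Icc 0 β) (hl : 1 ≤ l) (hr : r β ≤ l * r t)
    (ha : 0 ≤ a) (had : a ≤ d) (x : IntLattice d) :
    conv (F β) (boxIndicator (r t)) x ≤
      .ofReal (X β * (decayConst d κ * (2 * l) ^ d * bracket (r t) x ^ (-a))) := by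
  have hβ : β ∈ Icc 0 β := ⟨ht.1.trans ht.2, le_rfl⟩
  have hK := decayConst_nonneg (d := d) fun q => zero_le_one.trans (hκ q)
  have hX : 0 < X β := zero_lt_one.trans_le (S.one_le_mass β hβ)
  have hrt : 0 < r t := zero_lt_one.trans_le (S.one_le_scale t ht)
  have hrβ : 0 < r β := zero_lt_one.trans_le (S.one_le_scale β hβ)
  have hsqrt : 1 ≤ √(((1 : ℕ) : ℝ) + 1) := one_le_sqrt_natCast_add_one 1
  have hsqrt2 : √(((1 : ℕ) : ℝ) + 1) ≤ 2 := Real.sqrt_le_iff.2 (by norm_num)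
  have hstep : conv (F β) (boxIndicator (r t)) x ≤ ENNReal.ofReal (X β) *
      conv (convPow (normalizedStep F X β) 1) (boxIndicator (r β)) x := by
    rw [convPow_one, ← smul_eq_mul, ← Pi.smul_apply, ← smul_conv, smul_normalizedStep hX]
    exact conv_mono le_rfl (boxIndicator_mono (S.monotoneOn_scale ht hβ ht.2)) x
  refine (hstep.trans
    (mul_le_mul_right (S.conv_convPow_normalizedStep_le hd hκ hβ 1 x) _)).trans ?_
  rw [← ENNReal.ofReal_mul hX.le, mul_assoc (decayConst d κ)]
  have hweight := inv_bracket_pow_le_pow_mul_rpow_neg (x := x) (μ := 2 * l) hrt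
    (t := √(((1 : ℕ) : ℝ) + 1) * r β) (by positivity) (by linarith) (by nlinarith) ha had
  have : 0 ≤ (bracket (√(((1 : ℕ) : ℝ) + 1) * r β) x ^ (4 * d))⁻¹ :=
    inv_nonneg.2 (pow_nonneg (bracket_pos (by positivity) x).le _)
  gcongr
  exact div_le_self hK (one_le_pow₀ hsqrt)

theorem conv_conv_convPow_le (S : RenewalSystem κ β δ F X r) (hd : 0 < d) (hκ : ∀ q, 1 ≤ κ q)
    {a D : ℝ} (ht : t ∈ Icc 0 β) (hD : 0 ≤ D) (ha : 0 ≤ a) (had : a ≤ d) (k : ℕ)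
    (hU : ∀ w, conv (F β) (boxIndicator (√(k + 1) * r t)) w ≤
      .ofReal (D * bracket (√(k + 1) * r t) w ^ (-a))) (x : IntLattice d) :
    conv (F β) (conv (convPow (normalizedStep F X t) k) (boxIndicator (r t))) x ≤
      .ofReal (decayConst d κ / √(k + 1) ^ d *
        (weightedSumConst d * (D * bracket (√(k + 1) * r t) x ^ (-a)))) := by
  have hs : 1 ≤ √((k : ℝ) + 1) * r t :=
    one_le_mul_of_one_le_of_one_le (one_le_sqrt_natCast_add_one k) (S.one_le_scale t ht)
  have hc : 0 ≤ decayConst d κ / √((k : ℝ) + 1) ^ d :=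
    div_nonneg (decayConst_nonneg fun q => zero_le_one.trans (hκ q)) (by positivity)
  rw [ENNReal.ofReal_mul hc]
  refine le_trans ?_ (mul_le_mul_right (tsum_mul_inv_bracket_pow_le hD ha had hs hU x) _)
  rw [conv, ← ENNReal.tsum_mul_left]
  refine ENNReal.tsum_le_tsum fun y => ?_
  rw [mul_left_comm, ← ENNReal.ofReal_mul hc]
  exact mul_le_mul_right (S.conv_convPow_normalizedStep_le hd hκ ht k (x - y)) _

end RenewalSystem

/-- Box averages of `F β` at the scale `r t` are at most `D * X t` and decay with exponent `a`,
for all `t ≤ β`. -/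
def ScaleBound {d : ℕ} (β : ℝ) (F : ℝ → IntLattice d → ℝ≥0∞) (X r : ℝ → ℝ) (a D : ℝ) : Prop :=
  ∀ t ∈ Icc 0 β, ∀ x, conv (F β) (boxIndicator (r t)) x ≤
    .ofReal (D * X t * bracket (r t) x ^ (-a))

/-- The constant gained in one round of the bootstrap with `k` renewal steps. -/
def bootstrapConst (d : ℕ) (κ : ℕ → ℝ) (k : ℕ) : ℝ :=
  2 * √(k + 1) ^ 2 * (decayConst d κ * (2 * √(k + 1)) ^ d) +
    2 * (k * (decayConst d κ * √(k + 1) ^ d))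

theorem exists_mul_sqrt_rpow_neg_le (C : ℝ) {θ η : ℝ} (hη : 0 < η) (hθ : 0 < θ) :
    ∃ k : ℕ, C * √(k + 1) ^ (-η) ≤ θ := by
  have hsqrt : Tendsto (fun k : ℕ => √((k : ℝ) + 1)) atTop atTop :=
    Real.tendsto_sqrt_atTop.comp (tendsto_atTop_add_const_right _ _ tendsto_natCast_atTop_atTop)
  have hlim := ((tendsto_rpow_neg_atTop hη).comp hsqrt).const_mul C
  rw [mul_zero] at hlim
  obtain ⟨k, hk⟩ := (hlim.eventually_lt_const hθ).exists
  exact ⟨k, hk.le⟩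

namespace RenewalSystem

variable {d : ℕ} {κ : ℕ → ℝ} {β δ a D : ℝ} {F : ℝ → IntLattice d → ℝ≥0∞} {X r : ℝ → ℝ} {t z : ℝ}

theorem scaleBound_mono (S : RenewalSystem κ β δ F X r) {D' : ℝ} (hD : D ≤ D')
    (hB : ScaleBound β F X r a D) : ScaleBound β F X r a D' := fun t ht x => by
  have := zero_le_one.trans (S.one_le_mass t ht)
  have := (bracket_pos (zero_le_one.trans (S.one_le_scale t ht)) x).le
  exact (hB t ht x).trans (by gcongr)

theorem scaleBound_initial (S : RenewalSystem κ β δ F X r) (hd : 0 < d) (hκ : ∀ q, 1 ≤ κ q)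
    (hβ : 0 ≤ β) (ha : 0 ≤ a) (had : a ≤ d) :
    ScaleBound β F X r a (X β * (decayConst d κ * (2 * r β) ^ d)) := fun t ht x => by
  have hK := decayConst_nonneg (d := d) fun q => zero_le_one.trans (hκ q)
  have hβ' : β ∈ Icc 0 β := ⟨hβ, le_rfl⟩
  have hX := S.one_le_mass β hβ'
  have hr := S.one_le_scale β hβ'
  have hrt := S.one_le_scale t ht
  have := (bracket_pos (zero_le_one.trans hrt) x).le
  refine (S.conv_boxIndicator_le_of_scale_le hd hκ ht hr
    (le_mul_of_one_le_right (zero_le_one.trans hr) hrt) ha had x).trans ?_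
  rw [← mul_assoc]
  exact ENNReal.ofReal_le_ofReal (mul_le_mul_of_nonneg_right
    (le_mul_of_one_le_right (by positivity) (S.one_le_mass t ht)) (Real.rpow_nonneg this _))

theorem sum_conv_convPow_le (S : RenewalSystem κ β δ F X r) (hd : 0 < d) (hκ : ∀ q, 1 ≤ κ q)
    (ht : t ∈ Icc 0 β) (ha : 0 ≤ a) (had : a ≤ d) (k : ℕ) (x : IntLattice d) :
    ∑ i ∈ Finset.range k, conv (convPow (normalizedStep F X t) (i + 1)) (boxIndicator (r t)) x ≤
      .ofReal (k * (decayConst d κ * √(k + 1) ^ d * bracket (r t) x ^ (-a))) := by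
  have hK := decayConst_nonneg (d := d) fun q => zero_le_one.trans (hκ q)
  have hr : 0 < r t := zero_lt_one.trans_le (S.one_le_scale t ht)
  rw [ENNReal.ofReal_mul k.cast_nonneg, ENNReal.ofReal_natCast, ← nsmul_eq_mul]
  refine (Finset.sum_le_card_nsmul _ _ _ fun i hi => ?_).trans_eq (by rw [Finset.card_range])
  refine (S.conv_convPow_normalizedStep_le hd hκ ht (i + 1) x).trans ?_
  have hμ : 1 ≤ √(((i + 1 : ℕ) : ℝ) + 1) := one_le_sqrt_natCast_add_one (i + 1)
  have hμν : √(((i + 1 : ℕ) : ℝ) + 1) ≤ √((k : ℝ) + 1) := by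
    gcongr
    exact Finset.mem_range.1 hi
  have hweight := inv_bracket_pow_le_pow_mul_rpow_neg (x := x) (μ := √((k : ℝ) + 1)) hr
    (t := √(((i + 1 : ℕ) : ℝ) + 1) * r t) (by positivity) (hμ.trans hμν) (by gcongr) ha had
  have : 0 ≤ (bracket (√(((i + 1 : ℕ) : ℝ) + 1) * r t) x ^ (4 * d))⁻¹ :=
    inv_nonneg.2 (pow_nonneg (bracket_pos (by positivity) x).le _)
  rw [mul_assoc]
  gcongr
  exact div_le_self hK (one_le_pow₀ hμ)

theorem two_mul_conv_conv_convPow_le (S : RenewalSystem κ β δ F X r) (hd : 0 < d)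
    (hκ : ∀ q, 1 ≤ κ q) (ha : 0 ≤ a) (had : a ≤ d) (hD : 0 ≤ D) (hδ : 0 ≤ δ) {k : ℕ}
    (hδk : 12 * δ * (k + 1) ≤ 1)
    (hk : 4 * decayConst d κ * weightedSumConst d * √(k + 1) ^ (a + 2 - d) ≤ 1 / 2)
    (hB : ScaleBound β F X r a D) (ht : t ∈ Icc 0 β) (hcase : √(k + 1) * r t ≤ r β)
    (x : IntLattice d) :
    2 * conv (F β) (conv (convPow (normalizedStep F X t) k) (boxIndicator (r t))) x ≤
      .ofReal (D / 2 * X t * bracket (r t) x ^ (-a)) := by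
  set ν := √((k : ℝ) + 1)
  have hν : 1 ≤ ν := one_le_sqrt_natCast_add_one k
  have hν2 : ν ^ 2 = k + 1 := Real.sq_sqrt (by positivity)
  have hrt : 0 < r t := zero_lt_one.trans_le (S.one_le_scale t ht)
  obtain ⟨z, hz, hrz⟩ := S.exists_scale_eq ht (le_mul_of_one_le_left hrt.le hν) hcase
  have hz' : z ∈ Icc 0 β := ⟨ht.1.trans hz.1, hz.2⟩
  have hX : 0 ≤ X t := zero_le_one.trans (S.one_le_mass t ht)
  have hXz : 0 ≤ X z := zero_le_one.trans (S.one_le_mass z hz')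
  have hgrowth := S.mass_le_of_scale_le hδ ht.1 hz.1 hz.2 hν (by rwa [hν2]) hrz.le
  have hK := decayConst_nonneg (d := d) fun q => zero_le_one.trans (hκ q)
  have hW := weightedSumConst_pos d
  have hw : 0 ≤ bracket (r t) x ^ (-a) := Real.rpow_nonneg (bracket_pos hrt.le x).le _
  have hpow : ν ^ (a + 2 - d) = ν ^ a * ν ^ 2 / ν ^ d := by
    rw [Real.rpow_sub (by linarith), Real.rpow_add (by linarith), Real.rpow_natCast, Real.rpow_two]
  refine (mul_le_mul_right (S.conv_conv_convPow_le hd hκ ht (mul_nonneg hD hXz) ha had k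
    (by simpa only [hrz] using hB z hz') x) 2).trans ?_
  rw [← ENNReal.ofReal_ofNat 2, ← ENNReal.ofReal_mul zero_le_two]
  refine ENNReal.ofReal_le_ofReal ?_
  calc
    2 * (decayConst d κ / ν ^ d * (weightedSumConst d * (D * X z * bracket (ν * r t) x ^ (-a))))
      ≤ 2 * (decayConst d κ / ν ^ d * (weightedSumConst d *
          (D * (2 * ν ^ 2 * X t) * (ν ^ a * bracket (r t) x ^ (-a))))) := by
      have := bracket_pos (s := ν * r t) (by positivity) x
      gcongr
      exact bracket_mul_rpow_neg_le hrt hν ha x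
    _ = (4 * decayConst d κ * weightedSumConst d * ν ^ (a + 2 - d)) *
          (D * X t * bracket (r t) x ^ (-a)) := by
      rw [hpow]
      ring
    _ ≤ 1 / 2 * (D * X t * bracket (r t) x ^ (-a)) := by gcongr
    _ = _ := by ring

theorem scaleBound_step (S : RenewalSystem κ β δ F X r) (hd : 0 < d) (hκ : ∀ q, 1 ≤ κ q)
    (ha : 0 ≤ a) (had : a ≤ d) (hD : 0 ≤ D) (hδ : 0 ≤ δ) {k : ℕ} (hδk : 12 * δ * (k + 1) ≤ 1)
    (hk : 4 * decayConst d κ * weightedSumConst d * √(k + 1) ^ (a + 2 - d) ≤ 1 / 2)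
    (hB : ScaleBound β F X r a D) : ScaleBound β F X r a (bootstrapConst d κ k + D / 2) := by
  intro t ht x
  have hν : 1 ≤ √((k : ℝ) + 1) := one_le_sqrt_natCast_add_one k
  have hν2 : √((k : ℝ) + 1) ^ 2 = k + 1 := Real.sq_sqrt (by positivity)
  have hX : 0 ≤ X t := zero_le_one.trans (S.one_le_mass t ht)
  have hK := decayConst_nonneg (d := d) fun q => zero_le_one.trans (hκ q)
  set w := bracket (r t) x ^ (-a)
  have hw : 0 ≤ w :=
    Real.rpow_nonneg (bracket_pos (zero_le_one.trans (S.one_le_scale t ht)) x).le _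
  set A := 2 * √((k : ℝ) + 1) ^ 2 * (decayConst d κ * (2 * √((k : ℝ) + 1)) ^ d)
  set B := k * (decayConst d κ * √((k : ℝ) + 1) ^ d)
  have hA : 0 ≤ A * X t * w := by positivity
  have hB0 : 0 ≤ 2 * B * X t * w := by positivity
  have hsplit : (bootstrapConst d κ k + D / 2) * X t * w =
      A * X t * w + 2 * B * X t * w + D / 2 * X t * w := by
    rw [bootstrapConst]
    ring
  have hDw : 0 ≤ D / 2 * X t * w := by positivity
  rw [hsplit]
  rcases le_total (r β) (√(k + 1) * r t) with hcase | hcase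
  · refine (S.conv_boxIndicator_le_of_scale_le hd hκ ht hν hcase ha had x).trans
      (ENNReal.ofReal_le_ofReal ?_)
    have hgrowth := S.mass_le_of_scale_le hδ ht.1 ht.2 le_rfl hν (by rwa [hν2]) hcase
    calc X β * (decayConst d κ * (2 * √(k + 1)) ^ d * w)
        ≤ 2 * √(k + 1) ^ 2 * X t * (decayConst d κ * (2 * √(k + 1)) ^ d * w) := by gcongr
      _ = A * X t * w := by ring
      _ ≤ _ := by linarith
  · refine (S.conv_le_sum_add hδ (by nlinarith) ht _ x).trans ((add_le_add
      (mul_le_mul_right (S.sum_conv_convPow_le hd hκ ht ha had k x) _)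
      (S.two_mul_conv_conv_convPow_le hd hκ ha had hD hδ hδk hk hB ht hcase x)).trans ?_)
    rw [← ENNReal.ofReal_ofNat 2, ← ENNReal.ofReal_mul zero_le_two,
      ← ENNReal.ofReal_mul (by positivity), ← ENNReal.ofReal_add (by positivity) hDw]
    refine ENNReal.ofReal_le_ofReal (add_le_add_left (le_trans (le_of_eq ?_)
      (le_add_of_nonneg_left hA)) _)
    ring

theorem scaleBound_of_contracting (S : RenewalSystem κ β δ F X r) {N D₀ : ℝ} (hN : 0 ≤ N)
    (hD₀ : 0 ≤ D₀) (hinit : ScaleBound β F X r a D₀)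
    (hstep : ∀ D, 0 ≤ D → ScaleBound β F X r a D → ScaleBound β F X r a (N + D / 2)) :
    ScaleBound β F X r a (2 * N + 1) := by
  have hiter (n : ℕ) : ScaleBound β F X r a (2 * N + D₀ / 2 ^ n) := by
    induction n with
    | zero => exact S.scaleBound_mono (by simp [hN]) hinit
    | succ n ih =>
      convert hstep _ (by positivity) ih using 1
      rw [pow_succ]
      field_simp
      ring
  obtain ⟨n, hn⟩ := pow_unbounded_of_one_lt D₀ one_lt_two
  exact S.scaleBound_mono (by gcongr; exact (div_le_one (by positivity)).2 hn.le) (hiter n)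

end RenewalSystem

theorem exists_scaleBound {d : ℕ} (hd : 2 < d) {κ : ℕ → ℝ} (hκ : ∀ q, 1 ≤ κ q) {a : ℝ}
    (ha : 0 ≤ a) (had : a < d - 2) :
    ∃ D, 0 ≤ D ∧ ∃ δ₀ > 0, ∀ {β δ : ℝ} {F : ℝ → IntLattice d → ℝ≥0∞} {X r : ℝ → ℝ}, 0 ≤ β →
      0 ≤ δ → δ ≤ δ₀ → RenewalSystem κ β δ F X r → ScaleBound β F X r a D := by
  have hd0 : 0 < d := by omega
  have had' : a ≤ d := by linarith
  have hK := decayConst_nonneg (d := d) fun q => zero_le_one.trans (hκ q)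
  obtain ⟨k, hk⟩ := exists_mul_sqrt_rpow_neg_le (4 * decayConst d κ * weightedSumConst d)
    (sub_pos.2 had) (one_half_pos (α := ℝ))
  rw [show -((d : ℝ) - 2 - a) = a + 2 - d by ring] at hk
  have hN : 0 ≤ bootstrapConst d κ k := by
    unfold bootstrapConst
    positivity
  refine ⟨2 * bootstrapConst d κ k + 1, by positivity, 1 / (12 * (k + 1)), by positivity, ?_⟩
  intro β δ F X r hβ hδ hδ₀ S
  have hδk : 12 * δ * (k + 1) ≤ 1 := by
    rw [le_div_iff₀ (by positivity)] at hδ₀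
    linarith
  have hX := S.one_le_mass β ⟨hβ, le_rfl⟩
  have hr := S.one_le_scale β ⟨hβ, le_rfl⟩
  exact S.scaleBound_of_contracting hN (by positivity) (S.scaleBound_initial hd0 hκ hβ ha had')
    fun D hD hB => S.scaleBound_step hd0 hκ ha had' hD hδ hδk hk hB

section Telescoping

variable {u : ℝ}

theorem inv_sqrt_add_pow_three_le (hu : 0 ≤ u) (i : ℕ) :
    ((√(((i + 1 : ℕ) : ℝ) + 1) + u) ^ 3)⁻¹ ≤
      2 * ((√(i + (1 + u) ^ 2))⁻¹ - (√((i + 1 : ℕ) + (1 + u) ^ 2))⁻¹) := by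
  push_cast
  have hp : √(i + (1 + u) ^ 2) ^ 2 = i + (1 + u) ^ 2 := Real.sq_sqrt (by positivity)
  have hq : √(i + 1 + (1 + u) ^ 2) ^ 2 = i + 1 + (1 + u) ^ 2 := Real.sq_sqrt (by positivity)
  have hm : √((i : ℝ) + 1 + 1) ^ 2 = i + 1 + 1 := Real.sq_sqrt (by positivity)
  have hp0 : 0 < √(i + (1 + u) ^ 2) := by positivity
  have hq0 : 0 < √(i + 1 + (1 + u) ^ 2) := by positivity
  have hm1 : 1 ≤ √((i : ℝ) + 1 + 1) := by
    rw [Real.one_le_sqrt]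
    linarith [i.cast_nonneg (α := ℝ)]
  set p := √(i + (1 + u) ^ 2)
  set q := √(i + 1 + (1 + u) ^ 2)
  set m := √((i : ℝ) + 1 + 1)
  have hqm : q ≤ m + u := (sq_le_sq₀ hq0.le (by linarith)).1 (by nlinarith)
  have hpq : p ≤ q := (sq_le_sq₀ hp0.le hq0.le).1 (by linarith)
  have hdiff : p⁻¹ - q⁻¹ = (p * q * (p + q))⁻¹ := by
    have : (q - p) * (q + p) = 1 := by linarith
    field_simp
    linarith
  calc
    ((m + u) ^ 3)⁻¹ ≤ (q ^ 3)⁻¹ := by gcongr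
    _ = 2 * (q * q * (q + q))⁻¹ := by
      field_simp
      norm_num
    _ ≤ 2 * (p * q * (p + q))⁻¹ := by gcongr
    _ = 2 * (p⁻¹ - q⁻¹) := by rw [hdiff]

theorem sum_inv_sqrt_add_pow_three_le (hu : 0 ≤ u) (n : ℕ) :
    ∑ i ∈ Finset.range n, ((√(((i + 1 : ℕ) : ℝ) + 1) + u) ^ 3)⁻¹ ≤ 2 * (1 + u)⁻¹ := by
  refine (Finset.sum_le_sum fun i _ => inv_sqrt_add_pow_three_le hu i).trans ?_
  rw [← Finset.mul_sum, Finset.sum_range_sub' fun i : ℕ => (√((i : ℝ) + (1 + u) ^ 2))⁻¹,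
    Nat.cast_zero, zero_add, Real.sqrt_sq (by linarith)]
  gcongr
  exact sub_le_self _ (by positivity)

theorem sum_inv_sqrt_pow_mul_inv_one_add_div_pow_le {d : ℕ} (hd : 2 < d) (hu : 0 ≤ u) (n : ℕ) :
    ∑ i ∈ Finset.range n, (√(((i + 1 : ℕ) : ℝ) + 1) ^ d)⁻¹ *
      ((1 + u / √(((i + 1 : ℕ) : ℝ) + 1)) ^ (4 * d))⁻¹ ≤ 2 * ((1 + u) ^ (d - 2))⁻¹ := by
  obtain ⟨m, rfl⟩ : ∃ m, d = m + 3 := ⟨d - 3, by omega⟩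
  have hterm (i : ℕ) : (√(((i + 1 : ℕ) : ℝ) + 1) ^ (m + 3))⁻¹ *
      ((1 + u / √(((i + 1 : ℕ) : ℝ) + 1)) ^ (4 * (m + 3)))⁻¹ ≤
        ((1 + u) ^ m)⁻¹ * ((√(((i + 1 : ℕ) : ℝ) + 1) + u) ^ 3)⁻¹ := by
    have hμ := one_le_sqrt_natCast_add_one (i + 1)
    set μ := √(((i + 1 : ℕ) : ℝ) + 1)
    rw [← mul_inv, ← mul_inv]
    refine inv_anti₀ (by positivity) ?_
    calc (1 + u) ^ m * (μ + u) ^ 3 ≤ (μ + u) ^ m * (μ + u) ^ 3 := by gcongr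
      _ = (μ * (1 + u / μ)) ^ (m + 3) := by
        rw [← pow_add]
        congr 1
        field_simp
      _ = μ ^ (m + 3) * (1 + u / μ) ^ (m + 3) := mul_pow _ _ _
      _ ≤ μ ^ (m + 3) * (1 + u / μ) ^ (4 * (m + 3)) := by
        gcongr
        · exact le_add_of_nonneg_right (by positivity)
        · omega
  calc
    _ ≤ ((1 + u) ^ m)⁻¹ * ∑ i ∈ Finset.range n, ((√(((i + 1 : ℕ) : ℝ) + 1) + u) ^ 3)⁻¹ := by
      rw [Finset.mul_sum]
      exact Finset.sum_le_sum fun i _ => hterm i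
    _ ≤ ((1 + u) ^ m)⁻¹ * (2 * (1 + u)⁻¹) := by
      gcongr
      exact sum_inv_sqrt_add_pow_three_le hu n
    _ = _ := by
      rw [show m + 3 - 2 = m + 1 by omega, pow_succ, mul_inv]
      ring

end Telescoping

namespace RenewalSystem

variable {d : ℕ} {κ : ℕ → ℝ} {β δ a D : ℝ} {F : ℝ → IntLattice d → ℝ≥0∞} {X r : ℝ → ℝ} {n : ℕ}

theorem conv_boxIndicator_sqrt_mul_le (S : RenewalSystem κ β δ F X r) (hβ : 0 ≤ β) (hδ : 0 ≤ δ)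
    (ha : 0 ≤ a) (hD : 0 ≤ D) (hB : ScaleBound β F X r a D) (hδn : 12 * δ * (n + 1) ≤ 1)
    (x : IntLattice d) :
    conv (F β) (boxIndicator (√(n + 1) * r 0)) x ≤ .ofReal ((D + 1) * (2 * √(n + 1) ^ 2)) := by
  have h0 : (0 : ℝ) ∈ Icc 0 β := ⟨le_rfl, hβ⟩
  have hν := one_le_sqrt_natCast_add_one n
  have hδν : 12 * δ * √((n : ℝ) + 1) ^ 2 ≤ 1 := by rwa [Real.sq_sqrt (by positivity)]
  have hgrowth (z : ℝ) (hz : z ∈ Icc 0 β) (hrz : r z ≤ √(n + 1) * r 0) :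
      X z ≤ 2 * √(n + 1) ^ 2 := by
    simpa only [S.mass_zero, mul_one] using S.mass_le_of_scale_le hδ le_rfl hz.1 hz.2 hν hδν hrz
  rcases le_total (r β) (√(n + 1) * r 0) with hcase | hcase
  · refine (conv_le_mass_mul (F β) boxIndicator_le_one x).trans ?_
    rw [S.mass_eq β ⟨hβ, le_rfl⟩, mul_one]
    exact ENNReal.ofReal_le_ofReal ((hgrowth β ⟨hβ, le_rfl⟩ hcase).trans
      (le_mul_of_one_le_left (by positivity) (by linarith)))
  · have hr := zero_le_one.trans (S.one_le_scale 0 h0)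
    obtain ⟨z, hz, hrz⟩ := S.exists_scale_eq h0 (le_mul_of_one_le_left hr hν) hcase
    have hX := zero_le_one.trans (S.one_le_mass z hz)
    have hone : 1 ≤ bracket (r z) x := one_le_bracket (zero_le_one.trans (S.one_le_scale z hz)) x
    rw [← hrz]
    refine (hB z hz x).trans (ENNReal.ofReal_le_ofReal ?_)
    calc D * X z * bracket (r z) x ^ (-a) ≤ D * X z :=
          mul_le_of_le_one_right (by positivity)
            (Real.rpow_le_one_of_one_le_of_nonpos hone (neg_nonpos.2 ha))
      _ ≤ (D + 1) * (2 * √(n + 1) ^ 2) := by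
        gcongr
        · linarith
        · exact hgrowth z hz hrz.le

theorem sum_conv_convPow_zero_le (S : RenewalSystem κ β δ F X r) (hd : 2 < d)
    (hκ : ∀ q, 1 ≤ κ q) (hβ : 0 ≤ β) (n : ℕ) (x : IntLattice d) :
    ∑ i ∈ Finset.range n, conv (convPow (normalizedStep F X 0) (i + 1)) (boxIndicator (r 0)) x ≤
      .ofReal (decayConst d κ * (2 * (bracket (r 0) x ^ (d - 2))⁻¹)) := by
  have h0 : (0 : ℝ) ∈ Icc 0 β := ⟨le_rfl, hβ⟩
  have hK := decayConst_nonneg (d := d) fun q => zero_le_one.trans (hκ q)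
  have hr := zero_le_one.trans (S.one_le_scale 0 h0)
  have hu : 0 ≤ supNorm x / r 0 := div_nonneg (supNorm_nonneg x) hr
  refine (Finset.sum_le_sum fun i _ =>
    S.conv_convPow_normalizedStep_le (by omega) hκ h0 (i + 1) x).trans ?_
  rw [← ENNReal.ofReal_sum_of_nonneg fun i _ => mul_nonneg (by positivity)
    (inv_nonneg.2 (pow_nonneg (bracket_pos (by positivity) x).le _))]
  refine ENNReal.ofReal_le_ofReal (le_trans (le_of_eq ?_) (mul_le_mul_of_nonneg_left
    (sum_inv_sqrt_pow_mul_inv_one_add_div_pow_le hd hu n) hK))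
  rw [Finset.mul_sum]
  refine Finset.sum_congr rfl fun i _ => ?_
  rw [bracket, div_div, mul_comm (r 0), div_eq_mul_inv, mul_assoc]

theorem conv_boxIndicator_zero_le (S : RenewalSystem κ β δ F X r) (hd : 2 < d)
    (hκ : ∀ q, 1 ≤ κ q) (hβ : 0 ≤ β) (hδ : 0 ≤ δ) (ha : 0 ≤ a) (hD : 0 ≤ D)
    (hB : ScaleBound β F X r a D) (hδn : 12 * δ * (n + 1) ≤ 1) (x : IntLattice d) :
    conv (F β) (boxIndicator (r 0)) x ≤
      .ofReal (4 * decayConst d κ * (bracket (r 0) x ^ (d - 2))⁻¹ +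
        4 * decayConst d κ * weightedSumConst d * (D + 1) * √(n + 1) ^ (-1 : ℝ)) := by
  have h0 : (0 : ℝ) ∈ Icc 0 β := ⟨le_rfl, hβ⟩
  have hK := decayConst_nonneg (d := d) fun q => zero_le_one.trans (hκ q)
  have hW := weightedSumConst_pos d
  have hν := one_le_sqrt_natCast_add_one n
  have hb : 0 < bracket (r 0) x := bracket_pos (zero_le_one.trans (S.one_le_scale 0 h0)) x
  have htail := S.conv_conv_convPow_le (by omega) hκ h0 (D := (D + 1) * (2 * √(n + 1) ^ 2))
    (by positivity) le_rfl d.cast_nonneg n (by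
      simpa only [neg_zero, Real.rpow_zero, mul_one] using
        S.conv_boxIndicator_sqrt_mul_le hβ hδ ha hD hB hδn) x
  refine (S.conv_le_sum_add hδ (by nlinarith) h0 _ x).trans ((add_le_add
    (mul_le_mul_right (S.sum_conv_convPow_zero_le hd hκ hβ n x) _)
    (mul_le_mul_right htail 2)).trans ?_)
  rw [S.mass_zero, ENNReal.ofReal_one, mul_one, ← ENNReal.ofReal_ofNat 2,
    ← ENNReal.ofReal_mul zero_le_two, ← ENNReal.ofReal_mul zero_le_two, neg_zero, Real.rpow_zero,
    mul_one, ← ENNReal.ofReal_add (by positivity) (by positivity)]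
  refine ENNReal.ofReal_le_ofReal (add_le_add (le_of_eq (by ring)) ?_)
  set ν := √((n : ℝ) + 1)
  calc
    2 * (decayConst d κ / ν ^ d * (weightedSumConst d * ((D + 1) * (2 * ν ^ 2))))
      ≤ 2 * (decayConst d κ / ν ^ 3 * (weightedSumConst d * ((D + 1) * (2 * ν ^ 2)))) := by
      gcongr
      exact hd
    _ = _ := by
      rw [Real.rpow_neg_one]
      field_simp
      ring

end RenewalSystem

theorem exists_conv_boxIndicator_zero_le {d : ℕ} (hd : 2 < d) {κ : ℕ → ℝ} (hκ : ∀ q, 1 ≤ κ q)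
    {ε : ℝ} (hε : 0 < ε) (hεd : ε ≤ d - 2) :
    ∃ δ₀ > 0, ∀ {β δ : ℝ} {F : ℝ → IntLattice d → ℝ≥0∞} {X r : ℝ → ℝ}, 0 ≤ β → 0 ≤ δ → δ ≤ δ₀ →
      RenewalSystem κ β δ F X r → ∀ x, conv (F β) (boxIndicator (r 0)) x ≤
        .ofReal ((4 * decayConst d κ + 1) * bracket (r 0) x ^ (-(d - 2 - ε))) := by
  have hK := decayConst_nonneg (d := d) fun q => zero_le_one.trans (hκ q)
  have ha : (0 : ℝ) ≤ d - 2 - ε / 2 := by linarith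
  obtain ⟨D, hD, δ₁, hδ₁, hscale⟩ := exists_scaleBound hd hκ ha (by linarith)
  obtain ⟨k, hk⟩ := exists_mul_sqrt_rpow_neg_le D (half_pos hε) one_pos
  set L := √((k : ℝ) + 1)
  have hL : 0 < L := by positivity
  obtain ⟨n, hn⟩ := exists_mul_sqrt_rpow_neg_le
    (4 * decayConst d κ * weightedSumConst d * (D + 1)) one_pos
    (θ := L ^ (-(d - 2 - ε))) (by positivity)
  refine ⟨min δ₁ (1 / (12 * (n + 1))), lt_min hδ₁ (by positivity), ?_⟩
  intro β δ F X r hβ hδ hδ₀ S x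
  have hδn : 12 * δ * (n + 1) ≤ 1 := by
    have hδ' := hδ₀.trans (min_le_right _ _)
    rw [le_div_iff₀ (by positivity)] at hδ'
    linarith
  have hB := hscale hβ hδ (hδ₀.trans (min_le_left _ _)) S
  have h0 : (0 : ℝ) ∈ Icc 0 β := ⟨le_rfl, hβ⟩
  have hr := zero_le_one.trans (S.one_le_scale 0 h0)
  have hb := bracket_pos hr x
  rcases le_total (bracket (r 0) x) L with hxL | hLx
  · refine (S.conv_boxIndicator_zero_le hd hκ hβ hδ ha hD hB hδn x).trans
      (ENNReal.ofReal_le_ofReal ?_)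
    rw [add_mul, one_mul]
    refine add_le_add ?_ (hn.trans (Real.rpow_le_rpow_of_nonpos hb hxL (by linarith)))
    gcongr
    refine inv_bracket_pow_le_rpow_neg hr ?_ x
    rw [Nat.cast_sub hd.le, Nat.cast_two]
    linarith
  · refine (hB 0 h0 x).trans (ENNReal.ofReal_le_ofReal ?_)
    rw [S.mass_zero, mul_one, show -((d : ℝ) - 2 - ε / 2) = -(ε / 2) + -(d - 2 - ε) by ring,
      Real.rpow_add hb, ← mul_assoc]
    gcongr
    calc D * bracket (r 0) x ^ (-(ε / 2)) ≤ D * L ^ (-(ε / 2)) :=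
          mul_le_mul_of_nonneg_left (Real.rpow_le_rpow_of_nonpos hL hLx (by linarith)) hD
      _ ≤ 4 * decayConst d κ + 1 := by linarith

namespace Model

variable {d : ℕ} {c₀ : ℝ} {M : Model d c₀} {β δ t : ℝ}

section CorrelationLength

theorem xi_pos (h : SecondMomentFlow β δ M.chiReal (M.momentReal 1)) (ht : t ∈ Icc 0 β) :
    0 < M.xi t := by
  have hsq : 0 < M.xi t ^ 2 := by
    rw [xi_sq]
    exact div_pos (h.second_pos ht) (h.mass_pos ht)
  exact (xi_nonneg t).lt_of_ne' fun h0 => by simp [h0] at hsq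

theorem two_mul_log_xi (h : SecondMomentFlow β δ M.chiReal (M.momentReal 1))
    (ht : t ∈ Icc 0 β) :
    2 * Real.log (M.xi t) = Real.log (M.momentReal 1 t) - Real.log (M.chiReal t) := by
  rw [← Real.log_div (h.second_pos ht).ne' (h.mass_pos ht).ne', ← xi_sq, Real.log_pow, Nat.cast_two]

theorem mul_log_chiReal_sub_le (h : SecondMomentFlow β δ M.chiReal (M.momentReal 1))
    (hδ : 3 * δ ≤ 2) {z : ℝ} (ht : 0 ≤ t) (htz : t ≤ z) (hz : z ≤ β) :
    (1 - 3 * δ) * (Real.log (M.chiReal z) - Real.log (M.chiReal t)) ≤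
      2 * (Real.log (M.xi z) - Real.log (M.xi t)) := by
  rw [mul_sub 2, two_mul_log_xi h ⟨ht, htz.trans hz⟩, two_mul_log_xi h ⟨ht.trans htz, hz⟩]
  linarith [h.mul_log_mass_sub_le hδ ht htz hz]

theorem monotoneOn_xi (h : SecondMomentFlow β δ M.chiReal (M.momentReal 1)) (hδ : 3 * δ ≤ 1) :
    MonotoneOn M.xi (Icc 0 β) := fun t ht z hz htz => by
  have hlogX := Real.log_le_log (h.mass_pos ht) (h.monotoneOn_mass ht hz htz)
  have hnonneg := mul_nonneg (sub_nonneg.2 hδ) (sub_nonneg.2 hlogX)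
  have hlog := mul_log_chiReal_sub_le h (by linarith) ht.1 htz hz.2
  exact (Real.log_le_log_iff (xi_pos h ht) (xi_pos h hz)).1 (by linarith)

theorem continuousOn_xi (h : SecondMomentFlow β δ M.chiReal (M.momentReal 1)) :
    ContinuousOn M.xi (Icc 0 β) := by
  have hsqrt : M.xi = fun t => √(M.momentReal 1 t / M.chiReal t) := funext fun t => by
    rw [← xi_sq, Real.sqrt_sq (xi_nonneg t)]
  rw [hsqrt]
  exact (h.continuousOn_second.div h.continuousOn_mass fun t ht => (h.mass_pos ht).ne').sqrt

theorem IsSubcritical.moment_F_le (hd : 0 < d) (hc : 0 < c₀) (hβ : M.IsSubcritical β)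
    (h : SecondMomentFlow β δ M.chiReal (M.momentReal 1)) (hδ : 0 ≤ δ) (hδd : 24 * d * δ ≤ 1)
    (ht : t ∈ Icc 0 β) {q : ℕ} (hq : q ≤ 2 * d) :
    moment q (M.F t) ≤ .ofReal (momentConst d c₀ q * (M.chiReal t * M.xi t ^ (2 * q))) := by
  have htβ := hβ.mono ht.1 ht.2
  rcases q with _ | j
  · rw [moment_zero, mass_F, htβ.chi_eq hd, mul_zero, pow_zero, mul_one, momentConst,
      ENNReal.ofReal_mul d.cast_nonneg, ENNReal.ofReal_natCast]
  · have hX := h.mass_pos ht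
    have hj : (j : ℝ) + 1 ≤ 2 * d := by exact_mod_cast hq
    rw [htβ.moment_F_eq hd, pow_mul, xi_sq, div_pow, pow_succ (M.chiReal t), mul_div_assoc',
      mul_comm (M.chiReal t), mul_div_mul_right _ _ hX.ne', mul_div_assoc']
    refine ENNReal.ofReal_le_ofReal ((le_div_iff₀ (pow_pos hX j)).2 ?_)
    exact (hβ.momentReal_mul_pow_le hd hc h hδ j (by nlinarith)).2 t ht

end CorrelationLength

theorem renewalSystem (hd : 0 < d) (hc : 0 < c₀) (hδ : 0 ≤ δ) (hδd : 24 * d * δ ≤ 1)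
    (hβ₀ : 0 ≤ β) (hβ : β < M.betaOf δ) :
    RenewalSystem (momentConst d c₀) β δ M.F M.chiReal M.xi := by
  obtain ⟨hsub, hE⟩ := isSubcritical_and_E_le_of_lt_betaOf hβ₀ hβ
  have h := hsub.secondMomentFlow hd hδ fun t => hsub.errorLE_of_E_le hd hE
  have hd1 : (1 : ℝ) ≤ d := by exact_mod_cast hd
  have hδ' : 24 * δ ≤ 1 := by nlinarith
  have hmono := monotoneOn_xi h (by linarith)
  exact
    { isSymmFun := M.isSymmFun_F
      mass_eq := fun t ht => by rw [mass_F, (hsub.mono ht.1 ht.2).chi_eq hd]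
      moment_one_eq := fun t ht => by
        rw [xi_sq, (hsub.mono ht.1 ht.2).moment_F_eq hd, mul_div_cancel₀ _ (h.mass_pos ht).ne']
      moment_le := fun t ht q => hsub.moment_F_le hd hc h hδ hδd ht
      mass_zero := chiReal_zero
      one_le_mass := h.one_le_mass
      one_le_scale := fun t ht => (M.one_le_sigma hd).trans
        (xi_zero.symm.trans_le (hmono ⟨le_rfl, hβ₀⟩ ht ht.1))
      continuousOn_scale := continuousOn_xi h
      monotoneOn_scale := hmono
      le_add := fun t ht => hsub.F_le_add ht.1 ht.2
      mul_mass_le_one := fun t ht => by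
        have hβX := inv_pos.2 (h.mass_pos ⟨hβ₀, le_rfl⟩)
        rw [← mul_assoc, ← le_div_iff₀ (h.mass_pos ht), one_div]
        linarith [h.mul_sub_add_inv_mass_le ht.1 ht.2 le_rfl]
      mul_log_mass_sub_le := fun t z => mul_log_chiReal_sub_le h (by linarith) }

theorem conv_kernel_le (hd : 0 < d) (hc : 0 < c₀) (hc1 : c₀ ≤ 1) {f : IntLattice d → ℝ≥0∞}
    {a D : ℝ} (hD : 0 ≤ D) (ha : 0 ≤ a) (had : a ≤ d)
    (hf : ∀ x, conv f (boxIndicator M.sigma) x ≤ .ofReal (D * bracket M.sigma x ^ (-a)))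
    (x : IntLattice d) :
    conv M.kernel f x ≤ .ofReal (kernelConst d c₀ / M.sigma ^ d *
      (weightedSumConst d * (D * bracket M.sigma x ^ (-a)))) := by
  have hK : 0 ≤ kernelConst d c₀ / M.sigma ^ d :=
    div_nonneg (kernelConst_nonneg hc) (pow_nonneg M.sigma_nonneg d)
  rw [ENNReal.ofReal_mul hK, conv_comm, conv]
  refine le_trans ?_
    (mul_le_mul_right (tsum_mul_inv_bracket_pow_le hD ha had (M.one_le_sigma hd) hf x) _)
  rw [← ENNReal.tsum_mul_left]
  refine ENNReal.tsum_le_tsum fun y => ?_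
  rw [mul_left_comm, ← ENNReal.ofReal_mul hK]
  exact mul_le_mul_right (M.kernel_le hd hc hc1 (x - y)) _

theorem F_le_of_conv_boxIndicator_le (hd : 0 < d) (hc : 0 < c₀) (hc1 : c₀ ≤ 1)
    (hβ : M.IsSubcritical β) (hβ2 : β ≤ 2) {a D : ℝ} (hD : 0 ≤ D) (ha : 0 ≤ a) (had : a ≤ d)
    (hF : ∀ x, conv (M.F β) (boxIndicator M.sigma) x ≤ .ofReal (D * bracket M.sigma x ^ (-a)))
    (x : IntLattice d) :
    M.F β x ≤ .ofReal (kernelConst d c₀ * (1 + 2 * (weightedSumConst d * D)) / M.sigma ^ d *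
      bracket M.sigma x ^ (-a)) := by
  have hK : 0 ≤ kernelConst d c₀ / M.sigma ^ d :=
    div_nonneg (kernelConst_nonneg hc) (pow_nonneg M.sigma_nonneg d)
  have hW := weightedSumConst_pos d
  have hb := bracket_pos M.sigma_nonneg x
  have hrenewal : M.F β x ≤ M.kernel x + ENNReal.ofReal β * conv M.kernel (M.F β) x := by
    have hle := hβ.F_le_add le_rfl hβ.1 x
    rwa [F_zero, sub_zero] at hle
  have hkernel : M.kernel x ≤
      .ofReal (kernelConst d c₀ / M.sigma ^ d * bracket M.sigma x ^ (-a)) := by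
    refine (M.kernel_le hd hc hc1 x).trans (ENNReal.ofReal_le_ofReal ?_)
    refine mul_le_mul_of_nonneg_left (inv_bracket_pow_le_rpow_neg M.sigma_nonneg ?_ x) hK
    push_cast
    linarith
  refine (hrenewal.trans (add_le_add hkernel (mul_le_mul' (ENNReal.ofReal_le_ofReal hβ2)
    (conv_kernel_le hd hc hc1 hD ha had hF x)))).trans_eq ?_
  rw [← ENNReal.ofReal_mul zero_le_two, ← ENNReal.ofReal_add (by positivity) (by positivity)]
  congr 1
  ring

/-- The constant in the uniform bound on `F_β`. -/
def boundConst (d : ℕ) (c₀ : ℝ) : ℝ :=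
  kernelConst d c₀ *
    (1 + 2 * (weightedSumConst d * (4 * decayConst d (momentConst d c₀) + 1)))

theorem exists_F_le (hd : 2 < d) (hc : 0 < c₀) (hc1 : c₀ ≤ 1) {ε : ℝ} (hε : 0 < ε)
    (hεd : ε ≤ d - 2) :
    ∃ δ ∈ Ioc (0 : ℝ) (1 / 2), ∀ (M : Model d c₀) (β : ℝ), 0 ≤ β → β < M.betaOf δ → ∀ x,
      M.F β x ≤ .ofReal (boundConst d c₀ / M.sigma ^ d * bracket M.sigma x ^ (-(d - 2 - ε))) := by
  have hd0 : 0 < d := by omega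
  have hd3 : (3 : ℝ) ≤ d := by exact_mod_cast hd
  have hκ := one_le_momentConst hd0 hc
  have hK := decayConst_nonneg (d := d) fun q => zero_le_one.trans (hκ q)
  obtain ⟨δ₀, hδ₀, hbox⟩ := exists_conv_boxIndicator_zero_le hd hκ hε hεd
  set δ := min δ₀ (1 / (24 * d))
  have hδ : 0 < δ := lt_min hδ₀ (by positivity)
  have hδd : 24 * d * δ ≤ 1 := by
    rw [mul_comm, ← le_div_iff₀ (by positivity)]
    exact min_le_right _ _
  refine ⟨δ, ⟨hδ, by nlinarith⟩, fun M β hβ₀ hβ x => ?_⟩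
  have S := M.renewalSystem hd0 hc hδ.le hδd hβ₀ hβ
  have hbound := hbox hβ₀ hδ.le (min_le_left _ _) S
  rw [xi_zero] at hbound
  have hβ2 : β ≤ 2 := by
    have hle := S.mul_mass_le_one 0 ⟨le_rfl, hβ₀⟩
    rw [S.mass_zero, sub_zero, mul_one] at hle
    nlinarith
  exact F_le_of_conv_boxIndicator_le hd0 hc hc1 (isSubcritical_and_E_le_of_lt_betaOf hβ₀ hβ).1 hβ2
    (by positivity) (by linarith) (by linarith) hbound x

end Model

theorem bracket_rpow_neg_le {d : ℕ} {s a b : ℝ} (hs : 0 < s) (ha : 0 ≤ a) (hb : b ≤ a)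
    (x : IntLattice d) : bracket s x ^ (-a) ≤ (s / max s (supNorm x)) ^ b := by
  have hmax : 0 < max s (supNorm x) := lt_max_of_lt_left hs
  have hle : (s / max s (supNorm x))⁻¹ ≤ bracket s x := by
    have := supNorm_nonneg x
    rw [inv_div, div_le_iff₀ hs, bracket, add_mul, one_mul, div_mul_cancel₀ _ hs.ne']
    exact max_le (by linarith) (by linarith)
  calc bracket s x ^ (-a) ≤ (s / max s (supNorm x))⁻¹ ^ (-a) :=
        Real.rpow_le_rpow_of_nonpos (by positivity) hle (neg_nonpos.2 ha)
    _ = (s / max s (supNorm x)) ^ a := by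
      rw [Real.inv_rpow (by positivity), Real.rpow_neg (by positivity), inv_inv]
    _ ≤ (s / max s (supNorm x)) ^ b :=
      Real.rpow_le_rpow_of_exponent_ge (by positivity) ((div_le_one hmax).2 (le_max_left _ _)) hb

end Blackbox

theorem statement18_general (d : ℕ) (hd : 2 < d) (c₀ : ℝ) (hc₀ : c₀ ∈ Set.Ioc (0 : ℝ) 1) :
    ∃ K > (0 : ℝ), ∀ ε > (0 : ℝ), ∃ δ ∈ Set.Ioc (0 : ℝ) (1 / 2),
      ∀ M : Model d c₀, ∀ β : ℝ, 0 ≤ β → β < M.betaOf δ → ∀ x : Fin d → ℤ,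
        M.F β x ≤ ENNReal.ofReal (K / M.sigma ^ d *
          (M.sigma / max M.sigma (supNorm x)) ^ ((d : ℝ) - 2 - ε)) := by
  have hd3 : (3 : ℝ) ≤ d := by exact_mod_cast hd
  refine ⟨max (Model.boundConst d c₀) 1, lt_max_of_lt_right one_pos, fun ε hε => ?_⟩
  have hmin : min ε (1 / 2) ≤ d - 2 := (min_le_right _ _).trans (by linarith)
  obtain ⟨δ, hδ, hF⟩ := Model.exists_F_le hd hc₀.1 hc₀.2 (lt_min hε one_half_pos) hmin
  refine ⟨δ, hδ, fun M β hβ₀ hβ x => (hF M β hβ₀ hβ x).trans (ENNReal.ofReal_le_ofReal ?_)⟩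
  have hσ : 0 < M.sigma := zero_lt_one.trans_le (M.one_le_sigma (by omega))
  have := Real.rpow_nonneg (bracket_pos hσ.le x).le (-(d - 2 - min ε (1 / 2)))
  gcongr
  · exact le_max_left _ _
  · exact bracket_rpow_neg_le hσ (by linarith) (by linarith [min_le_left ε (1 / 2)]) x

/-- improvement at intermediate scales (`prop:intermscales`). -/
theorem statement18 (d : ℕ) (hd : 2 < d) (c₀ : ℝ) (hc₀ : c₀ ∈ Set.Ioc (0:ℝ) 1) :
    ∃ cstar > (0:ℝ), ∃ Cstar > (0:ℝ), ∀ ε > (0:ℝ),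
      ∀ c : ℝ, 0 < c → c ≤ cstar → ∀ C : ℝ, Cstar ≤ C →
        ∃ η : ℝ, η ∈ Set.Ioo (0:ℝ) 1 ∧ ∃ δ₂ : ℝ, δ₂ ∈ Set.Ioc (0:ℝ) (1/2) ∧
          ∀ M : Model d c₀, ∀ β : ℝ, 0 ≤ β → β < M.betaOf δ₂ →
            (∀ β' : ℝ, 0 ≤ β' → β' ≤ β → ∀ x : Fin d → ℤ,
              M.F β' x ≤ ENNReal.ofReal (C / M.sigma ^ d *
                (M.sigma / max M.sigma (supNorm x)) ^ ((d:ℝ) - 2 - ε) *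
                Real.exp (-c * supNorm x / M.xi β'))) →
            ∀ x : Fin d → ℤ, 2 * M.sigma ≤ supNorm x → supNorm x ≤ η * M.xi β →
              M.F β x ≤ ENNReal.ofReal (1/6 * (C / M.sigma ^ d *
                (M.sigma / max M.sigma (supNorm x)) ^ ((d:ℝ) - 2 - ε))) := by
  obtain ⟨K, hK, hF⟩ := statement18_general d hd c₀ hc₀
  refine ⟨1, one_pos, 6 * K, by positivity, fun ε hε c _ _ C hC => ?_⟩
  obtain ⟨δ, hδ, hF⟩ := hF ε hε
  refine ⟨1 / 2, by norm_num, δ, hδ, fun M β hβ₀ hβ _ x _ _ => (hF M β hβ₀ hβ x).trans ?_⟩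
  have hσ : 0 < M.sigma := zero_lt_one.trans_le (M.one_le_sigma (by omega))
  rw [← mul_assoc, mul_div_assoc']
  gcongr
  · linarith
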